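/- If σ is a nonzero, Radon, T^{×d}-invariant measure on X^d whose marginals (pushforwards under the coordinate projections) are absolutely continuous with respect to μ, then σ decomposes as a sum of countably many ergodic components, each of which is a product σ^{D_1} ⊗ ⋯ ⊗ σ^{D_r}, over some partition D_1,…,D_r of {1,…,d}, of graph measures arising from powers of T. -/

import Mathlib

/-!
Almost every point of `X^d` has coordinates that are typical for `μ`, because the marginals of `σ`
are absolutely continuous. There `T` agrees with the measurable permutation `Tp` of `X` that fixes
the points of the orbit of `𝟎`, which is countable and null. The space then splits into
countably many invariant pieces according to the orbit type (`OType`): which coordinates lie on a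
common `T`-orbit, and at which times. Restricting `σ` to one type and keeping one coordinate per
orbit gives an invariant measure `κ` on a power `X^r` whose coordinates lie almost surely on
distinct orbits. The whole theorem reduces to `prodform`: such a `κ` is a multiple of `μ^{⊗r}`.
Hence `σ` restricted to a type is a multiple of the image of the product measure under the
parametrization of the type by `X^r` (`Nice.form`); that image is a product of graph measures
(`product_form`), and it is ergodic since the same rigidity applies to its restriction to any
invariant set (`Nice.ergodic`).

To prove `prodform` one shows that `κ` gives equal mass to all boxes of the same level (`unif`), by
induction on the set `H` of coordinates moved by the dynamics. The induction step relies on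
`exists_twists`: up to a null set, the space is covered by finitely many invariant sets on each of
which `κ` is invariant under a proper twist, which applies `T` to the coordinates in a nonempty
proper subset `G` of `H` and fixes the others. There `κ` is then also invariant under `T` acting on
`H \ G`, so that the induction hypothesis applies to `G` and to `H \ G` (`Unif.join`).

Twists come from desynchronization. The digits of a point record the subcolumn it belongs to in each
tower, and the digits of coordinates on distinct orbits differ at infinitely many ranks. Where two
coordinates lie in different subcolumns of tower `n`, moving by about one height of that tower makes
one of them cross the additional middle spacer and not the other, so that some power of `T` acts on
the position in tower `n` as a twist. This can only fail when a carry and a borrow both propagate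
through the next rank where many spacers are added (`blocked`), and then a suitable power of `T`
brings the point to one where it works (`realize_or_move`). Consequently an invariant set on which
every twist is asymptotically not realized is null (`desync_null`). If on the other hand a twist is
asymptotically realized on all nonnull invariant subsets of a set, then it cannot send a nonnull
invariant subset to a disjoint one (`ng_of_disjoint`), the density of the twisted measure is
invariant, and it must be `1`, because the powers of `T` realizing the twist compare the masses of
the same towers (`contract_zero`, `twist_inv`).
-/

open MeasureTheory Set Filter Topology
open scoped ENNReal
open scoped Classical

noncomputable section

/-! ## The nearly finite Chacon transformation: symbolic model -/

/-- The alphabet `{*} ∪ ℕ` is modelled by `Option ℕ`, `none` playing the role of `*`. -/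
instance optionNatTop : TopologicalSpace (Option ℕ) := ⊥

/-- The data of the two sequences `(n_ℓ)` and `(ℓ_k)` used in the construction of the
nearly finite Chacon transformation, together with the growth conditions imposed on them. -/
structure NFCseq where
  nseq : ℕ → ℕ
  lseq : ℕ → ℕ
  nseq_zero : nseq 0 = 0
  lseq_zero : lseq 0 = 1
  lseq_strictMono : StrictMono lseq
  nseq_growth : ∀ ℓ : ℕ, 1 ≤ ℓ → nseq (ℓ - 1) + 2 * ℓ < nseq ℓ
  lseq_growth : ∀ k : ℕ, (2 : ℝ) ≤ (1 + ((7 : ℝ) ^ k)⁻¹) ^ (lseq (k + 1) - lseq k)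

namespace NFCseq

/-- `k(ℓ)`: the unique `k` with `ℓ_k ≤ ℓ < ℓ_{k+1}`. -/
def kOf (P : NFCseq) (ℓ : ℕ) : ℕ := sSup {k | P.lseq k ≤ ℓ}

/-- The heights `h_n` of the towers. -/
def hgt (P : NFCseq) : ℕ → ℕ
  | 0 => 1
  | n + 1 =>
    3 * P.hgt n +
      3 * (if hn : ∃ ℓ, 1 ≤ ℓ ∧ P.nseq ℓ = n then P.hgt (n - P.kOf (Nat.find hn)) else 0) + 1
termination_by n => n
decreasing_by all_goals omega

theorem hgt_pos (P : NFCseq) (n : ℕ) : 0 < P.hgt n := by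
  cases n with
  | zero => simp [hgt]
  | succ n => rw [hgt]; omega

/-- The number of spacers put above the first subcolumn at step `n+1`
(`h_{n-k(ℓ)}` if `n = n_ℓ`, and `0` otherwise). -/
def spa (P : NFCseq) (n : ℕ) : ℕ :=
  if hn : ∃ ℓ, 1 ≤ ℓ ∧ P.nseq ℓ = n then P.hgt (n - P.kOf (Nat.find hn)) else 0

/-- The map `p_n` sending the index of a level of tower `n+1` to the index of the level of
tower `n` containing it (`none` if that level lies outside tower `n`). -/
def pmap (P : NFCseq) (n j : ℕ) : Option ℕ :=
  if j < P.hgt n then some j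
  else if j < P.hgt n + P.spa n then none
  else if j < 2 * P.hgt n + P.spa n then some (j - (P.hgt n + P.spa n))
  else if j < 2 * P.hgt n + 2 * P.spa n + 1 then none
  else if j < 3 * P.hgt n + 2 * P.spa n + 1 then some (j - (2 * P.hgt n + 2 * P.spa n + 1))
  else none

/-- The defining property of points of the space `X`. -/
def Xspec (P : NFCseq) (x : ℕ → Option ℕ) : Prop :=
  (∀ n, x n = (x (n + 1)).bind (P.pmap n)) ∧ ∃ n, x n ≠ none

/-- The space `X` of the symbolic model, with its product (subspace) topology. -/
abbrev Xpt (P : NFCseq) : Type := {x : ℕ → Option ℕ // P.Xspec x}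

instance (P : NFCseq) : MeasurableSpace P.Xpt := borel _

/-- `L_n^j`, the `j`-th level of tower `n`. -/
def level (P : NFCseq) (n j : ℕ) : Set P.Xpt := {x | x.1 n = some j}

/-- `C_n`, the union of all levels of tower `n`. -/
def tower (P : NFCseq) (n : ℕ) : Set P.Xpt := {x | x.1 n ≠ none}

theorem pmap_zero (P : NFCseq) (n : ℕ) : P.pmap n 0 = some 0 := by
  unfold pmap
  simp [P.hgt_pos n]

/-- The point `𝟎 = (0,0,…)`. -/
def zeroPt (P : NFCseq) : P.Xpt :=
  ⟨fun _ => some 0, fun n => by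
    show some 0 = (some 0).bind (P.pmap n)
    simp [P.pmap_zero n], 0, by simp⟩

/-- `t_n(x) ∈ {1,2,3}`: the subcolumn of tower `n` to which `x` belongs
(junk value `0` if `x` is not in tower `n+1`). -/
def tcol (P : NFCseq) (n : ℕ) (x : P.Xpt) : ℕ :=
  match x.1 (n + 1) with
  | none => 0
  | some j =>
    if j < P.hgt n + P.spa n then 1
    else if j < 2 * P.hgt n + 2 * P.spa n + 1 then 2
    else 3

/-- The index (from `0` to `3^(m-n) - 1`, ordered from bottom to top of tower `m`) of the
occurrence of tower `n` inside tower `m` to which `x` belongs. -/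
def occIdx (P : NFCseq) (n m : ℕ) (x : P.Xpt) : ℕ :=
  ∑ r ∈ Finset.Ico n m, (P.tcol r x - 1) * 3 ^ (r - n)

/-- `x` belongs to one of the first hundred occurrences of tower `n` inside tower `m`. -/
def inFirstHundred (P : NFCseq) (n m : ℕ) (x : P.Xpt) : Prop := P.occIdx n m x < 100

/-- `x` belongs to one of the last hundred occurrences of tower `n` inside tower `m`. -/
def inLastHundred (P : NFCseq) (n m : ℕ) (x : P.Xpt) : Prop :=
  3 ^ (m - n) ≤ P.occIdx n m x + 100

end NFCseq

/-- The nearly finite Chacon transformation `T` together with its invariant measure `μ`. -/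
structure NFC extends NFCseq where
  T : toNFCseq.Xpt → toNFCseq.Xpt
  μ : Measure toNFCseq.Xpt
  T_inj : Function.Injective T
  T_range : Set.range T = {toNFCseq.zeroPt}ᶜ
  T_up : ∀ x : toNFCseq.Xpt, ∃ N : ℕ, ∀ n, N ≤ n →
    ∃ j : ℕ, x.1 n = some j ∧ (T x).1 n = some (j + 1)
  T_meas : Measurable T
  μ_level : ∀ n j : ℕ, j < toNFCseq.hgt n →
    μ (toNFCseq.level n j) = (3 : ℝ≥0∞)⁻¹ ^ n
  μ_pres : MeasurePreserving T μ μ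
  μ_sfin : SigmaFinite μ

namespace NFC

/-- `X^d`. -/
abbrev Xd (S : NFC) (d : ℕ) : Type := Fin d → S.toNFCseq.Xpt

/-- The Cartesian power `T^{×d}`. -/
def Td (S : NFC) (d : ℕ) : S.Xd d → S.Xd d := fun y i => S.T (y i)

/-- `C_n^d`. -/
def towerD (S : NFC) (d n : ℕ) : Set (S.Xd d) := {y | ∀ i, y i ∈ S.toNFCseq.tower n}

/-- `B` is an `n`-box. -/
def IsNBox (S : NFC) (d n : ℕ) (B : Set (S.Xd d)) : Prop :=
  ∃ v : Fin d → ℕ, (∀ i, v i < S.toNFCseq.hgt n) ∧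
    B = {y : S.Xd d | ∀ i, y i ∈ S.toNFCseq.level n (v i)}

/-- A measure on `X^d` is Radon iff it is finite on each `C_n^d`. -/
def IsRadon (S : NFC) (d : ℕ) (σ : Measure (S.Xd d)) : Prop :=
  ∀ n, σ (S.towerD d n) < ⊤

/-- `σ` is `T^{×d}`-invariant. -/
def InvariantD (S : NFC) (d : ℕ) (σ : Measure (S.Xd d)) : Prop :=
  ∀ A : Set (S.Xd d), MeasurableSet A → σ ((S.Td d) ⁻¹' A) = σ A

/-- `T^{-e} A`, the preimage of `A` under `T^e` for `e ∈ ℤ` (image for negative `e`). -/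
def preT (S : NFC) : ℤ → Set S.toNFCseq.Xpt → Set S.toNFCseq.Xpt
  | Int.ofNat k, A => S.T^[k] ⁻¹' A
  | Int.negSucc k, A => S.T^[k + 1] '' A

/-- `σ` is a graph measure arising from powers of `T` on `X^ι`:
`σ(∏ᵢ Aᵢ) = α · μ(⋂ᵢ T^{-eᵢ} Aᵢ)`. -/
def IsGraphMeasure (S : NFC) {ι : Type} (σ : Measure (ι → S.toNFCseq.Xpt)) : Prop :=
  ∃ α : ℝ≥0∞, 0 < α ∧ α ≠ ⊤ ∧ ∃ e : ι → ℤ,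
    ∀ A : ι → Set S.toNFCseq.Xpt, (∀ i, MeasurableSet (A i)) →
      σ (Set.univ.pi A) = α * S.μ (⋂ i, S.preT (e i) (A i))

/-- `σ = σ^{D_1} ⊗ ⋯ ⊗ σ^{D_r}` for a partition `D_1, …, D_r` of `{1,…,d}` where each
`σ^{D_j}` is a graph measure on `X^{D_j}` arising from powers of `T`. -/
def IsProductOfGraphMeasures (S : NFC) (d : ℕ) (σ : Measure (S.Xd d)) : Prop :=
  ∃ (r : ℕ) (D : Fin r → Finset (Fin d)),
    (∀ j, (D j).Nonempty) ∧
    (∀ j j', j ≠ j' → Disjoint (D j) (D j')) ∧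
    (∀ i : Fin d, ∃ j, i ∈ D j) ∧
    ∃ σD : ∀ j : Fin r, Measure ({i // i ∈ D j} → S.toNFCseq.Xpt),
      (∀ j, S.IsGraphMeasure (σD j)) ∧
      ∀ A : Fin d → Set S.toNFCseq.Xpt, (∀ i, MeasurableSet (A i)) →
        σ (Set.univ.pi A) =
          ∏ j : Fin r, σD j (Set.univ.pi fun i : {i // i ∈ D j} => A i.1)

end NFC


/-- `(T)^j W` for `j ∈ ℤ`: forward images for `j ≥ 0`, preimages for `j < 0`. -/
def iterZ {α : Type*} (f : α → α) : ℤ → Set α → Set α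
  | Int.ofNat k, A => f^[k] '' A
  | Int.negSucc k, A => f^[k + 1] ⁻¹' A

namespace NFC

/-- `σ` is totally dissipative: there is a wandering set `W` whose `ℤ`-orbit covers
`X^d` up to a `σ`-null set. -/
def TotallyDissipative (S : NFC) (d : ℕ) (σ : Measure (S.Xd d)) : Prop :=
  ∃ W : Set (S.Xd d), MeasurableSet W ∧
    (∀ j j' : ℤ, j ≠ j' → Disjoint (iterZ (S.Td d) j W) (iterZ (S.Td d) j' W)) ∧
    σ (⋃ j : ℤ, iterZ (S.Td d) j W)ᶜ = 0

/-- The ring `𝓡` of finite unions of `n`-boxes. -/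
def BoxRing (S : NFC) (d : ℕ) : Set (Set (S.Xd d)) :=
  {B | ∃ n : ℕ, ∃ 𝔅 : Finset (Set (S.Xd d)), (∀ b ∈ 𝔅, S.IsNBox d n b) ∧ B = ⋃₀ ↑𝔅}

/-- Convergence of a sequence of Radon measures on `X^d`. -/
def RTendsto (S : NFC) (d : ℕ) (σk : ℕ → Measure (S.Xd d)) (σ : Measure (S.Xd d)) : Prop :=
  ∀ n : ℕ, 0 < σ (S.towerD d n) →
    (∀ᶠ k in atTop, 0 < σk k (S.towerD d n)) ∧
    ∀ B : Set (S.Xd d), S.IsNBox d n B →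
      Tendsto (fun k => σk k B / σk k (S.towerD d n)) atTop
        (𝓝 (σ B / σ (S.towerD d n)))

/-- The edge `∂C_n^d` of `C_n^d`. -/
def edgeD (S : NFC) (d n : ℕ) : Set (S.Xd d) :=
  {y | y ∈ S.towerD d n ∧ ∃ i, y i ∈ S.toNFCseq.level n 0 ∨
    y i ∈ S.toNFCseq.level n (S.toNFCseq.hgt n - 1)}

/-- `Ω_m`: the union of all `m`-boxes `L_m^{j_1} × ⋯ × L_m^{j_d}` with `j_i ≠ 0` for all `i`. -/
def OmegaD (S : NFC) (d m : ℕ) : Set (S.Xd d) :=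
  {y | ∀ i, ∃ j : ℕ, j ≠ 0 ∧ j < S.toNFCseq.hgt m ∧ y i ∈ S.toNFCseq.level m j}

/-- A twisting transformation on `X^d`: it applies `T` to the coordinates in a nonempty
proper subset `G_1 ⊆ {1,…,d}` and the identity to the others. -/
def IsTwist (S : NFC) (d : ℕ) (Sw : S.Xd d → S.Xd d) : Prop :=
  ∃ G : Fin d → Bool, (∃ i, G i = true) ∧ (∃ i, G i = false) ∧
    ∀ (y : S.Xd d) (i : Fin d), Sw y i = if G i then S.T (y i) else y i

/-- The empirical measure `γ_J = ∑_{j ∈ J} δ_{(T^{×d})^j x}` along a two-sided orbit `o`. -/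
def emp (S : NFC) (d : ℕ) (o : ℤ → S.Xd d) (J : Finset ℤ) : Measure (S.Xd d) :=
  ∑ j ∈ J, Measure.dirac (o j)

end NFC

/-- `J` is a (nonempty finite) interval of `ℤ`. -/
def IsIntervalZ (J : Finset ℤ) : Prop := ∃ a b : ℤ, a ≤ b ∧ J = Finset.Icc a b

namespace NFC

/-- `J` is an `n`-crossing for the orbit `o` of a point of `X^d`: a maximal interval on which
the orbit stays in `C_n^d` with all the `t_n(T^j x_i)` constant. -/
def IsCrossing (S : NFC) (d : ℕ) (o : ℤ → S.Xd d) (n : ℕ) (J : Finset ℤ) : Prop :=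
  IsIntervalZ J ∧
  (∀ j ∈ J, o j ∈ S.towerD d n) ∧
  (∀ i : Fin d, ∀ j ∈ J, ∀ j' ∈ J, S.toNFCseq.tcol n (o j i) = S.toNFCseq.tcol n (o j' i)) ∧
  ∀ J' : Finset ℤ, J ⊆ J' → IsIntervalZ J' →
    (∀ j ∈ J', o j ∈ S.towerD d n) →
    (∀ i : Fin d, ∀ j ∈ J', ∀ j' ∈ J', S.toNFCseq.tcol n (o j i) = S.toNFCseq.tcol n (o j' i)) →
    J' = J

/-- An `n`-crossing is synchronized if `t_n(T^j x_1) = ⋯ = t_n(T^j x_d)` on it. -/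
def IsSync (S : NFC) (d : ℕ) (o : ℤ → S.Xd d) (n : ℕ) (J : Finset ℤ) : Prop :=
  ∀ j ∈ J, ∀ i i' : Fin d, S.toNFCseq.tcol n (o j i) = S.toNFCseq.tcol n (o j i')

end NFC

/-- The interval `I_n` of length `h_n` centered at `0`. -/
def Imid (P : NFCseq) (n : ℕ) : Finset ℤ :=
  Finset.Icc (-((P.hgt n / 2 : ℕ) : ℤ)) (-((P.hgt n / 2 : ℕ) : ℤ) + P.hgt n - 1)

namespace NFC

/-- A substantial `n`-crossing: an `n`-crossing whose intersection with `I_n` has at least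
`η·h_n` elements. -/
def IsSubstantial (S : NFC) (d : ℕ) (o : ℤ → S.Xd d) (η : ℝ) (n : ℕ) (J : Finset ℤ) : Prop :=
  S.IsCrossing d o n J ∧ η * S.toNFCseq.hgt n ≤ ((J ∩ Imid S.toNFCseq n).card : ℝ)

/-- `x_i` climbs into tower `n` along the interval `I`. -/
def Climbs (S : NFC) (d : ℕ) (o : ℤ → S.Xd d) (i : Fin d) (n : ℕ) (I : Finset ℤ) : Prop :=
  (∀ j ∈ I, (o j) i ∈ S.toNFCseq.tower n) ∧
  ¬ ∃ j : ℤ, j ∈ I ∧ j + 1 ∈ I ∧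
      (o j) i ∈ S.toNFCseq.level n (S.toNFCseq.hgt n - 1) ∧
      (o (j + 1)) i ∈ S.toNFCseq.level n 0

end NFC

/-- The nearly finite Chacon system together with the conull set `X_∞` and the function
`x ↦ ℓ(x)` of Lemma 2.3. -/
structure NFCX extends NFC where
  Xinf : Set toNFCseq.Xpt
  ellx : toNFCseq.Xpt → ℕ
  Xinf_conull : μ Xinfᶜ = 0
  Xinf_spec : ∀ x ∈ Xinf, ∀ ℓ : ℕ, ellx x ≤ ℓ → ∀ n : ℕ,
    nseq (ℓ - 1) ≤ n → n + ℓ ≤ nseq ℓ →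
      x ∈ toNFCseq.tower n ∧ ¬ toNFCseq.inFirstHundred n (nseq ℓ) x ∧
        ¬ toNFCseq.inLastHundred n (nseq ℓ) x

namespace NFCX

/-- `o` is the two-sided orbit of a `σ`-typical point `x = o 0` (satisfying
conditions (1), (2) and (3) of Section 3.4 of the paper). -/
def IsTypicalOrbit (S : NFCX) (d : ℕ) (σ : Measure (S.toNFC.Xd d))
    (o : ℤ → S.toNFC.Xd d) : Prop :=
  (∀ j : ℤ, S.toNFC.Td d (o j) = o (j + 1)) ∧
  (∀ j : ℤ, ∀ n : ℕ, 0 < σ (S.toNFC.towerD d n) →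
    ∀ B : Set (S.toNFC.Xd d), S.toNFC.IsNBox d n B →
    ∀ a b : ℕ → ℤ, (∀ k, a k ≤ 0) → (∀ k, 0 ≤ b k) →
      Tendsto (fun k => b k - a k) atTop atTop →
      Tendsto (fun k =>
          (((Finset.Icc (a k) (b k)).filter (fun j' => o (j + j') ∈ B)).card : ℝ) /
            (((Finset.Icc (a k) (b k)).filter
              (fun j' => o (j + j') ∈ S.toNFC.towerD d n)).card : ℝ))
        atTop (𝓝 ((σ B).toReal / (σ (S.toNFC.towerD d n)).toReal))) ∧
  (∀ n : ℕ, ∀ B : Set (S.toNFC.Xd d), S.toNFC.IsNBox d n B → o 0 ∈ B → 0 < σ B) ∧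
  (∀ i : Fin d, (o 0) i ∈ S.Xinf)

end NFCX

/-! ## Subsets of `ℤ` of order `ℓ` inside an interval -/

/-- A piece of `F ∩ I`: a maximal interval included in `F ∩ I`. -/
def IsPieceZ (F : Set ℤ) (I : Finset ℤ) (J : Finset ℤ) : Prop :=
  IsIntervalZ J ∧ (↑J : Set ℤ) ⊆ F ∩ ↑I ∧
    ∀ J' : Finset ℤ, IsIntervalZ J' → (↑J' : Set ℤ) ⊆ F ∩ ↑I → J ⊆ J' → J' = J

/-- A hole of `F ∩ I`: a maximal interval included in `I \ F`. -/
def IsHoleZ (F : Set ℤ) (I : Finset ℤ) (J : Finset ℤ) : Prop :=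
  IsIntervalZ J ∧ (↑J : Set ℤ) ⊆ (↑I : Set ℤ) \ F ∧
    ∀ J' : Finset ℤ, IsIntervalZ J' → (↑J' : Set ℤ) ⊆ (↑I : Set ℤ) \ F → J ⊆ J' → J' = J

/-- Each hole of `F ∩ I` has size at most `s`. -/
def HolesSmall (F : Set ℤ) (I : Finset ℤ) (s : ℕ) : Prop :=
  ∀ H : Finset ℤ, IsHoleZ F I H → H.card ≤ s

/-- Two consecutive holes of `F ∩ I` are always separated by a piece of size at least `c`. -/
def HolesSeparated (F : Set ℤ) (I : Finset ℤ) (c : ℕ) : Prop :=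
  ∀ H₁ H₂ : Finset ℤ, IsHoleZ F I H₁ → IsHoleZ F I H₂ →
    (∀ a ∈ H₁, ∀ b ∈ H₂, a < b) →
    ∃ J : Finset ℤ, IsPieceZ F I J ∧ c ≤ J.card ∧ ∀ a ∈ H₁, ∀ b ∈ H₂, ∀ x ∈ J, a < x ∧ x < b

/-- `F` is of order `ℓ ≥ 1` inside the interval `I`, with respect to the sequences `c`, `s`. -/
def IsOrder (c s : ℕ → ℕ) : ℕ → Set ℤ → Finset ℤ → Prop
  | 0, _, _ => False
  | 1, F, I => HolesSmall F I (s 1) ∧ HolesSeparated F I (c 1)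
  | (ℓ + 2), F, I => ∃ F' : Set ℤ, F ⊆ F' ∧ HolesSmall F' I (s (ℓ + 2)) ∧
      HolesSeparated F' I (c (ℓ + 2)) ∧
      ∀ J : Finset ℤ, IsPieceZ F' I J → IsOrder c s (ℓ + 1) F J

/-- `p_1`: the smallest integer such that `3^{p_1} > 2d+1` and `p_1 > d`. -/
def pOne (d : ℕ) : ℕ := sInf {p : ℕ | 2 * d + 1 < 3 ^ p ∧ d < p}

/-- `p_2`: the smallest integer such that `1/3^{p_2} < η/3`. -/
def pTwo (η : ℝ) : ℕ := sInf {p : ℕ | ((3 : ℝ) ^ p)⁻¹ < η / 3}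



/-! ### Addresses: digits of a point in the cutting-and-stacking construction -/

namespace Chacon

/-- `n` is one of the special indices `n_ℓ`, `ℓ ≥ 1`. -/
def IsSp (P : NFCseq) (n : ℕ) : Prop := ∃ ℓ, 1 ≤ ℓ ∧ P.nseq ℓ = n

/-- Height, inside tower `n + 1`, of the base of the `c`-th subcolumn (`c = 0, 1, 2`) of
tower `n`. -/
def off (P : NFCseq) (n c : ℕ) : ℕ := c * (P.hgt n + P.spa n) + c / 2

/-- The `n`-th digit of `x`: the subcolumn of tower `n` containing `x`, numbered from `0`. -/
def dig (P : NFCseq) (n : ℕ) (x : P.Xpt) : ℕ := P.tcol n x - 1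

theorem hgt_zero (P : NFCseq) : P.hgt 0 = 1 := by simp [NFCseq.hgt]

theorem hgt_succ (P : NFCseq) (n : ℕ) : P.hgt (n + 1) = 3 * P.hgt n + 3 * P.spa n + 1 := by
  rw [NFCseq.hgt]; rfl

theorem hgt_lt_succ (P : NFCseq) (n : ℕ) : P.hgt n < P.hgt (n + 1) := by
  rw [hgt_succ]; omega

theorem hgt_strictMono (P : NFCseq) : StrictMono P.hgt := strictMono_nat_of_lt_succ (hgt_lt_succ P)

theorem nseq_strictMono (P : NFCseq) : StrictMono P.nseq :=
  strictMono_nat_of_lt_succ fun n => by have := P.nseq_growth (n + 1) (by omega); simp at this; omega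

theorem spa_eq_zero (P : NFCseq) {n : ℕ} (h : ¬ IsSp P n) : P.spa n = 0 := by
  exact dif_neg h

theorem spa_nseq (P : NFCseq) {l : ℕ} (hl : 1 ≤ l) :
    P.spa (P.nseq l) = P.hgt (P.nseq l - P.kOf l) := by
  have h : ∃ ℓ, 1 ≤ ℓ ∧ P.nseq ℓ = P.nseq l := ⟨l, hl, rfl⟩
  unfold NFCseq.spa; rw [dif_pos h]
  rw [(nseq_strictMono P).injective (Nat.find_spec h).2]

theorem le_lseq (P : NFCseq) (k : ℕ) : k < P.lseq k := by
  induction k with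
  | zero => rw [P.lseq_zero]; omega
  | succ k ih => have := P.lseq_strictMono (Nat.lt_add_one k); omega

theorem kOf_bdd (P : NFCseq) (l : ℕ) : BddAbove {k | P.lseq k ≤ l} :=
  ⟨l, fun k hk => ((le_lseq P k).trans_le hk).le⟩

theorem le_kOf (P : NFCseq) {l K : ℕ} (h : P.lseq K ≤ l) : K ≤ P.kOf l :=
  le_csSup (kOf_bdd P l) h

theorem kOf_lt (P : NFCseq) {l : ℕ} (hl : 1 ≤ l) : P.kOf l < l := by
  have hne : {k | P.lseq k ≤ l}.Nonempty := ⟨0, by simp [P.lseq_zero, hl]⟩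
  have := Nat.sSup_mem hne (kOf_bdd P l)
  exact (le_lseq P _).trans_le this

theorem nseq_gap (P : NFCseq) {l : ℕ} (hl : 1 ≤ l) : P.nseq (l - 1) + l < P.nseq l - P.kOf l := by
  have := P.nseq_growth l hl
  have := kOf_lt P hl
  omega

theorem off_add_lt (P : NFCseq) {n c v : ℕ} (hc : c ≤ 2) (hv : v < P.hgt n) :
    off P n c + v < P.hgt (n + 1) := by
  unfold off; rw [hgt_succ]
  interval_cases c <;> omega

theorem pmap_off (P : NFCseq) {n c v : ℕ} (hc : c ≤ 2) (hv : v < P.hgt n) :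
    P.pmap n (off P n c + v) = some v := by
  unfold off NFCseq.pmap
  interval_cases c
  · simp [hv]
  · rw [if_neg (by omega), if_neg (by omega), if_pos (by omega)]; congr 1; omega
  · rw [if_neg (by omega), if_neg (by omega), if_neg (by omega), if_neg (by omega),
      if_pos (by omega)]; congr 1; omega

theorem pmap_eq_some (P : NFCseq) {n j v : ℕ} (h : P.pmap n j = some v) :
    v < P.hgt n ∧ ∃ c ≤ 2, j = off P n c + v := by
  unfold NFCseq.pmap at h
  unfold off
  split_ifs at h with h1 h2 h3 h4 h5
  · simp at h; subst h; exact ⟨h1, 0, by omega, by simp⟩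
  · simp at h; subst h; exact ⟨by omega, 1, by omega, by omega⟩
  · simp at h; subst h; exact ⟨by omega, 2, by omega, by omega⟩

theorem dig_le (P : NFCseq) (n : ℕ) (x : P.Xpt) : dig P n x ≤ 2 := by
  unfold dig NFCseq.tcol
  split
  · simp
  · split_ifs <;> simp

theorem dig_off (P : NFCseq) {n c v : ℕ} (hc : c ≤ 2) (hv : v < P.hgt n) {x : P.Xpt}
    (hx : x.1 (n + 1) = some (off P n c + v)) : dig P n x = c := by
  unfold dig NFCseq.tcol; rw [hx]; unfold off
  interval_cases c
  · simp only; rw [if_pos (by omega)]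
  · simp only; rw [if_neg (by omega), if_pos (by omega)]
  · simp only; rw [if_neg (by omega), if_neg (by omega)]

theorem succ_of {P : NFCseq} {n v : ℕ} {x : P.Xpt} (hx : x.1 n = some v) :
    v < P.hgt n ∧ x.1 (n + 1) = some (off P n (dig P n x) + v) := by
  have h := x.2.1 n
  rw [hx] at h
  rcases hj : x.1 (n + 1) with _ | j
  · rw [hj] at h; simp at h
  · rw [hj] at h
    have h' : P.pmap n j = some v := h.symm
    obtain ⟨hv, c, hc, rfl⟩ := pmap_eq_some P h'
    exact ⟨hv, by rw [dig_off P hc hv hj]⟩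

theorem lt_hgt {P : NFCseq} {n v : ℕ} {x : P.Xpt} (hx : x.1 n = some v) : v < P.hgt n :=
  (succ_of hx).1

theorem of_succ {P : NFCseq} {n c v : ℕ} (hc : c ≤ 2) (hv : v < P.hgt n) {x : P.Xpt}
    (hx : x.1 (n + 1) = some (off P n c + v)) : x.1 n = some v := by
  rw [x.2.1 n, hx]; exact pmap_off P hc hv

theorem addr_lt {P : NFCseq} {a b v : ℕ} (hab : a ≤ b) (hv : v < P.hgt a) {d : ℕ → ℕ}
    (hd : ∀ k, d k ≤ 2) : v + ∑ k ∈ Finset.Ico a b, off P k (d k) < P.hgt b := by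
  induction b, hab using Nat.le_induction with
  | base => simpa using hv
  | succ b hab ih =>
    rw [Finset.sum_Ico_succ_top hab]
    have := off_add_lt P (hd b) ih
    omega

theorem addr {P : NFCseq} {a b v : ℕ} (hab : a ≤ b) {x : P.Xpt} (hx : x.1 a = some v) :
    x.1 b = some (v + ∑ k ∈ Finset.Ico a b, off P k (dig P k x)) := by
  induction b, hab using Nat.le_induction with
  | base => simpa using hx
  | succ b hab ih =>
    rw [Finset.sum_Ico_succ_top hab, (succ_of ih).2]
    congr 1; omega

theorem of_addr {P : NFCseq} {a b v : ℕ} (hab : a ≤ b) (hv : v < P.hgt a) {d : ℕ → ℕ}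
    (hd : ∀ k, d k ≤ 2) {x : P.Xpt}
    (hx : x.1 b = some (v + ∑ k ∈ Finset.Ico a b, off P k (d k))) :
    x.1 a = some v ∧ ∀ k, a ≤ k → k < b → dig P k x = d k := by
  induction b, hab using Nat.le_induction with
  | base => exact ⟨by simpa using hx, fun k h1 h2 => by omega⟩
  | succ b hab ih =>
    rw [Finset.sum_Ico_succ_top hab] at hx
    have hx' : x.1 (b + 1) = some (off P b (d b) + (v + ∑ k ∈ Finset.Ico a b, off P k (d k))) := by
      rw [hx]; congr 1; omega
    have hl := addr_lt hab hv hd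
    obtain ⟨h1, h2⟩ := ih (of_succ (hd b) hl hx')
    refine ⟨h1, fun k hk hk' => ?_⟩
    rcases Nat.lt_succ_iff_lt_or_eq.1 hk' with h | rfl
    · exact h2 k hk h
    · exact dig_off P (hd k) hl hx'

/-- Points defined at some level are defined at all higher levels. -/
theorem some_mono {P : NFCseq} {a b : ℕ} (hab : a ≤ b) {x : P.Xpt} (hx : x.1 a ≠ none) :
    x.1 b ≠ none := by
  obtain ⟨v, hv⟩ := Option.ne_none_iff_exists'.1 hx
  rw [addr hab hv]; simp

theorem none_mono {P : NFCseq} {a b : ℕ} (hab : a ≤ b) {x : P.Xpt} (hx : x.1 b = none) :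
    x.1 a = none := by
  by_contra h; exact some_mono hab h hx

/-- A point is determined by its values at arbitrarily high levels. -/
theorem ext_of_high {P : NFCseq} {N : ℕ} {x y : P.Xpt} (h : ∀ n, N ≤ n → x.1 n = y.1 n) :
    x = y := by
  apply Subtype.ext; funext n
  have key : ∀ k, x.1 (n + k) = y.1 (n + k) → x.1 n = y.1 n := by
    intro k
    induction k with
    | zero => exact id
    | succ k ih =>
      intro hk
      apply ih
      rw [x.2.1, y.2.1]
      rw [show n + k + 1 = n + (k + 1) by omega, hk]
  exact key N (h _ (by omega))

/-- Equality of digits above a level where the two positions agree forces equality. -/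
theorem ext_of_dig {P : NFCseq} {N v : ℕ} {x y : P.Xpt} (hx : x.1 N = some v) (hy : y.1 N = some v)
    (h : ∀ n, N ≤ n → dig P n x = dig P n y) : x = y := by
  apply ext_of_high (N := N)
  intro n hn
  rw [addr hn hx, addr hn hy]
  congr 2
  apply Finset.sum_congr rfl
  intro k hk
  rw [h k (Finset.mem_Ico.1 hk).1]

end Chacon

/-! ### The transformation as a measurable permutation -/

namespace Chacon

theorem T_fwd (S : NFC) {x : S.Xpt} {n j : ℕ} (hx : x.1 n = some j)
    (hj : j + 1 < S.hgt n) : (S.T x).1 n = some (j + 1) := by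
  obtain ⟨N, hN⟩ := S.T_up x
  obtain ⟨J, h1, h2⟩ := hN (max N n) (le_max_left _ _)
  rw [addr (le_max_right N n) hx] at h1
  have hJ := Option.some.inj h1
  refine (of_addr (le_max_right N n) hj (fun k => dig_le S.toNFCseq k x) ?_).1
  rw [h2, ← hJ]; congr 1; omega

theorem T_bwd (S : NFC) {x : S.Xpt} {n j : ℕ} (hx : (S.T x).1 n = some (j + 1)) :
    x.1 n = some j := by
  obtain ⟨N, hN⟩ := S.T_up x
  obtain ⟨J, h1, h2⟩ := hN (max N n) (le_max_left _ _)
  rw [addr (le_max_right N n) hx] at h2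
  have hJ := Option.some.inj h2
  have hl := lt_hgt hx
  refine (of_addr (le_max_right N n) (by omega) (fun k => dig_le S.toNFCseq k (S.T x)) ?_).1
  rw [h1]; congr 1; omega

/-- The forward orbit of the exceptional point `𝟎`, the only point without a preimage. -/
def Oz (S : NFC) : Set S.Xpt := {x | ∃ k : ℕ, S.T^[k] S.zeroPt = x}

theorem Oz_countable (S : NFC) : (Oz S).Countable :=
  Set.countable_range fun k : ℕ => S.T^[k] S.zeroPt

theorem zero_mem_Oz (S : NFC) : S.zeroPt ∈ Oz S := ⟨0, rfl⟩

theorem T_mem_Oz (S : NFC) {x : S.Xpt} : S.T x ∈ Oz S ↔ x ∈ Oz S := by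
  constructor
  · rintro ⟨k, hk⟩
    cases k with
    | zero =>
      have : S.T x ∈ Set.range S.T := ⟨x, rfl⟩
      rw [S.T_range] at this
      exact absurd hk.symm this
    | succ k =>
      rw [Function.iterate_succ_apply'] at hk
      exact ⟨k, S.T_inj hk⟩
  · rintro ⟨k, rfl⟩
    exact ⟨k + 1, Function.iterate_succ_apply' _ _ _⟩

theorem Tp_bij (S : NFC) : Function.Bijective fun x => if x ∈ Oz S then x else S.T x := by
  constructor
  · intro x y h
    simp only at h
    split_ifs at h with h1 h2 h2
    · exact h
    · rw [h, T_mem_Oz] at h1; exact absurd h1 h2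
    · rw [← h, T_mem_Oz] at h2; exact absurd h2 h1
    · exact S.T_inj h
  · intro y
    by_cases hy : y ∈ Oz S
    · exact ⟨y, by simp [hy]⟩
    · have : y ∈ Set.range S.T := by
        rw [S.T_range]; rintro rfl; exact hy (zero_mem_Oz S)
      obtain ⟨x, rfl⟩ := this
      refine ⟨x, ?_⟩
      rw [T_mem_Oz] at hy
      simp [hy]

/-- `T` made into a permutation of `X`, by replacing it with the identity on the countable
invariant set `Oz`. -/
def Tp (S : NFC) : Equiv.Perm S.Xpt := Equiv.ofBijective _ (Tp_bij S)

theorem Tp_apply (S : NFC) {x : S.Xpt} (hx : x ∉ Oz S) : Tp S x = S.T x := if_neg hx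

theorem Tp_Oz (S : NFC) {x : S.Xpt} (hx : x ∈ Oz S) : Tp S x = x := if_pos hx

theorem Tp_mem_Oz (S : NFC) {x : S.Xpt} : Tp S x ∈ Oz S ↔ x ∈ Oz S := by
  by_cases hx : x ∈ Oz S
  · rw [Tp_Oz S hx]
  · rw [Tp_apply S hx, T_mem_Oz]

theorem Tp_inv_mem_Oz (S : NFC) {x : S.Xpt} : (Tp S)⁻¹ x ∈ Oz S ↔ x ∈ Oz S := by
  rw [← Tp_mem_Oz]; simp

theorem Tpz_mem_Oz (S : NFC) (k : ℤ) (x : S.Xpt) : (Tp S ^ k) x ∈ Oz S ↔ x ∈ Oz S := by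
  induction k with
  | zero => simp
  | succ k ih => rw [add_comm, zpow_add, Equiv.Perm.mul_apply, zpow_one, Tp_mem_Oz, ih]
  | pred k ih =>
    rw [sub_eq_add_neg, add_comm, zpow_add, Equiv.Perm.mul_apply, zpow_neg_one, Tp_inv_mem_Oz, ih]

theorem Tpz_Oz (S : NFC) (k : ℤ) {x : S.Xpt} (hx : x ∈ Oz S) : (Tp S ^ k) x = x := by
  induction k with
  | zero => simp
  | succ k ih => rw [add_comm, zpow_add, Equiv.Perm.mul_apply, zpow_one, ih, Tp_Oz S hx]
  | pred k ih =>
    rw [sub_eq_add_neg, add_comm, zpow_add, Equiv.Perm.mul_apply, zpow_neg_one, ih,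
      Equiv.Perm.inv_eq_iff_eq, Tp_Oz S hx]

/-- Inside a tower, `T ^ k` moves a point `k` levels up. -/
theorem Tpz_pos (S : NFC) {x : S.Xpt} (hO : x ∉ Oz S) {n j : ℕ} (hx : x.1 n = some j) (k : ℤ)
    {j' : ℕ} (hj : (j' : ℤ) = j + k) (hj' : j' < S.hgt n) : ((Tp S ^ k) x).1 n = some j' := by
  induction k generalizing j' with
  | zero => simp at hj; subst hj; simpa using hx
  | succ k ih =>
    have := ih (j' := j + k) (by push_cast; ring) (by omega)
    rw [add_comm, zpow_add, Equiv.Perm.mul_apply, zpow_one,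
      Tp_apply S (by rwa [Tpz_mem_Oz])]
    rw [T_fwd S this (by omega)]; congr 1; omega
  | pred k ih =>
    have hl := lt_hgt hx
    have := ih (j' := j' + 1) (by push_cast; rw [hj]; ring) (by omega)
    rw [sub_eq_add_neg, add_comm, zpow_add, Equiv.Perm.mul_apply, zpow_neg_one]
    set y := (Tp S)⁻¹ ((Tp S ^ (-(k : ℤ))) x) with hy
    have hy' : Tp S y = (Tp S ^ (-(k : ℤ))) x := by simp [hy]
    have hyO : y ∉ Oz S := by rw [hy, Tp_inv_mem_Oz, Tpz_mem_Oz]; exact hO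
    rw [← hy', Tp_apply S hyO] at this
    exact T_bwd S this

instance (P : NFCseq) : BorelSpace P.Xpt := ⟨rfl⟩

instance : DiscreteTopology (Option ℕ) := ⟨rfl⟩

instance : SecondCountableTopology (Option ℕ) :=
  DiscreteTopology.secondCountableTopology_of_countable

instance (P : NFCseq) : SecondCountableTopology P.Xpt :=
  TopologicalSpace.Subtype.secondCountableTopology _

theorem continuous_coord (P : NFCseq) (n : ℕ) : Continuous fun x : P.Xpt => x.1 n :=
  (continuous_apply n).comp continuous_subtype_val

theorem isOpen_coord (P : NFCseq) (n : ℕ) (s : Set (Option ℕ)) :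
    IsOpen {x : P.Xpt | x.1 n ∈ s} :=
  (isOpen_discrete s).preimage (continuous_coord P n)

theorem meas_coord (P : NFCseq) (n : ℕ) (s : Set (Option ℕ)) :
    MeasurableSet {x : P.Xpt | x.1 n ∈ s} := (isOpen_coord P n s).measurableSet

theorem meas_level (P : NFCseq) (n j : ℕ) : MeasurableSet (P.level n j) :=
  meas_coord P n {some j}

theorem meas_tower (P : NFCseq) (n : ℕ) : MeasurableSet (P.tower n) :=
  meas_coord P n {none}ᶜ

instance (P : NFCseq) : StandardBorelSpace P.Xpt := by
  let i1 : MeasurableSpace (Option ℕ) := borel _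
  have i2 : BorelSpace (Option ℕ) := ⟨rfl⟩
  have h0 : ∀ n : ℕ, Continuous fun x : ℕ → Option ℕ => (x (n + 1)).bind (P.pmap n) := fun n =>
    (continuous_of_discreteTopology (f := fun o : Option ℕ => o.bind (P.pmap n))).comp
      (continuous_apply (n + 1))
  have hm : MeasurableSet {x : ℕ → Option ℕ | P.Xspec x} := by
    have : {x : ℕ → Option ℕ | P.Xspec x} =
        (⋂ n, {x | x n = (x (n + 1)).bind (P.pmap n)}) ∩ ⋃ n, {x | x n ≠ none} := by
      ext x; simp [NFCseq.Xspec]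
    rw [this]
    refine (MeasurableSet.iInter fun n => ?_).inter (MeasurableSet.iUnion fun n => ?_)
    · exact (isClosed_eq (continuous_apply n) (h0 n)).measurableSet
    · have hc : Continuous fun x : ℕ → Option ℕ => x n := continuous_apply n
      exact ((isOpen_discrete ({none}ᶜ : Set (Option ℕ))).preimage hc).measurableSet
  have hs := hm.standardBorel
  have e : (NFCseq.instMeasurableSpaceXpt P : MeasurableSpace P.Xpt) =
      (Subtype.instMeasurableSpace : MeasurableSpace {x : ℕ → Option ℕ // P.Xspec x}) := by
    exact (Subtype.borelSpace _).measurable_eq.symm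
  rw [e]; exact hs

theorem meas_Tp (S : NFC) : Measurable (Tp S) :=
  Measurable.ite (Oz_countable S).measurableSet measurable_id S.T_meas

theorem meas_Tp_inv (S : NFC) : Measurable ((Tp S)⁻¹ : Equiv.Perm S.Xpt) := by
  have h := (meas_Tp S).measurableEmbedding (Tp S).injective
  intro s hs
  have : ((Tp S)⁻¹ : Equiv.Perm S.Xpt) ⁻¹' s = Tp S '' s := by
    rw [Equiv.image_eq_preimage_symm]; rfl
  rw [this]
  exact h.measurableSet_image.2 hs

theorem meas_Tpz (S : NFC) (k : ℤ) : Measurable (Tp S ^ k : Equiv.Perm S.Xpt) := by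
  induction k with
  | zero => exact measurable_id
  | succ k ih =>
    rw [add_comm, zpow_add, zpow_one]; exact (meas_Tp S).comp ih
  | pred k ih =>
    rw [sub_eq_add_neg, add_comm, zpow_add, zpow_neg_one]; exact (meas_Tp_inv S).comp ih

theorem mu_singleton (S : NFC) (x : S.Xpt) : S.μ {x} = 0 := by
  obtain ⟨N, hN⟩ := x.2.2
  have key : ∀ n, N ≤ n → S.μ {x} ≤ (3 : ℝ≥0∞)⁻¹ ^ n := by
    intro n hn
    obtain ⟨j, hj⟩ := Option.ne_none_iff_exists'.1 (some_mono hn hN)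
    rw [← S.μ_level n j (lt_hgt hj)]
    exact measure_mono (by rintro _ rfl; exact hj)
  have ht : Tendsto (fun n : ℕ => (3 : ℝ≥0∞)⁻¹ ^ n) atTop (𝓝 0) :=
    ENNReal.tendsto_pow_atTop_nhds_zero_of_lt_one (by
      rw [ENNReal.inv_lt_one]; norm_num)
  exact le_antisymm (ge_of_tendsto ht (eventually_atTop.2 ⟨N, key⟩)) bot_le

theorem mu_Oz (S : NFC) : S.μ (Oz S) = 0 := by
  rw [← Set.biUnion_of_singleton (Oz S)]
  exact (measure_biUnion_null_iff (Oz_countable S)).2 fun x _ => mu_singleton S x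

theorem Tp_ae (S : NFC) : (Tp S : S.Xpt → S.Xpt) =ᵐ[S.μ] S.T := by
  have : (Oz S)ᶜ ∈ ae S.μ := by rw [mem_ae_iff, compl_compl]; exact mu_Oz S
  filter_upwards [this] with x hx using Tp_apply S hx

theorem mp_Tp (S : NFC) : MeasurePreserving (Tp S) S.μ S.μ :=
  ⟨meas_Tp S, by rw [Measure.map_congr (Tp_ae S), S.μ_pres.map_eq]⟩

theorem mp_Tp_inv (S : NFC) : MeasurePreserving ((Tp S)⁻¹ : Equiv.Perm S.Xpt) S.μ S.μ := by
  refine ⟨meas_Tp_inv S, ?_⟩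
  conv_lhs => rw [← (mp_Tp S).map_eq]
  rw [Measure.map_map (meas_Tp_inv S) (meas_Tp S)]
  have : ((Tp S)⁻¹ : Equiv.Perm S.Xpt) ∘ Tp S = id := by ext1 x; simp
  rw [this, Measure.map_id]

theorem mp_Tpz (S : NFC) (k : ℤ) :
    MeasurePreserving (Tp S ^ k : Equiv.Perm S.Xpt) S.μ S.μ := by
  induction k with
  | zero => exact MeasurePreserving.id _
  | succ k ih =>
    rw [add_comm, zpow_add, zpow_one]; exact (mp_Tp S).comp ih
  | pred k ih =>
    rw [sub_eq_add_neg, add_comm, zpow_add, zpow_neg_one]; exact (mp_Tp_inv S).comp ih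

end Chacon

/-! ### Displacements encoded by digit sequences -/

namespace Chacon

/-- Two digit sequences `d`, `d'` agree from some rank on, and the displacement `κ` which turns
the digits `d` into the digits `d'` leaves a remainder `r` at the bottom of the construction. -/
def Step (P : NFCseq) (κ : ℤ) (d d' : ℕ → ℕ) (r : ℤ) : Prop :=
  ∃ b, (∀ k, b ≤ k → d' k = d k) ∧ (∀ k, d' k ≤ 2) ∧
    κ = r + ∑ k ∈ Finset.range b, ((off P k (d' k) : ℤ) - off P k (d k))

theorem Step.at {P : NFCseq} {κ r : ℤ} {d d' : ℕ → ℕ} (h : Step P κ d d' r) :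
    ∃ b, ∀ B, b ≤ B → (∀ k, B ≤ k → d' k = d k) ∧
      κ = r + ∑ k ∈ Finset.range B, ((off P k (d' k) : ℤ) - off P k (d k)) := by
  obtain ⟨b, h1, h2, h3⟩ := h
  refine ⟨b, fun B hB => ⟨fun k hk => h1 k (hB.trans hk), ?_⟩⟩
  rw [h3, ← Finset.sum_range_add_sum_Ico _ hB]
  rw [Finset.sum_eq_zero (s := Finset.Ico b B)]
  · ring
  · intro k hk; rw [h1 k (Finset.mem_Ico.1 hk).1]; ring

theorem Step.le {P : NFCseq} {κ r : ℤ} {d d' : ℕ → ℕ} (h : Step P κ d d' r) (k : ℕ) : d' k ≤ 2 :=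
  h.choose_spec.2.1 k

theorem Step.trans {P : NFCseq} {κ κ' r r' : ℤ} {d d' d'' : ℕ → ℕ} (h : Step P κ d d' r)
    (h' : Step P κ' d' d'' r') : Step P (κ + κ') d d'' (r + r') := by
  obtain ⟨b, hb⟩ := h.at
  obtain ⟨b', hb'⟩ := h'.at
  obtain ⟨h1, h2⟩ := hb _ (le_max_left b b')
  obtain ⟨h3, h4⟩ := hb' _ (le_max_right b b')
  refine ⟨max b b', fun k hk => (h3 k hk).trans (h1 k hk), h'.le, ?_⟩
  rw [h2, h4, add_add_add_comm, ← Finset.sum_add_distrib]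
  congr 1
  exact Finset.sum_congr rfl fun k _ => by ring

theorem Step.symm {P : NFCseq} {κ r : ℤ} {d d' : ℕ → ℕ} (h : Step P κ d d' r)
    (hd : ∀ k, d k ≤ 2) : Step P (-κ) d' d (-r) := by
  obtain ⟨b, h1, h2, h3⟩ := h
  refine ⟨b, fun k hk => (h1 k hk).symm, hd, ?_⟩
  rw [h3, neg_add, ← Finset.sum_neg_distrib]
  congr 1
  exact Finset.sum_congr rfl fun k _ => by ring

theorem Step.shift {P : NFCseq} {κ r κ' r' : ℤ} {d d' : ℕ → ℕ} (h : Step P κ d d' r)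
    (e : κ' - r' = κ - r) : Step P κ' d d' r' := by
  obtain ⟨b, h1, h2, h3⟩ := h
  exact ⟨b, h1, h2, by linarith⟩

/-- The displacement `κ` performs on a point the change of digits it encodes. -/
theorem Step.realize {S : NFC} {κ r : ℤ} {x : S.Xpt} {d' : ℕ → ℕ} {N v v' : ℕ}
    (h : Step S.toNFCseq κ (fun k => dig S.toNFCseq k x) d' r) (hO : x ∉ Oz S)
    (hx : x.1 N = some v) (hd : ∀ k < N, d' k = dig S.toNFCseq k x) (hv : (v' : ℤ) = v + r)
    (hv' : v' < S.hgt N) :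
    ((Tp S ^ κ) x).1 N = some v' ∧ ∀ k, N ≤ k → dig S.toNFCseq k ((Tp S ^ κ) x) = d' k := by
  obtain ⟨b, hb⟩ := h.at
  have key : ∀ B, b ≤ B → N ≤ B → ((Tp S ^ κ) x).1 N = some v' ∧
      ∀ k, N ≤ k → k < B → dig S.toNFCseq k ((Tp S ^ κ) x) = d' k := by
    intro B hB hN
    refine of_addr hN hv' h.le ?_
    refine Tpz_pos S hO (addr hN hx) κ ?_ (addr_lt hN hv' h.le)
    rw [(hb B hB).2, ← Finset.sum_range_add_sum_Ico _ hN, Finset.sum_eq_zero (s := Finset.range N)]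
    · push_cast
      rw [Finset.sum_sub_distrib, hv]; ring
    · intro k hk; rw [hd k (Finset.mem_range.1 hk)]; ring
  refine ⟨(key (max b N) (le_max_left _ _) (le_max_right _ _)).1, fun k hk => ?_⟩
  exact (key (max b (k + 1)) (le_max_left _ _) (by omega)).2 k hk (by omega)

/-- Adding one to the number whose base-3 digits from rank `n` on are those of `d`, when the
carry stops at rank `q`. -/
def incD (n q : ℕ) (d : ℕ → ℕ) (k : ℕ) : ℕ :=
  if k < n then d k else if k < q then 0 else if k = q then d q + 1 else d k

/-- Subtracting one, when the borrow stops at rank `q`. -/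
def decD (n q : ℕ) (d : ℕ → ℕ) (k : ℕ) : ℕ :=
  if k < n then d k else if k < q then 2 else if k = q then d q - 1 else d k

theorem hgt_sum (P : NFCseq) {n q : ℕ} (h : n ≤ q) : (P.hgt q : ℤ) = P.hgt n +
    ∑ k ∈ Finset.Ico n q, (2 * (P.hgt k : ℤ) + 3 * P.spa k + 1) := by
  induction q, h using Nat.le_induction with
  | base => simp
  | succ q h ih =>
    rw [Finset.sum_Ico_succ_top h, ← add_assoc, ← ih, hgt_succ]; push_cast; ring

theorem off_zero (P : NFCseq) (n : ℕ) : off P n 0 = 0 := by simp [off]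

theorem step_inc (P : NFCseq) {n q : ℕ} (hnq : n ≤ q) {d : ℕ → ℕ} (hd : ∀ k, d k ≤ 2)
    (h2 : ∀ k, n ≤ k → k < q → d k = 2) (hq : d q < 2) :
    Step P (P.hgt n + ∑ k ∈ Finset.Ico n (q + 1), (P.spa k : ℤ)) d (incD n q d) (-d q) := by
  refine ⟨q + 1, fun k hk => ?_, fun k => ?_, ?_⟩
  · unfold incD; rw [if_neg (by omega), if_neg (by omega), if_neg (by omega)]
  · unfold incD; have := hd k; split_ifs <;> omega
  · rw [Finset.sum_range_succ, ← Finset.sum_range_add_sum_Ico _ hnq,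
      Finset.sum_eq_zero (s := Finset.range n), Finset.sum_Ico_succ_top hnq]
    · have e1 : ∑ k ∈ Finset.Ico n q, ((off P k (incD n q d k) : ℤ) - off P k (d k)) =
          - ∑ k ∈ Finset.Ico n q, (2 * (P.hgt k : ℤ) + 2 * P.spa k + 1) := by
        rw [← Finset.sum_neg_distrib]
        refine Finset.sum_congr rfl fun k hk => ?_
        obtain ⟨a, b⟩ := Finset.mem_Ico.1 hk
        rw [h2 k a b]; unfold incD off
        rw [if_neg (by omega), if_pos b]; push_cast; ring
      have e2 : (off P q (incD n q d q) : ℤ) - off P q (d q) = P.hgt q + P.spa q + d q := by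
        unfold incD off; rw [if_neg (by omega), if_neg (by omega), if_pos rfl]
        interval_cases d q <;> push_cast <;> ring
      rw [e1, e2, hgt_sum P hnq]
      have e3 : ∑ k ∈ Finset.Ico n q, (2 * (P.hgt k : ℤ) + 3 * P.spa k + 1) =
          ∑ k ∈ Finset.Ico n q, (2 * (P.hgt k : ℤ) + 2 * P.spa k + 1) +
          ∑ k ∈ Finset.Ico n q, (P.spa k : ℤ) := by
        rw [← Finset.sum_add_distrib]; exact Finset.sum_congr rfl fun k _ => by ring
      rw [e3]; ring
    · intro k hk; unfold incD; rw [if_pos (Finset.mem_range.1 hk)]; ring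

theorem step_dec (P : NFCseq) {n q : ℕ} (hnq : n ≤ q) {d : ℕ → ℕ} (hd : ∀ k, d k ≤ 2)
    (h2 : ∀ k, n ≤ k → k < q → d k = 0) (hq : 0 < d q) :
    Step P (-(P.hgt n + ∑ k ∈ Finset.Ico n (q + 1), (P.spa k : ℤ))) d (decD n q d)
      ((d q : ℤ) - 1) := by
  have h1 : ∀ k, decD n q d k ≤ 2 := by
    intro k; unfold decD; have := hd k; have := hd q; split_ifs <;> omega
  have h := step_inc P hnq h1 (fun k a b => by
    unfold decD; rw [if_neg (by omega), if_pos b])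
    (by unfold decD; have := hd q; rw [if_neg (by omega), if_neg (by omega), if_pos rfl]; omega)
  have e : incD n q (decD n q d) = d := by
    funext k
    unfold incD decD
    by_cases a : k < n
    · simp [a]
    · by_cases b : k < q
      · simp [a, b, h2 k (by omega) b]
      · by_cases c : k = q
        · subst c; simp [a]; omega
        · simp [a, b, c]
  rw [e] at h
  have h' := h.symm h1
  convert h' using 1
  unfold decD; rw [if_neg (by omega), if_neg (by omega), if_pos rfl]
  push_cast [hq]
  omega

theorem sum_spa (P : NFCseq) {n L q : ℕ} (hsp : ∀ k, n < k → k < L → ¬ IsSp P k) (hnq : n ≤ q)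
    (hq : q < L) : ∑ k ∈ Finset.Ico n (q + 1), (P.spa k : ℤ) = P.spa n := by
  rw [Finset.sum_eq_sum_Ico_succ_bot (by omega), Finset.sum_eq_zero, add_zero]
  intro k hk
  obtain ⟨a, b⟩ := Finset.mem_Ico.1 hk
  rw [spa_eq_zero P (hsp k (by omega) (by omega))]; rfl

/-- The first rank from `n` on at which the digit differs from `c`. -/
theorem first_ne {d : ℕ → ℕ} {n L c : ℕ} (h : ∃ k, n ≤ k ∧ k < L ∧ d k ≠ c) :
    ∃ q, n ≤ q ∧ q < L ∧ d q ≠ c ∧ ∀ k, n ≤ k → k < q → d k = c := by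
  obtain ⟨h1, h2, h3⟩ := Nat.find_spec h
  refine ⟨Nat.find h, h1, h2, h3, fun k a b => ?_⟩
  by_contra hk
  exact Nat.find_min h b ⟨a, by omega, hk⟩

theorem incS (P : NFCseq) {n L : ℕ} (hsp : ∀ k, n < k → k < L → ¬ IsSp P k)
    {d : ℕ → ℕ} (hd : ∀ k, d k ≤ 2) (h : ∃ k, n ≤ k ∧ k < L ∧ d k ≠ 2) :
    ∃ (c : ℕ) (d' : ℕ → ℕ), c < 2 ∧ Step P (P.hgt n + P.spa n) d d' (-c) ∧
      (∀ k < n, d' k = d k) ∧ d' n = (d n + 1) % 3 ∧ (d n ≠ 2 → c = d n) := by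
  obtain ⟨q, h1, h2, h3, h4⟩ := first_ne h
  have hdq := hd q
  refine ⟨d q, incD n q d, by omega, ?_, fun k hk => if_pos hk, ?_, fun hn => ?_⟩
  · have := step_inc P h1 hd h4 (by omega)
    rwa [sum_spa P hsp h1 h2] at this
  · unfold incD
    rcases h1.eq_or_lt with rfl | hlt
    · simp; omega
    · simp [hlt, h4 n le_rfl hlt]
  · rcases h1.eq_or_lt with rfl | hlt
    · rfl
    · exact absurd (h4 n le_rfl hlt) hn

theorem decS (P : NFCseq) {n L : ℕ} (hsp : ∀ k, n < k → k < L → ¬ IsSp P k)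
    {d : ℕ → ℕ} (hd : ∀ k, d k ≤ 2) (h : ∃ k, n ≤ k ∧ k < L ∧ d k ≠ 0) :
    ∃ (c : ℕ) (d' : ℕ → ℕ), c < 2 ∧ Step P (-(P.hgt n + P.spa n)) d d' c ∧
      (∀ k < n, d' k = d k) ∧ d' n = (d n + 2) % 3 ∧ (d n ≠ 0 → c = d n - 1) := by
  obtain ⟨q, h1, h2, h3, h4⟩ := first_ne h
  have hdq := hd q
  refine ⟨d q - 1, decD n q d, by omega, ?_, fun k hk => if_pos hk, ?_, fun hn => ?_⟩
  · have := step_dec P h1 hd h4 (by omega)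
    rw [sum_spa P hsp h1 h2] at this
    rwa [Nat.cast_sub (by omega), Nat.cast_one]
  · unfold decD
    rcases h1.eq_or_lt with rfl | hlt
    · simp; omega
    · simp [hlt, h4 n le_rfl hlt]
  · rcases h1.eq_or_lt with rfl | hlt
    · rfl
    · exact absurd (h4 n le_rfl hlt) hn

/-- The displacements `h + s + 1`, `2(h + s) + 1`, `-(h + s)`, `-2(h + s) - 1` (where `h` is the
height of tower `n` and `s` the number of spacers above its first subcolumn) by which
desynchronized coordinates are separated. -/
def tauO (P : NFCseq) (n : ℕ) (o : Fin 4) : ℤ :=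
  ![(P.hgt n + P.spa n : ℤ) + 1, 2 * (P.hgt n + P.spa n : ℤ) + 1, -(P.hgt n + P.spa n : ℤ),
    -(2 * (P.hgt n + P.spa n : ℤ)) - 1] o

/-- The displacement `τ` moves, in tower `n`, the coordinates in `G` by one level and fixes the
other coordinates in `H`, and acts on the `n`-th digits by a common translation. -/
def UsD {ι : Type} (P : NFCseq) (H : Finset ι) (δ : ι → ℕ → ℕ) (n : ℕ) (τ : ℤ) (G : Finset ι) :
    Prop :=
  G ⊆ H ∧ G.Nonempty ∧ G ≠ H ∧ ∃ δ' : ι → ℕ → ℕ,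
    (∀ i ∈ H, Step P τ (δ i) (δ' i) (if i ∈ G then 1 else 0) ∧ ∀ k < n, δ' i k = δ i k) ∧
    ∃ c, ∀ i ∈ H, δ' i n = (δ i n + c) % 3

variable {ι : Type}

theorem usD_mk (P : NFCseq) {H : Finset ι} {δ : ι → ℕ → ℕ} {n : ℕ} (o : Fin 4) (p : ι → Prop)
    (c : ℕ) (h1 : ∃ i ∈ H, p i) (h0 : ∃ i ∈ H, ¬ p i)
    (h : ∀ i ∈ H, ∃ d', Step P (tauO P n o) (δ i) d' (if p i then 1 else 0) ∧
      (∀ k < n, d' k = δ i k) ∧ d' n = (δ i n + c) % 3) :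
    ∃ o : Fin 4, ∃ G, UsD P H δ n (tauO P n o) G := by
  refine ⟨o, H.filter p, Finset.filter_subset _ _, ?_, ?_, ?_⟩
  · obtain ⟨i, a, b⟩ := h1; exact ⟨i, Finset.mem_filter.2 ⟨a, b⟩⟩
  · obtain ⟨i, a, b⟩ := h0
    intro e; rw [← e] at a; exact b (Finset.mem_filter.1 a).2
  · choose! d' hd' using h
    refine ⟨d', fun i hi => ⟨?_, (hd' i hi).2.1⟩, c, fun i hi => (hd' i hi).2.2⟩
    have := (hd' i hi).1
    simpa [hi] using this

/-- Desynchronization at rank `n` is usable as soon as no carry (or no borrow) goes up to the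
next special rank. -/
theorem use1 (P : NFCseq) {H : Finset ι} {δ : ι → ℕ → ℕ} (hδ : ∀ i k, δ i k ≤ 2) {n L : ℕ}
    (hsp : ∀ k, n < k → k < L → ¬ IsSp P k) (hnL : n < L)
    (hns : ∃ i ∈ H, ∃ j ∈ H, δ i n ≠ δ j n)
    (hq : (∀ i ∈ H, ∃ k, n ≤ k ∧ k < L ∧ δ i k ≠ 2) ∨ ∀ i ∈ H, ∃ k, n ≤ k ∧ k < L ∧ δ i k ≠ 0) :
    ∃ o : Fin 4, ∃ G, UsD P H δ n (tauO P n o) G := by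
  obtain ⟨i₀, hi₀, j₀, hj₀, hij⟩ := hns
  rcases hq with hq | hq
  · choose! c d' hc hst hlt hn hcn using fun i (hi : i ∈ H) => incS P hsp (hδ i) (hq i hi)
    by_cases h1 : ∃ i ∈ H, c i = 0
    · by_cases h0 : ∃ i ∈ H, ¬ c i = 0
      · refine usD_mk P 0 (fun i => c i = 0) 1 h1 h0 fun i hi => ⟨d' i, ?_, hlt i hi, hn i hi⟩
        refine (hst i hi).shift ?_
        have := hc i hi
        rcases (by omega : c i = 0 ∨ c i = 1) with e | e <;> simp [e, tauO]
      · push Not at h0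
        -- all the first digits different from `2` vanish: two additions separate `0` from `2`
        have h02 : ∀ i ∈ H, δ i n = 0 ∨ δ i n = 2 := fun i hi => by
          by_contra hne; push Not at hne
          have := hcn i hi hne.2; rw [h0 i hi] at this; omega
        have e1 := h02 i₀ hi₀
        have e2 := h02 j₀ hj₀
        refine usD_mk P 1 (fun i => δ i n = 2) 2 ?_ ?_ fun i hi => ?_
        · rcases e1 with e1 | e1
          · exact ⟨j₀, hj₀, by omega⟩
          · exact ⟨i₀, hi₀, e1⟩
        · rcases e1 with e1 | e1
          · exact ⟨i₀, hi₀, by omega⟩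
          · exact ⟨j₀, hj₀, by omega⟩
        · have hn' := hn i hi
          obtain ⟨c2, d2, -, b2, b3, b4, b5⟩ := incS P hsp (hst i hi).le
            ⟨n, le_rfl, hnL, by have := h02 i hi; omega⟩
          have hc2 := b5 (by have := h02 i hi; omega)
          refine ⟨d2, ((hst i hi).trans b2).shift ?_, fun k hk => (b3 k hk).trans (hlt i hi k hk),
            by omega⟩
          rw [h0 i hi]
          rcases h02 i hi with e | e
          · have : c2 = 1 := by omega
            simp [this, e, tauO]; ring
          · have : c2 = 0 := by omega
            simp [this, e, tauO]; ring
    · push Not at h1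
      have h12 : ∀ i ∈ H, δ i n = 1 ∨ δ i n = 2 := fun i hi => by
        by_contra hne; push Not at hne
        have := hcn i hi hne.2; have := hc i hi; have := h1 i hi; omega
      have e1 := h12 i₀ hi₀
      have e2 := h12 j₀ hj₀
      refine usD_mk P 2 (fun i => δ i n = 2) 2 ?_ ?_ fun i hi => ?_
      · rcases e1 with e1 | e1
        · exact ⟨j₀, hj₀, by omega⟩
        · exact ⟨i₀, hi₀, e1⟩
      · rcases e1 with e1 | e1
        · exact ⟨i₀, hi₀, by omega⟩
        · exact ⟨j₀, hj₀, by omega⟩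
      · obtain ⟨c2, d2, -, b2, b3, b4, b5⟩ := decS P hsp (hδ i)
          ⟨n, le_rfl, hnL, by have := h12 i hi; omega⟩
        have hc2 := b5 (by have := h12 i hi; omega)
        refine ⟨d2, b2.shift ?_, b3, b4⟩
        rcases h12 i hi with e | e <;> simp [hc2, e, tauO]
  · choose! c d' hc hst hlt hn hcn using fun i (hi : i ∈ H) => decS P hsp (hδ i) (hq i hi)
    by_cases h1 : ∃ i ∈ H, c i = 1
    · by_cases h0 : ∃ i ∈ H, ¬ c i = 1
      · refine usD_mk P 2 (fun i => c i = 1) 2 h1 h0 fun i hi => ⟨d' i, ?_, hlt i hi, hn i hi⟩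
        refine (hst i hi).shift ?_
        have := hc i hi
        rcases (by omega : c i = 0 ∨ c i = 1) with e | e <;> simp [e, tauO]
      · push Not at h0
        have h02 : ∀ i ∈ H, δ i n = 0 ∨ δ i n = 2 := fun i hi => by
          by_contra hne; push Not at hne
          have := hcn i hi hne.1; have := h0 i hi; have := hδ i n; omega
        have e1 := h02 i₀ hi₀
        have e2 := h02 j₀ hj₀
        refine usD_mk P 3 (fun i => δ i n = 0) 1 ?_ ?_ fun i hi => ?_
        · rcases e1 with e1 | e1
          · exact ⟨i₀, hi₀, e1⟩
          · exact ⟨j₀, hj₀, by omega⟩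
        · rcases e1 with e1 | e1
          · exact ⟨j₀, hj₀, by omega⟩
          · exact ⟨i₀, hi₀, by omega⟩
        · have hn' := hn i hi
          obtain ⟨c2, d2, -, b2, b3, b4, b5⟩ := decS P hsp (hst i hi).le
            ⟨n, le_rfl, hnL, by have := h02 i hi; omega⟩
          have hc2 := b5 (by have := h02 i hi; omega)
          refine ⟨d2, ((hst i hi).trans b2).shift ?_, fun k hk => (b3 k hk).trans (hlt i hi k hk),
            by omega⟩
          rw [h0 i hi]
          rcases h02 i hi with e | e
          · have : c2 = 1 := by omega
            simp [this, e, tauO]; ring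
          · have : c2 = 0 := by omega
            simp [this, e, tauO]; ring
    · push Not at h1
      have h01 : ∀ i ∈ H, δ i n = 0 ∨ δ i n = 1 := fun i hi => by
        by_contra hne; push Not at hne
        have := hcn i hi hne.1; have := hc i hi; have := h1 i hi; have := hδ i n; omega
      have e1 := h01 i₀ hi₀
      have e2 := h01 j₀ hj₀
      refine usD_mk P 0 (fun i => δ i n = 0) 1 ?_ ?_ fun i hi => ?_
      · rcases e1 with e1 | e1
        · exact ⟨i₀, hi₀, e1⟩
        · exact ⟨j₀, hj₀, by omega⟩
      · rcases e1 with e1 | e1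
        · exact ⟨j₀, hj₀, by omega⟩
        · exact ⟨i₀, hi₀, by omega⟩
      · obtain ⟨c2, d2, -, b2, b3, b4, b5⟩ := incS P hsp (hδ i)
          ⟨n, le_rfl, hnL, by have := h01 i hi; omega⟩
        have hc2 := b5 (by have := h01 i hi; omega)
        refine ⟨d2, b2.shift ?_, b3, b4⟩
        rcases h01 i hi with e | e <;> simp [hc2, e, tauO]

end Chacon

/-! ### Desynchronization blocked by a carry and a borrow through a special rank -/

namespace Chacon

theorem exists_nseq_gt (P : NFCseq) (n : ℕ) : ∃ l, n < P.nseq l :=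
  ⟨n + 1, by have := (nseq_strictMono P).le_apply (x := n + 1); omega⟩

/-- The least `ℓ` with `n < n_ℓ`. -/
def nx (P : NFCseq) (n : ℕ) : ℕ := Nat.find (exists_nseq_gt P n)

/-- The first special rank after `n`. -/
def Lx (P : NFCseq) (n : ℕ) : ℕ := P.nseq (nx P n)

/-- The rank of the tower whose height is the number of spacers inserted at rank `Lx P n`. -/
def mx (P : NFCseq) (n : ℕ) : ℕ := Lx P n - P.kOf (nx P n)

theorem lt_Lx (P : NFCseq) (n : ℕ) : n < Lx P n := Nat.find_spec (exists_nseq_gt P n)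

theorem nx_pos (P : NFCseq) (n : ℕ) : 1 ≤ nx P n := by
  by_contra h
  have h1 := lt_Lx P n
  unfold Lx at h1
  rw [(by omega : nx P n = 0), P.nseq_zero] at h1; omega

theorem nseq_pred_le (P : NFCseq) (n : ℕ) : P.nseq (nx P n - 1) ≤ n := by
  have := nx_pos P n
  have := Nat.find_min (exists_nseq_gt P n) (m := nx P n - 1) (by unfold nx at *; omega)
  omega

theorem nx_eq (P : NFCseq) {p l : ℕ} (hl : 1 ≤ l) (h1 : P.nseq (l - 1) ≤ p) (h2 : p < P.nseq l) :
    nx P p = l := by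
  apply le_antisymm
  · exact Nat.find_min' (exists_nseq_gt P p) h2
  · by_contra h
    have h3 : P.nseq (nx P p) ≤ P.nseq (l - 1) := (nseq_strictMono P).monotone (by omega)
    have := lt_Lx P p
    unfold Lx at this; omega

theorem not_sp_between (P : NFCseq) {l k : ℕ} (h1 : P.nseq l < k) (h2 : k < P.nseq (l + 1)) :
    ¬ IsSp P k := by
  rintro ⟨i, -, rfl⟩
  have h1 := (nseq_strictMono P).lt_iff_lt.1 h1
  have h2 := (nseq_strictMono P).lt_iff_lt.1 h2
  omega

theorem not_sp_lt_Lx (P : NFCseq) {n k : ℕ} (h1 : n < k) (h2 : k < Lx P n) : ¬ IsSp P k := by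
  have h3 := nseq_pred_le P n
  have h4 := nx_pos P n
  unfold Lx at h2
  exact not_sp_between P (l := nx P n - 1) (by omega) (by rwa [Nat.sub_add_cancel h4])

theorem spa_Lx (P : NFCseq) (n : ℕ) : P.spa (Lx P n) = P.hgt (mx P n) := spa_nseq P (nx_pos P n)

theorem mx_gt (P : NFCseq) (n : ℕ) : P.nseq (nx P n - 1) < mx P n := by
  have := nseq_gap P (nx_pos P n); unfold mx Lx; omega

theorem sum_spa_cross (P : NFCseq) {n L L' q : ℕ} (hn : ¬ IsSp P n)
    (hsp : ∀ k, n < k → k < L → ¬ IsSp P k) (hsp' : ∀ k, L < k → k < L' → ¬ IsSp P k)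
    (hnL : n < L) (hLq : L ≤ q) (hq : q < L') :
    ∑ k ∈ Finset.Ico n (q + 1), (P.spa k : ℤ) = P.spa L := by
  rw [← Finset.sum_Ico_consecutive _ hnL.le (by omega : L ≤ q + 1), sum_spa P hsp' hLq hq,
    Finset.sum_eq_zero, zero_add]
  intro k hk
  obtain ⟨a, b⟩ := Finset.mem_Ico.1 hk
  rcases a.eq_or_lt with rfl | a
  · rw [spa_eq_zero P hn]; rfl
  · rw [spa_eq_zero P (hsp k a b)]; rfl

/-- The two special ranks `L < L'` around a block, and the height `h_m` of the spacers at `L`. -/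
structure Block (P : NFCseq) (l₀ L L' m : ℕ) : Prop where
  sp : ∀ k, l₀ < k → k < L → ¬ IsSp P k
  sp' : ∀ k, L < k → k < L' → ¬ IsSp P k
  hm : P.spa L = P.hgt m
  m_gt : l₀ < m
  m_lt : m < L

/-- Addition of one at rank `n` when the carry crosses the special rank `L`. -/
theorem inc_pass {P : NFCseq} {l₀ L L' m n : ℕ} (B : Block P l₀ L L' m) (hn : l₀ < n) (hnL : n < L)
    {d : ℕ → ℕ} (hd : ∀ k, d k ≤ 2) (hp : ∀ k, n ≤ k → k < L → d k = 2)
    (hq : ∃ k, L ≤ k ∧ k < L' ∧ d k ≠ 2) :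
    ∃ (d' : ℕ → ℕ) (r : ℤ), Step P (P.hgt n + P.hgt m) d d' r ∧ -2 ≤ r ∧ r ≤ 2 ∧
      (∀ k < n, d' k = d k) ∧ ∀ k, n ≤ k → k < L → d' k = 0 := by
  obtain ⟨q, h1, h2, h3, h4⟩ := first_ne hq
  have hdq := hd q
  refine ⟨incD n q d, -d q, ?_, by omega, by omega, fun k hk => if_pos hk, fun k a b => ?_⟩
  · have := step_inc P (n := n) (q := q) (by omega) hd (fun k a b => by
      by_cases hk : k < L
      · exact hp k a hk
      · exact h4 k (by omega) b) (by omega)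
    rwa [sum_spa_cross P (B.sp n hn hnL) (fun k a b => B.sp k (by omega) b) B.sp' hnL h1 h2,
      B.hm] at this
  · unfold incD; rw [if_neg (by omega), if_pos (by omega)]

theorem dec_pass {P : NFCseq} {l₀ L L' m n : ℕ} (B : Block P l₀ L L' m) (hn : l₀ < n) (hnL : n < L)
    {d : ℕ → ℕ} (hd : ∀ k, d k ≤ 2) (hp : ∀ k, n ≤ k → k < L → d k = 0)
    (hq : ∃ k, L ≤ k ∧ k < L' ∧ d k ≠ 0) :
    ∃ (d' : ℕ → ℕ) (r : ℤ), Step P (-(P.hgt n + P.hgt m)) d d' r ∧ -2 ≤ r ∧ r ≤ 2 ∧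
      (∀ k < n, d' k = d k) ∧ ∀ k, n ≤ k → k < L → d' k = 2 := by
  obtain ⟨q, h1, h2, h3, h4⟩ := first_ne hq
  have hdq := hd q
  refine ⟨decD n q d, d q - 1, ?_, by omega, by omega, fun k hk => if_pos hk, fun k a b => ?_⟩
  · have := step_dec P (n := n) (q := q) (by omega) hd (fun k a b => by
      by_cases hk : k < L
      · exact hp k a hk
      · exact h4 k (by omega) b) (by omega)
    rwa [sum_spa_cross P (B.sp n hn hnL) (fun k a b => B.sp k (by omega) b) B.sp' hnL h1 h2,
      B.hm] at this
  · unfold decD; rw [if_neg (by omega), if_pos (by omega)]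

theorem inc_loc {P : NFCseq} {l₀ L L' m n q : ℕ} (B : Block P l₀ L L' m) (hn : l₀ < n)
    (hnq : n ≤ q) (hqL : q < L) {d : ℕ → ℕ} (hd : ∀ k, d k ≤ 2)
    (hp : ∀ k, n ≤ k → k < q → d k = 2) (hq : d q ≠ 2) :
    Step P (P.hgt n) d (incD n q d) (-d q) := by
  have hdq := hd q
  have := step_inc P hnq hd hp (by omega)
  rwa [sum_spa P (fun k a b => B.sp k (by omega) b) hnq hqL, spa_eq_zero P (B.sp n hn (by omega)),
    Nat.cast_zero, add_zero] at this

theorem dec_loc {P : NFCseq} {l₀ L L' m n q : ℕ} (B : Block P l₀ L L' m) (hn : l₀ < n)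
    (hnq : n ≤ q) (hqL : q < L) {d : ℕ → ℕ} (hd : ∀ k, d k ≤ 2)
    (hp : ∀ k, n ≤ k → k < q → d k = 0) (hq : d q ≠ 0) :
    Step P (-P.hgt n) d (decD n q d) (d q - 1) := by
  have := step_dec P hnq hd hp (by omega)
  rwa [sum_spa P (fun k a b => B.sp k (by omega) b) hnq hqL, spa_eq_zero P (B.sp n hn (by omega)),
    Nat.cast_zero, add_zero] at this

/-- The move `h_M + h_m` with `m < M < L`: either the carry crosses `L`, or a second addition
at rank `m` is available. -/
theorem move1 {P : NFCseq} {l₀ L L' m M : ℕ} (B : Block P l₀ L L' m) (hM : m < M) (hML : M < L)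
    {d : ℕ → ℕ} (hd : ∀ k, d k ≤ 2) (hq : ∃ k, L ≤ k ∧ k < L' ∧ d k ≠ 2)
    (hex : ¬ (d M = 1 ∧ ∀ k, m < k → k < L → k ≠ M → d k = 2)) :
    ∃ (d' : ℕ → ℕ) (r : ℤ), Step P (P.hgt M + P.hgt m) d d' r ∧ -2 ≤ r ∧ r ≤ 2 ∧
      (∀ k < m, d' k = d k) ∧ (∃ k, m ≤ k ∧ k < L ∧ d' k ≠ 2) ∧
      ((∀ k, m ≤ k → k < L → d k = 2) → d' m = 2) ∧
      ((∀ k, m ≤ k → k < L → d k = 0) → d' m = 1) := by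
  have hm := B.m_gt
  by_cases hp : ∀ k, M ≤ k → k < L → d k = 2
  · obtain ⟨d', r, h1, h2, h3, h4, h5⟩ := inc_pass B (by omega) hML hd hp hq
    refine ⟨d', r, h1, h2, h3, fun k hk => h4 k (by omega), ⟨M, hM.le, hML, ?_⟩, fun h => ?_,
      fun h => ?_⟩
    · rw [h5 M le_rfl hML]; omega
    · rw [h4 m hM, h m le_rfl (by omega)]
    · have := hp M le_rfl hML; rw [h M hM.le hML] at this; omega
  · push Not at hp
    obtain ⟨q, h1, h2, h3, h4⟩ := first_ne hp
    have s1 := inc_loc B (by omega) h1 h2 hd h4 h3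
    set d1 := incD M q d with hd1
    have hd1le := s1.le
    have hdq := hd q
    have low : ∀ k < M, d1 k = d k := fun k hk => if_pos hk
    have key : ∃ k, m < k ∧ k < L ∧ d1 k ≠ 2 := by
      by_contra hk
      push Not at hk
      have hqM : q = M := by
        by_contra hne
        have := hk M hM hML
        rw [hd1] at this; unfold incD at this
        rw [if_neg (by omega), if_pos (by omega)] at this; omega
      subst hqM
      apply hex
      constructor
      · have := hk q hM hML
        rw [hd1] at this; unfold incD at this
        simp at this; omega
      · intro k a b c
        have := hk k a b
        rw [hd1] at this; unfold incD at this
        by_cases hk : k < q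
        · simpa [hk] using this
        · simpa [hk, c] using this
    obtain ⟨k₀, a0, b0, c0⟩ := key
    obtain ⟨p, p1, p2, p3, p4⟩ := first_ne (⟨k₀, a0.le, b0, c0⟩ : ∃ k, m ≤ k ∧ k < L ∧ d1 k ≠ 2)
    have s2 := inc_loc B hm p1 p2 hd1le p4 p3
    have hp1 := hd1le p
    refine ⟨_, _, s1.trans s2, by omega, by omega, fun k hk => ?_, ?_, fun h => ?_, fun h => ?_⟩
    · unfold incD; rw [if_pos hk, low k (by omega)]
    · rcases p1.eq_or_lt with rfl | hlt
      · refine ⟨k₀, a0.le, b0, ?_⟩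
        unfold incD; rw [if_neg (by omega), if_neg (by omega), if_neg (by omega)]; exact c0
      · refine ⟨m, le_rfl, by omega, ?_⟩
        unfold incD; rw [if_neg (by omega), if_pos (by omega)]; omega
    · exact absurd (h q (by omega) h2) h3
    · have hdm : d1 m = 0 := by rw [low m hM, h m le_rfl (by omega)]
      have : p = m := by
        by_contra hne
        have := p4 m le_rfl (by omega); omega
      subst this
      unfold incD; simp [hdm]

/-- The move `h_n + h_m` with `m < n < L`, when the common digits on `[m, n)` are not all `2`. -/
theorem move2 {P : NFCseq} {l₀ L L' m n p : ℕ} (B : Block P l₀ L L' m) (hmn : m < n) (hnL : n < L)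
    {d : ℕ → ℕ} (hd : ∀ k, d k ≤ 2) (hq : ∃ k, L ≤ k ∧ k < L' ∧ d k ≠ 2)
    (hmp : m ≤ p) (hpn : p < n) (hdp : d p ≠ 2) (hlow : ∀ k, m ≤ k → k < p → d k = 2) :
    ∃ (d' : ℕ → ℕ) (r : ℤ), Step P (P.hgt n + P.hgt m) d d' r ∧ -2 ≤ r ∧ r ≤ 2 ∧
      (∀ k < m, d' k = d k) ∧
      ((∀ k, n ≤ k → k < L → d k = 2) → d' m = d m ∧ d' n = 0) ∧
      ((¬ ∀ k, n ≤ k → k < L → d k = 2) → d' m = (d m + 1) % 3) ∧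
      ((∀ k, n ≤ k → k < L → d k = 0) → d' n = 1 ∧ ∀ k, n < k → k < L → d' k = 0) := by
  have hm := B.m_gt
  have hpd := hd p
  by_cases hp : ∀ k, n ≤ k → k < L → d k = 2
  · obtain ⟨d', r, h1, h2, h3, h4, h5⟩ := inc_pass B (by omega) hnL hd hp hq
    refine ⟨d', r, h1, h2, h3, fun k hk => h4 k (by omega), fun _ => ⟨h4 m hmn, h5 n le_rfl hnL⟩,
      fun h => absurd hp h, fun h => ?_⟩
    have := hp n le_rfl hnL
    rw [h n le_rfl hnL] at this; omega
  · have hp' := hp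
    push Not at hp'
    obtain ⟨q, h1, h2, h3, h4⟩ := first_ne hp'
    have s1 := inc_loc B (by omega) h1 h2 hd h4 h3
    have low : ∀ k < n, incD n q d k = d k := fun k hk => if_pos hk
    have s2 := inc_loc B hm hmp (by omega : p < L) s1.le
      (fun k a b => by rw [low k (by omega)]; exact hlow k a b) (by rwa [low p hpn])
    have hp1 := s1.le p
    have hdq := hd q
    rw [low p hpn] at s2
    refine ⟨_, _, s1.trans s2, by omega, by omega, fun k hk => ?_, fun h => absurd h hp,
      fun _ => ?_, fun h => ?_⟩
    · rw [incD, if_pos hk, low k (by omega)]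
    · rw [incD, if_neg (by omega)]
      rcases hmp.eq_or_lt with rfl | hlt
      · simp [low m hmn]; omega
      · simp [hlt, hlow m le_rfl hlt]
    · have : q = n := by
        by_contra hne
        have := h4 n le_rfl (by omega)
        rw [h n le_rfl hnL] at this; omega
      subst this
      constructor
      · simp [incD, hpn.not_gt, hpn.ne', hmn.not_gt, h q le_rfl hnL]
      · intro k a b
        have e1 : ¬ k < m := by omega
        have e2 : ¬ k < p := by omega
        have e3 : ¬ k = p := by omega
        have e4 : ¬ k < q := by omega
        have e5 : ¬ k = q := by omega
        simp [incD, e1, e2, e3, e4, e5, h k a.le b]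

/-- The move `-(h_n + h_m)` with `m < n < L`, when the common digits on `[m, n)` are all `2`. -/
theorem move3 {P : NFCseq} {l₀ L L' m n : ℕ} (B : Block P l₀ L L' m) (hmn : m < n) (hnL : n < L)
    {d : ℕ → ℕ} (hd : ∀ k, d k ≤ 2) (hq : ∃ k, L ≤ k ∧ k < L' ∧ d k ≠ 0) (hdm : d m = 2) :
    ∃ (d' : ℕ → ℕ) (r : ℤ), Step P (-(P.hgt n + P.hgt m)) d d' r ∧ -2 ≤ r ∧ r ≤ 2 ∧
      (∀ k < m, d' k = d k) ∧
      ((∀ k, n ≤ k → k < L → d k = 0) → d' m = 2) ∧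
      ((¬ ∀ k, n ≤ k → k < L → d k = 0) → d' m = 1) ∧
      ((∀ k, n ≤ k → k < L → d k = 2) → d' n = 1 ∧ ∀ k, n < k → k < L → d' k = 2) := by
  have hm := B.m_gt
  by_cases hp : ∀ k, n ≤ k → k < L → d k = 0
  · obtain ⟨d', r, h1, h2, h3, h4, h5⟩ := dec_pass B (by omega) hnL hd hp hq
    refine ⟨d', r, h1, h2, h3, fun k hk => h4 k (by omega), fun _ => (h4 m hmn).trans hdm,
      fun h => absurd hp h, fun h => ?_⟩
    have := hp n le_rfl hnL
    rw [h n le_rfl hnL] at this; omega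
  · have hp' := hp
    push Not at hp'
    obtain ⟨q, h1, h2, h3, h4⟩ := first_ne hp'
    have s1 := dec_loc B (by omega) h1 h2 hd h4 h3
    have low : ∀ k < n, decD n q d k = d k := fun k hk => if_pos hk
    have s2 := dec_loc B hm le_rfl (by omega : m < L) s1.le
      (fun k a b => by omega) (by rw [low m hmn]; omega)
    have hdq := hd q
    rw [low m hmn, hdm] at s2
    refine ⟨_, _, (s1.trans s2).shift (κ' := -(P.hgt n + P.hgt m)) (r' := d q) ?_, by omega,
      by omega, fun k hk => ?_, fun h => absurd h hp, fun _ => ?_, fun h => ?_⟩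
    · push_cast; ring
    · rw [decD, if_pos hk, low k (by omega)]
    · rw [decD, if_neg (by omega)]
      simp [low m hmn, hdm]
    · have : q = n := by
        by_contra hne
        have := h4 n le_rfl (by omega)
        rw [h n le_rfl hnL] at this; omega
      subst this
      constructor
      · simp [decD, hmn.not_gt, hmn.ne', h q le_rfl hnL]
      · intro k a b
        have e1 : ¬ k < m := by omega
        have e3 : ¬ k = m := by omega
        have e4 : ¬ k < q := by omega
        have e5 : ¬ k = q := by omega
        simp [decD, e1, e3, e4, e5, h k a.le b]

variable {ι : Type}

/-- The finitely many kinds of moves used on blocked points. -/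
abbrev Opt (ι : Type) [Fintype ι] : Type := Fin (Fintype.card ι + 1) ⊕ (ι ⊕ ι)

/-- The displacement of each kind of move, as a function of the rank of first desynchronization. -/
def tauB (P : NFCseq) [Fintype ι] (n : ℕ) : Opt ι → ℤ
  | .inl j => P.hgt (Lx P n - 1 - j) + P.hgt (mx P n)
  | .inr (.inl _) => P.hgt n + P.hgt (mx P n)
  | .inr (.inr _) => -(P.hgt n + P.hgt (mx P n))

/-- The property of the image point, first desynchronized at `p`, from which the original rank `n`
of first desynchronization can be recovered. -/
def RecD (P : NFCseq) [Fintype ι] (H : Finset ι) (n p : ℕ) (δ : ι → ℕ → ℕ) : Opt ι → Prop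
  | .inl _ => p = n
  | .inr (.inl b) => b ∈ H ∧ n < Lx P p ∧ δ b n = 1 ∧ ∀ k, n < k → k < Lx P p → δ b k = 0
  | .inr (.inr a) => a ∈ H ∧ n < Lx P p ∧ δ a n = 1 ∧ ∀ k, n < k → k < Lx P p → δ a k = 2

theorem RecD.inj {P : NFCseq} [Fintype ι] {H : Finset ι} {n n' p : ℕ} {δ : ι → ℕ → ℕ} {o : Opt ι}
    (h : RecD P H n p δ o) (h' : RecD P H n' p δ o) : n = n' := by
  rcases o with j | b | a
  · exact h.symm.trans h'
  · obtain ⟨-, h1, h2, h3⟩ := h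
    obtain ⟨-, h1', h2', h3'⟩ := h'
    rcases lt_trichotomy n n' with hl | he | hl
    · have := h3 n' hl h1'; omega
    · exact he
    · have := h3' n hl h1; omega
  · obtain ⟨-, h1, h2, h3⟩ := h
    obtain ⟨-, h1', h2', h3'⟩ := h'
    rcases lt_trichotomy n n' with hl | he | hl
    · have := h3 n' hl h1'; omega
    · exact he
    · have := h3' n hl h1; omega

/-- Among the `|ι| + 1` ranks below `L`, one avoids the exceptional pattern of each coordinate. -/
theorem exists_good_rank [Fintype ι] (δ : ι → ℕ → ℕ) {m L : ℕ}
    (h : m + Fintype.card ι + 2 ≤ L) : ∃ j : Fin (Fintype.card ι + 1), ∀ i,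
      ¬ (δ i (L - 1 - j) = 1 ∧ ∀ k, m < k → k < L → k ≠ L - 1 - j → δ i k = 2) := by
  by_contra hc
  push Not at hc
  choose f hf using hc
  obtain ⟨j, j', hne, he⟩ := Fintype.exists_ne_map_eq_of_card_lt f (by simp)
  have h1 := hf j
  have h2 := hf j'
  rw [← he] at h2
  have : (j : ℕ) ≠ j' := fun e => hne (Fin.ext e)
  have := j.2
  have := j'.2
  have := h1.2 (L - 1 - j') (by omega) (by omega) (by omega)
  omega

/-- A blocked desynchronized point is moved to a point whose first desynchronization is usable. -/
theorem blocked (P : NFCseq) [Fintype ι] {H : Finset ι} {δ : ι → ℕ → ℕ} (hδ : ∀ i k, δ i k ≤ 2)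
    {n : ℕ} (hn : P.nseq (nx P n - 1) < n) (hk : Fintype.card ι + 2 ≤ P.kOf (nx P n))
    (hbc : ∀ i ∈ H, ∀ c ∈ ({0, 2} : Set ℕ),
      ∃ k, Lx P n ≤ k ∧ k < P.nseq (nx P n + 1) ∧ δ i k ≠ c)
    (hsync : ∀ k, mx P n ≤ k → k < n → ∀ i ∈ H, ∀ j ∈ H, δ i k = δ j k)
    {a b : ι} (ha : a ∈ H) (hb : b ∈ H) (ha2 : ∀ k, n ≤ k → k < Lx P n → δ a k = 2)
    (hb0 : ∀ k, n ≤ k → k < Lx P n → δ b k = 0) :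
    ∃ (o' : Opt ι) (δ' : ι → ℕ → ℕ) (p : ℕ), P.nseq (nx P n - 1) < p ∧ p ≤ n ∧
      (∀ i ∈ H, ∃ r : ℤ, Step P (tauB P n o') (δ i) (δ' i) r ∧ -2 ≤ r ∧ r ≤ 2 ∧
        ∀ k < p, δ' i k = δ i k) ∧
      (∃ i ∈ H, ∃ j ∈ H, δ' i p ≠ δ' j p) ∧
      (∃ (o : Fin 4) (G : Finset ι), UsD P H δ' p (tauO P p o) G) ∧ RecD P H n p δ' o' := by
  have hl1 := nx_pos P n
  have hnL := lt_Lx P n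
  have hmg := mx_gt P n
  have hgap := nseq_gap P hl1
  have hml : mx P n < Lx P n := by unfold mx Lx at *; omega
  have B : Block P (P.nseq (nx P n - 1)) (Lx P n) (P.nseq (nx P n + 1)) (mx P n) := by
    refine ⟨fun k h1 h2 => ?_, fun k h1 h2 => not_sp_between P h1 h2, spa_Lx P n, hmg, hml⟩
    exact not_sp_between P h1 (by rwa [Nat.sub_add_cancel hl1])
  have hLm : mx P n + Fintype.card ι + 2 ≤ Lx P n := by unfold mx at *; omega
  -- the digits outside `H` are irrelevant, and are set to `0` to be bounded
  have fin : ∀ (o' : Opt ι) (δ' : ι → ℕ → ℕ) (p : ℕ), P.nseq (nx P n - 1) < p → p ≤ n →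
      (∀ i ∈ H, ∃ r : ℤ, Step P (tauB P n o') (δ i) (δ' i) r ∧ -2 ≤ r ∧ r ≤ 2 ∧
        ∀ k < p, δ' i k = δ i k) → (∃ i ∈ H, ∃ j ∈ H, δ' i p ≠ δ' j p) →
      ((∀ i ∈ H, ∃ k, p ≤ k ∧ k < Lx P n ∧ δ' i k ≠ 2) ∨
        ∀ i ∈ H, ∃ k, p ≤ k ∧ k < Lx P n ∧ δ' i k ≠ 0) →
      (∃ (o : Fin 4) (G : Finset ι), UsD P H δ' p (tauO P p o) G) := by
    intro o' δ' p h1 h2 h3 h4 h5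
    let δ'' : ι → ℕ → ℕ := fun i => if i ∈ H then δ' i else 0
    have e : ∀ i ∈ H, δ'' i = δ' i := fun i hi => if_pos hi
    have h6 : ∀ i k, δ'' i k ≤ 2 := by
      intro i k
      by_cases hi : i ∈ H
      · rw [e i hi]; obtain ⟨r, hr, -⟩ := h3 i hi; exact hr.le k
      · simp [δ'', hi]
    obtain ⟨o, G, g1, g2, g3, δ3, g4, c, g5⟩ := use1 P (H := H) h6 (n := p) (L := Lx P n)
      (fun k x y => B.sp k (by omega) y) (by omega)
      (by obtain ⟨i, hi, j, hj, hij⟩ := h4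
          exact ⟨i, hi, j, hj, by rwa [e i hi, e j hj]⟩)
      (by rcases h5 with h5 | h5
          · left; intro i hi; rw [e i hi]; exact h5 i hi
          · right; intro i hi; rw [e i hi]; exact h5 i hi)
    refine ⟨o, G, g1, g2, g3, δ3, fun i hi => ?_, c, fun i hi => ?_⟩
    · rw [← e i hi]; exact g4 i hi
    · rw [← e i hi]; exact g5 i hi
  rcases le_or_gt n (mx P n) with hnm | hmn
  · obtain ⟨j, hj⟩ := exists_good_rank δ hLm
    have hj2 := j.2
    choose! δ' r h1 h2 h3 h4 h5 h6 h7 using fun i (hi : i ∈ H) =>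
      move1 B (M := Lx P n - 1 - j) (by omega) (by omega) (hδ i) (hbc i hi 2 (by simp)) (hj i)
    have hst : ∀ i ∈ H, ∃ r : ℤ, Step P (tauB P n (.inl j : Opt ι)) (δ i) (δ' i) r ∧ -2 ≤ r ∧
        r ≤ 2 ∧ ∀ k < n, δ' i k = δ i k :=
      fun i hi => ⟨r i, h1 i hi, h2 i hi, h3 i hi, fun k hk => h4 i hi k (by omega)⟩
    have hun : ∃ i ∈ H, ∃ j ∈ H, δ' i n ≠ δ' j n := by
      refine ⟨a, ha, b, hb, ?_⟩
      rcases hnm.eq_or_lt with he | hlt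
      · have e1 := h6 a ha fun k x y => ha2 k (by omega) y
        have e2 := h7 b hb fun k x y => hb0 k (by omega) y
        rw [← he] at e1 e2
        omega
      · rw [h4 a ha n hlt, h4 b hb n hlt, ha2 n le_rfl hnL, hb0 n le_rfl hnL]; omega
    refine ⟨.inl j, δ', n, hn, le_rfl, hst, hun, fin (.inl j) δ' n hn le_rfl hst hun ?_, rfl⟩
    left
    intro i hi
    obtain ⟨k, x, y, z⟩ := h5 i hi
    exact ⟨k, by omega, y, z⟩
  · have hLp : Lx P (mx P n) = Lx P n := by
      unfold Lx at *
      rw [nx_eq P hl1 hmg.le hml]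
    by_cases hall : ∃ k, mx P n ≤ k ∧ k < n ∧ δ a k ≠ 2
    · obtain ⟨p, p1, p2, p3, p4⟩ := first_ne hall
      choose! δ' r h1 h2 h3 h4 h5 h6 h7 using fun i (hi : i ∈ H) =>
        move2 B hmn hnL (hδ i) (hbc i hi 2 (by simp)) p1 p2
          (by rw [hsync p p1 p2 i hi a ha]; exact p3)
          (fun k x y => by rw [hsync k x (by omega) i hi a ha]; exact p4 k x y)
      have hst : ∀ i ∈ H, ∃ r : ℤ, Step P (tauB P n (.inr (.inl b) : Opt ι)) (δ i) (δ' i) r ∧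
          -2 ≤ r ∧ r ≤ 2 ∧ ∀ k < mx P n, δ' i k = δ i k :=
        fun i hi => ⟨r i, h1 i hi, h2 i hi, h3 i hi, h4 i hi⟩
      have hnb : ¬ ∀ k, n ≤ k → k < Lx P n → δ b k = 2 := fun h => by
        have := h n le_rfl hnL; rw [hb0 n le_rfl hnL] at this; omega
      have hs := hsync (mx P n) le_rfl hmn
      have hun : ∃ i ∈ H, ∃ j ∈ H, δ' i (mx P n) ≠ δ' j (mx P n) := by
        refine ⟨a, ha, b, hb, ?_⟩
        rw [(h5 a ha ha2).1, h6 b hb hnb, hs a ha b hb]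
        have := hδ b (mx P n); omega
      refine ⟨.inr (.inl b), δ', mx P n, hmg, hmn.le, hst, hun,
        fin (.inr (.inl b)) δ' _ hmg hmn.le hst hun ?_, ?_⟩
      · by_cases hc : p = mx P n ∧ δ a (mx P n) = 1
        · right
          intro i hi
          refine ⟨mx P n, le_rfl, hml, ?_⟩
          have := hs i hi a ha
          by_cases hi2 : ∀ k, n ≤ k → k < Lx P n → δ i k = 2
          · rw [(h5 i hi hi2).1]; omega
          · rw [h6 i hi hi2]; omega
        · left
          intro i hi
          by_cases hi2 : ∀ k, n ≤ k → k < Lx P n → δ i k = 2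
          · exact ⟨n, hmn.le, hnL, by rw [(h5 i hi hi2).2]; omega⟩
          · refine ⟨mx P n, le_rfl, hml, ?_⟩
            rw [h6 i hi hi2, hs i hi a ha]
            have := hδ a (mx P n)
            rcases p1.eq_or_lt with he | hlt
            · rw [← he] at p3; omega
            · have := p4 _ le_rfl hlt; omega
      · show _ ∧ n < Lx P (mx P n) ∧ _
        rw [hLp]
        exact ⟨hb, hnL, h7 b hb hb0⟩
    · push Not at hall
      choose! δ' r h1 h2 h3 h4 h5 h6 h7 using fun i (hi : i ∈ H) =>
        move3 B hmn hnL (hδ i) (hbc i hi 0 (by simp))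
          (by rw [hsync _ le_rfl hmn i hi a ha]; exact hall _ le_rfl hmn)
      have hst : ∀ i ∈ H, ∃ r : ℤ, Step P (tauB P n (.inr (.inr a) : Opt ι)) (δ i) (δ' i) r ∧
          -2 ≤ r ∧ r ≤ 2 ∧ ∀ k < mx P n, δ' i k = δ i k :=
        fun i hi => ⟨r i, h1 i hi, h2 i hi, h3 i hi, h4 i hi⟩
      have hna : ¬ ∀ k, n ≤ k → k < Lx P n → δ a k = 0 := fun h => by
        have := h n le_rfl hnL; rw [ha2 n le_rfl hnL] at this; omega
      have hun : ∃ i ∈ H, ∃ j ∈ H, δ' i (mx P n) ≠ δ' j (mx P n) := by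
        refine ⟨a, ha, b, hb, ?_⟩
        rw [h5 b hb hb0, h6 a ha hna]; omega
      refine ⟨.inr (.inr a), δ', mx P n, hmg, hmn.le, hst, hun,
        fin (.inr (.inr a)) δ' _ hmg hmn.le hst hun ?_, ?_⟩
      · right
        intro i hi
        refine ⟨mx P n, le_rfl, hml, ?_⟩
        by_cases hi2 : ∀ k, n ≤ k → k < Lx P n → δ i k = 0
        · rw [h5 i hi hi2]; omega
        · rw [h6 i hi hi2]; omega
      · show _ ∧ n < Lx P (mx P n) ∧ _
        rw [hLp]
        exact ⟨ha, hnL, h7 a ha ha2⟩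

end Chacon

/-! ### Typical points -/

namespace Chacon

/-- Between consecutive special ranks, from the `l`-th one on, the digits of `x` are neither all
`0` nor all `2`. -/
def BCs (P : NFCseq) (l : ℕ) : Set P.Xpt :=
  {x | ∀ l', l ≤ l' → ∀ c ∈ ({0, 2} : Set ℕ),
    ∃ k, P.nseq l' ≤ k ∧ k < P.nseq (l' + 1) ∧ dig P k x ≠ c}

theorem BCs_mono (P : NFCseq) : Monotone (BCs P) :=
  fun _ _ h _ hx l' hl' => hx l' (h.trans hl')

theorem measurable_dig (P : NFCseq) (n : ℕ) : Measurable fun x : P.Xpt => dig P n x := by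
  apply measurable_to_countable'
  intro c
  exact meas_coord P (n + 1) {o | (match o with
    | none => 0
    | some j =>
      if j < P.hgt n + P.spa n then 1
      else if j < 2 * P.hgt n + 2 * P.spa n + 1 then 2
      else 3) - 1 = c}

theorem meas_BCs (P : NFCseq) (l : ℕ) : MeasurableSet (BCs P l) := by
  apply measurableSet_setOfPred.2
  refine Measurable.forall fun l' => measurable_const.imp ?_
  refine Measurable.forall fun c => measurable_const.imp ?_
  refine Measurable.exists fun k => measurable_const.and (measurable_const.and ?_)
  exact Measurable.not (measurableSet_setOfPred.1 (measurable_dig P k (measurableSet_singleton c)))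

/-- The position at a level determines the positions at all lower levels. -/
theorem down {P : NFCseq} {a b : ℕ} (hab : a ≤ b) {x y : P.Xpt} (h : x.1 b = y.1 b) :
    x.1 a = y.1 a := by
  induction b, hab using Nat.le_induction with
  | base => exact h
  | succ b hab ih => exact ih (by rw [x.2.1 b, y.2.1 b, h])

theorem mu_fin (S : NFC) (n : ℕ) (J : Finset ℕ) (hJ : ∀ j ∈ J, j < S.hgt n) :
    S.μ {x | ∃ j ∈ J, x.1 n = some j} = J.card * (3 : ℝ≥0∞)⁻¹ ^ n := by
  have : {x : S.Xpt | ∃ j ∈ J, x.1 n = some j} = ⋃ j ∈ J, S.level n j := by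
    ext x; simp [NFCseq.level]
  rw [this, measure_biUnion_finset]
  · rw [Finset.sum_congr rfl fun j hj => S.μ_level n j (hJ j hj)]
    simp
  · intro i _ j _ hij
    refine Set.disjoint_left.2 fun x hx hy => hij ?_
    have h1 : x.1 n = some i := hx
    have h2 : x.1 n = some j := hy
    rw [h1] at h2; exact Option.some.inj h2
  · intro j _; exact meas_level _ _ _

theorem mu_tower_dig (S : NFC) {N a b c : ℕ} (hN : N ≤ a) (hab : a ≤ b) (hc : c ≤ 2) :
    S.μ {x | x ∈ S.tower N ∧ ∀ k, a ≤ k → k < b → dig S.toNFCseq k x = c} ≤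
      S.μ (S.tower N) * (3 : ℝ≥0∞)⁻¹ ^ (b - a) := by
  let J := (Finset.range (S.hgt a)).filter fun j => ∃ x ∈ S.tower N, x.1 a = some j
  have hJ : S.tower N = {x | ∃ j ∈ J, x.1 a = some j} := by
    ext x
    constructor
    · intro hx
      obtain ⟨j, hj⟩ := Option.ne_none_iff_exists'.1 (some_mono hN hx)
      exact ⟨j, Finset.mem_filter.2 ⟨Finset.mem_range.2 (lt_hgt hj), x, hx, hj⟩, hj⟩
    · rintro ⟨j, hj, hx⟩
      obtain ⟨-, y, hy, hyj⟩ := Finset.mem_filter.1 hj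
      show x.1 N ≠ none
      rw [down hN (hx.trans hyj.symm)]; exact hy
  have h1 := mu_fin S a J fun j hj => Finset.mem_range.1 (Finset.mem_filter.1 hj).1
  let f : ℕ → ℕ := fun j => j + ∑ k ∈ Finset.Ico a b, off S.toNFCseq k c
  have h2 := mu_fin S b (J.image f) (by
    intro j hj
    obtain ⟨i, hi, rfl⟩ := Finset.mem_image.1 hj
    exact addr_lt hab (Finset.mem_range.1 (Finset.mem_filter.1 hi).1) fun _ => hc)
  calc _ ≤ S.μ {x | ∃ j ∈ J.image f, x.1 b = some j} := by
        refine measure_mono ?_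
        rintro x ⟨hx, hd⟩
        rw [hJ] at hx
        obtain ⟨j, hj, hxj⟩ := hx
        refine ⟨f j, Finset.mem_image.2 ⟨j, hj, rfl⟩, ?_⟩
        rw [addr hab hxj]
        congr 2
        refine Finset.sum_congr rfl fun k hk => ?_
        rw [hd k (Finset.mem_Ico.1 hk).1 (Finset.mem_Ico.1 hk).2]
    _ ≤ J.card * (3 : ℝ≥0∞)⁻¹ ^ b := by
        rw [h2]
        exact mul_le_mul_left (Nat.cast_le.2 (Finset.card_image_le (s := J) (f := f))) _
    _ = _ := by
        rw [hJ, h1, mul_assoc, ← pow_add, Nat.add_sub_cancel' hab]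

theorem mu_tower_lt (S : NFC) (N : ℕ) : S.μ (S.tower N) < ⊤ := by
  have : S.tower N ⊆ {x | ∃ j ∈ Finset.range (S.hgt N), x.1 N = some j} := by
    intro x hx
    obtain ⟨j, hj⟩ := Option.ne_none_iff_exists'.1 hx
    exact ⟨j, Finset.mem_range.2 (lt_hgt hj), hj⟩
  refine (measure_mono this).trans_lt ?_
  rw [mu_fin S N _ fun j hj => Finset.mem_range.1 hj]
  exact ENNReal.mul_lt_top (by simp) (ENNReal.pow_lt_top (by simp))

theorem mu_BC (S : NFC) : S.μ (⋃ l, BCs S.toNFCseq l)ᶜ = 0 := by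
  have key : ∀ N : ℕ, ∀ c ≤ 2, S.μ {x | ∃ᶠ i in atTop, x ∈ S.tower N ∧
      ∀ k, S.nseq (N + i) ≤ k → k < S.nseq (N + i + 1) → dig S.toNFCseq k x = c} = 0 := by
    intro N c hc
    apply measure_setOfPred_frequently_eq_zero
    have hb : ∀ i, S.μ {x | x ∈ S.tower N ∧
        ∀ k, S.nseq (N + i) ≤ k → k < S.nseq (N + i + 1) → dig S.toNFCseq k x = c} ≤
        S.μ (S.tower N) * (3 : ℝ≥0∞)⁻¹ ^ i := by
      intro i
      have hm := nseq_strictMono S.toNFCseq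
      have h1 := hm.le_apply (x := N + i)
      have h2 := S.nseq_growth (N + i + 1) (by omega)
      simp only [Nat.add_sub_cancel] at h2
      refine (mu_tower_dig S (by omega) (by omega) hc).trans ?_
      refine mul_le_mul' le_rfl ?_
      exact pow_le_pow_right_of_le_one' (a := (3 : ℝ≥0∞)⁻¹)
        (ENNReal.inv_le_one.2 (by norm_num)) (by omega)
    refine ne_top_of_le_ne_top ?_ (ENNReal.tsum_le_tsum hb)
    rw [ENNReal.tsum_mul_left, ENNReal.tsum_geometric]
    refine ENNReal.mul_ne_top (mu_tower_lt S N).ne (ENNReal.inv_ne_top.2 ?_)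
    exact (tsub_pos_of_lt (ENNReal.inv_lt_one.2 (by norm_num))).ne'
  refine measure_mono_null ?_ (measure_iUnion_null fun N =>
    measure_union_null (key N 0 (by omega)) (key N 2 le_rfl))
  intro x hx
  obtain ⟨N, hN⟩ := x.2.2
  simp only [mem_compl_iff, mem_iUnion, not_exists] at hx
  refine mem_iUnion.2 ⟨N, ?_⟩
  by_contra hcon
  simp only [mem_union, Set.mem_ofPred_eq, not_or, not_frequently, eventually_atTop] at hcon
  obtain ⟨⟨a, ha⟩, ⟨b, hb⟩⟩ := hcon
  apply hx (N + max a b)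
  intro l' hl' c hc
  obtain ⟨i, rfl⟩ : ∃ i, l' = N + i := ⟨l' - N, by omega⟩
  have e : ∀ c, ¬ (x ∈ S.tower N ∧
      ∀ k, S.nseq (N + i) ≤ k → k < S.nseq (N + i + 1) → dig S.toNFCseq k x = c) →
      ∃ k, S.nseq (N + i) ≤ k ∧ k < S.nseq (N + i + 1) ∧ dig S.toNFCseq k x ≠ c := by
    intro c h
    by_contra hne
    push Not at hne
    exact h ⟨hN, hne⟩
  rcases hc with rfl | rfl
  · exact e 0 (ha i (by omega))
  · exact e 2 (hb i (by omega))

theorem le_hgt (P : NFCseq) (n : ℕ) : n < P.hgt n := by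
  induction n with
  | zero => simp [hgt_zero]
  | succ n ih => have := hgt_lt_succ P n; omega

theorem BC_not_Oz {S : NFC} {l : ℕ} {x : S.Xpt} (hx : x ∈ BCs S.toNFCseq l) : x ∉ Oz S := by
  rintro ⟨k, rfl⟩
  have hp : ∀ k n : ℕ, k < S.hgt n → (S.T^[k] S.zeroPt).1 n = some k := by
    intro k
    induction k with
    | zero => intro n _; rfl
    | succ k ih =>
      intro n hn
      rw [Function.iterate_succ_apply']
      exact T_fwd S (ih n (by omega)) hn
  obtain ⟨m, h1, h2, h3⟩ := hx (max l k) (le_max_left _ _) 0 (by simp)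
  have h4 := (nseq_strictMono S.toNFCseq).le_apply (x := max l k)
  have h5 := le_hgt S.toNFCseq m
  apply h3
  refine dig_off S.toNFCseq (c := 0) (v := k) (by omega) (by omega) ?_
  rw [off_zero, zero_add]
  exact hp k (m + 1) (by have := hgt_lt_succ S.toNFCseq m; omega)

/-- `j` is at distance at least `E` from both ends of tower `n`. -/
def Inr (P : NFCseq) (E n : ℕ) (o : Option ℕ) : Prop := ∃ j, o = some j ∧ E ≤ j ∧ j + E < P.hgt n

theorem Inr.succ {P : NFCseq} {E n : ℕ} {x : P.Xpt} (h : Inr P E n (x.1 n)) :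
    Inr P E (n + 1) (x.1 (n + 1)) := by
  obtain ⟨j, h1, h2, h3⟩ := h
  have := off_add_lt P (dig_le P n x) h3
  exact ⟨_, (succ_of h1).2, by omega, by omega⟩

theorem Inr.mono {P : NFCseq} {E n m : ℕ} (hnm : n ≤ m) {x : P.Xpt} (h : Inr P E n (x.1 n)) :
    Inr P E m (x.1 m) := by
  induction m, hnm using Nat.le_induction with
  | base => exact h
  | succ m _ ih => exact ih.succ

/-- A typical point gets away from both ends of the towers. -/
theorem BC_inner {P : NFCseq} {l : ℕ} {x : P.Xpt} (hx : x ∈ BCs P l) (E : ℕ) :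
    ∃ N, ∀ n, N ≤ n → Inr P E n (x.1 n) := by
  obtain ⟨N, hN⟩ := x.2.2
  let L := max l (max N E)
  have hL := (nseq_strictMono P).le_apply (x := L)
  have hL1 : l ≤ L := le_max_left _ _
  have hL2 : N ≤ L := (le_max_left _ _).trans (le_max_right _ _)
  have hL3 : E ≤ L := (le_max_right _ _).trans (le_max_right _ _)
  obtain ⟨a, a1, a2, a3⟩ := hx L hL1 0 (by simp)
  obtain ⟨b, b1, b2, b3⟩ := hx L hL1 2 (by simp)
  -- the height above the bottom and the depth below the top are both nondecreasing
  have hlow : ∀ n, a < n → ∃ j, x.1 n = some j ∧ E ≤ j := by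
    intro n hn
    induction n, (show a + 1 ≤ n from hn) using Nat.le_induction with
    | base =>
      obtain ⟨j, hj⟩ := Option.ne_none_iff_exists'.1 (some_mono (by omega : N ≤ a) hN)
      refine ⟨_, (succ_of hj).2, ?_⟩
      have h1 := le_hgt P a
      have h2 : P.hgt a ≤ off P a (dig P a x) := by
        unfold off; have := Nat.le_mul_of_pos_left (P.hgt a + P.spa a) (Nat.pos_of_ne_zero a3); omega
      omega
    | succ n h ih =>
      obtain ⟨j, hj, hE⟩ := ih h
      exact ⟨_, (succ_of hj).2, by omega⟩
  have hup : ∀ n, b < n → ∃ j, x.1 n = some j ∧ j + E < P.hgt n := by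
    intro n hn
    induction n, (show b + 1 ≤ n from hn) using Nat.le_induction with
    | base =>
      obtain ⟨j, hj⟩ := Option.ne_none_iff_exists'.1 (some_mono (by omega : N ≤ b) hN)
      refine ⟨_, (succ_of hj).2, ?_⟩
      have h1 := le_hgt P b
      have h2 := lt_hgt hj
      have h3 := dig_le P b x
      rw [hgt_succ]; unfold off
      rcases (by omega : dig P b x = 0 ∨ dig P b x = 1) with e | e <;> rw [e] <;> omega
    | succ n h ih =>
      obtain ⟨j, hj, hE⟩ := ih h
      refine ⟨_, (succ_of hj).2, ?_⟩
      have := off_add_lt P (dig_le P n x) hE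
      omega
  refine ⟨max a b + 1, fun n hn => ?_⟩
  obtain ⟨j, h1, h2⟩ := hlow n (by omega)
  obtain ⟨j', h3, h4⟩ := hup n (by omega)
  rw [h1] at h3
  obtain rfl := Option.some.inj h3
  exact ⟨j, h1, h2, h4⟩

/-- Two points with the same digits from some rank on lie in the same orbit. -/
theorem orbit_of_dig {S : NFC} {x y : S.Xpt} (hO : x ∉ Oz S) {N : ℕ} (hx : x.1 N ≠ none)
    (hy : y.1 N ≠ none) (h : ∀ k, N ≤ k → dig S.toNFCseq k x = dig S.toNFCseq k y) :
    ∃ e : ℤ, (Tp S ^ e) x = y := by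
  obtain ⟨v, hv⟩ := Option.ne_none_iff_exists'.1 hx
  obtain ⟨w, hw⟩ := Option.ne_none_iff_exists'.1 hy
  refine ⟨(w : ℤ) - v, ?_⟩
  have hs : Step S.toNFCseq ((w : ℤ) - v) (fun k => dig S.toNFCseq k x)
      (fun k => dig S.toNFCseq k x) ((w : ℤ) - v) :=
    ⟨0, fun _ _ => rfl, fun k => dig_le _ k x, by simp⟩
  obtain ⟨h1, h2⟩ := hs.realize hO hv (fun _ _ => rfl) (v' := w) (by ring) (lt_hgt hw)
  exact ext_of_dig h1 hw fun n hn => (h2 n hn).trans (h n hn)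

end Chacon

/-! ### Partial powers and measures with separated coordinates -/

namespace Chacon

variable {ι : Type} {S : NFC}

/-- The `k`-th power of `T` applied to the coordinates in `G`, and the identity to the others. -/
def TG (S : NFC) (G : Finset ι) (k : ℤ) (y : ι → S.Xpt) (i : ι) : S.Xpt :=
  if i ∈ G then (Tp S ^ k) (y i) else y i

theorem TG_mem {G : Finset ι} {i : ι} (hi : i ∈ G) (k : ℤ) (y : ι → S.Xpt) :
    TG S G k y i = (Tp S ^ k) (y i) := if_pos hi

theorem TG_not_mem {G : Finset ι} {i : ι} (hi : i ∉ G) (k : ℤ) (y : ι → S.Xpt) :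
    TG S G k y i = y i := if_neg hi

theorem meas_TG (S : NFC) (G : Finset ι) (k : ℤ) : Measurable (TG S G k) := by
  refine measurable_pi_iff.2 fun i => ?_
  by_cases hi : i ∈ G
  · simp only [TG_mem hi]; exact (meas_Tpz S k).comp (measurable_pi_apply i)
  · simp only [TG_not_mem hi]; exact measurable_pi_apply i

theorem TG_add (G : Finset ι) (a b : ℤ) (y : ι → S.Xpt) :
    TG S G a (TG S G b y) = TG S G (a + b) y := by
  funext i
  by_cases hi : i ∈ G
  · simp only [TG_mem hi, zpow_add, Equiv.Perm.mul_apply]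
  · simp only [TG_not_mem hi]

@[simp] theorem TG_zero (G : Finset ι) (y : ι → S.Xpt) : TG S G 0 y = y := by
  funext i
  by_cases hi : i ∈ G
  · simp [TG_mem hi]
  · simp [TG_not_mem hi]

theorem TG_comm (G G' : Finset ι) (a b : ℤ) (y : ι → S.Xpt) :
    TG S G a (TG S G' b y) = TG S G' b (TG S G a y) := by
  funext i
  by_cases hi : i ∈ G <;> by_cases hi' : i ∈ G' <;>
    simp only [TG_mem, TG_not_mem, hi, hi', not_false_eq_true]
  rw [← Equiv.Perm.mul_apply, ← zpow_add, add_comm, zpow_add, Equiv.Perm.mul_apply]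

theorem TG_sdiff {G H : Finset ι} (h : G ⊆ H) (k : ℤ) (y : ι → S.Xpt) :
    TG S G k (TG S (H \ G) k y) = TG S H k y := by
  funext i
  by_cases hi : i ∈ G
  · rw [TG_mem hi, TG_not_mem (by simp [hi]), TG_mem (h hi)]
  · rw [TG_not_mem hi]
    by_cases hH : i ∈ H
    · rw [TG_mem (by simp [hi, hH]), TG_mem hH]
    · rw [TG_not_mem (by simp [hH]), TG_not_mem hH]

theorem TG_not_Oz {G : Finset ι} {k : ℤ} {y : ι → S.Xpt} (hO : ∀ i, y i ∉ Oz S) (i : ι) :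
    TG S G k y i ∉ Oz S := by
  by_cases hi : i ∈ G
  · rw [TG_mem hi, Tpz_mem_Oz]; exact hO i
  · rw [TG_not_mem hi]; exact hO i

theorem mp_TG {σ : Measure (ι → S.Xpt)} {G : Finset ι}
    (h : MeasurePreserving (TG S G 1) σ σ) (k : ℤ) : MeasurePreserving (TG S G k) σ σ := by
  have h1 : MeasurePreserving (TG S G (-1)) σ σ := by
    refine ⟨meas_TG S G _, ?_⟩
    conv_lhs => rw [← h.map_eq]
    rw [Measure.map_map (meas_TG S G _) (meas_TG S G _)]
    have : TG S G (-1) ∘ TG S G 1 = id := by ext1 y; simp [TG_add]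
    rw [this, Measure.map_id]
  induction k with
  | zero =>
    have : TG S G 0 = id := by ext1 y; simp
    rw [this]; exact MeasurePreserving.id _
  | succ k ih =>
    have : TG S G (k + 1) = TG S G 1 ∘ TG S G k := by ext1 y; simp [TG_add, add_comm]
    rw [this]; exact h.comp ih
  | pred k ih =>
    have : TG S G (-k - 1) = TG S G (-1) ∘ TG S G (-k) := by
      ext1 y; simp only [Function.comp, TG_add]; congr 1; ring
    rw [this]; exact h1.comp ih

/-- The set `A` is invariant under `T` acting on the coordinates in `H`. -/
def InvS (S : NFC) (H : Finset ι) (A : Set (ι → S.Xpt)) : Prop :=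
  ∀ (k : ℤ) (y : ι → S.Xpt), TG S H k y ∈ A ↔ y ∈ A

theorem invS_of_one {H : Finset ι} {A : Set (ι → S.Xpt)} (h : TG S H 1 ⁻¹' A = A) :
    InvS S H A := by
  have h1 : ∀ y, TG S H 1 y ∈ A ↔ y ∈ A := fun y => by
    conv_rhs => rw [← h]
    rfl
  intro k
  induction k with
  | zero => simp
  | succ k ih => intro y; rw [add_comm, ← TG_add, h1, ih]
  | pred k ih =>
    intro y
    rw [← h1, TG_add, show (1 + (-k - 1) : ℤ) = -k by ring, ih]

theorem InvS.compl {H : Finset ι} {A : Set (ι → S.Xpt)} (h : InvS S H A) : InvS S H Aᶜ :=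
  fun k y => not_congr (h k y)

theorem InvS.inter {H : Finset ι} {A B : Set (ι → S.Xpt)} (h : InvS S H A) (h' : InvS S H B) :
    InvS S H (A ∩ B) := fun k y => and_congr (h k y) (h' k y)

theorem InvS.iUnion {H : Finset ι} {κ : Sort*} {A : κ → Set (ι → S.Xpt)}
    (h : ∀ j, InvS S H (A j)) : InvS S H (⋃ j, A j) := fun k y => by
  simp only [mem_iUnion]; exact exists_congr fun j => h j k y

theorem InvS.iInter {H : Finset ι} {κ : Sort*} {A : κ → Set (ι → S.Xpt)}
    (h : ∀ j, InvS S H (A j)) : InvS S H (⋂ j, A j) := fun k y => by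
  simp only [mem_iInter]; exact forall_congr' fun j => h j k y

theorem InvS.preimage {H G : Finset ι} {A : Set (ι → S.Xpt)} (h : InvS S H A) (m : ℤ) :
    InvS S H (TG S G m ⁻¹' A) := fun k y => by
  simp only [mem_preimage]; rw [TG_comm, h]

theorem InvS.mp {H : Finset ι} {σ : Measure (ι → S.Xpt)} {A : Set (ι → S.Xpt)} (h : InvS S H A)
    (hA : MeasurableSet A) (hσ : MeasurePreserving (TG S H 1) σ σ) :
    MeasurePreserving (TG S H 1) (σ.restrict A) (σ.restrict A) := by
  have := hσ.restrict_preimage hA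
  rwa [show TG S H 1 ⁻¹' A = A from Set.ext fun y => h 1 y] at this

/-- The points all of whose coordinates are at distance at least `E` from both ends of
tower `N`. -/
def Inn (S : NFC) (ι : Type) (E N : ℕ) : Set (ι → S.Xpt) :=
  {y | ∀ i, Inr S.toNFCseq E N ((y i).1 N)}

theorem Inn_mono {E N M : ℕ} (h : N ≤ M) : Inn S ι E N ⊆ Inn S ι E M :=
  fun _ hy i => (hy i).mono h

theorem Inn_anti {E E' N : ℕ} (h : E ≤ E') : Inn S ι E' N ⊆ Inn S ι E N := fun y hy i => by
  obtain ⟨j, h1, h2, h3⟩ := hy i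
  exact ⟨j, h1, by omega, by omega⟩

/-- The points all of whose coordinates are typical from the `l`-th special rank on. -/
def BCY (S : NFC) (ι : Type) (l : ℕ) : Set (ι → S.Xpt) := {y | ∀ i, y i ∈ BCs S.toNFCseq l}

/-- The digits of the coordinates of `y`. -/
def dg (y : ι → S.Xpt) (i : ι) (k : ℕ) : ℕ := dig S.toNFCseq k (y i)

theorem dg_le (y : ι → S.Xpt) (i : ι) (k : ℕ) : dg y i k ≤ 2 := dig_le _ k _

theorem measurable_dg (i : ι) (k : ℕ) : Measurable fun y : ι → S.Xpt => dg y i k :=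
  (measurable_dig S.toNFCseq k).comp (measurable_pi_apply i)

/-- A displacement acts on the coordinates in `H` as prescribed by the change of digits. -/
theorem TG_realize {H : Finset ι} {y : ι → S.Xpt} (hO : ∀ i, y i ∉ Oz S) {E c N : ℕ}
    (hy : y ∈ Inn S ι (E + c) N) {τ : ℤ} {δ' : ι → ℕ → ℕ} {r : ι → ℤ}
    (h : ∀ i ∈ H, Step S.toNFCseq τ (dg y i) (δ' i) (r i) ∧ -c ≤ r i ∧ r i ≤ c ∧
      ∀ k < N, δ' i k = dg y i k) :
    TG S H τ y ∈ Inn S ι E N ∧ ∀ i ∈ H, (∀ k, N ≤ k → dg (TG S H τ y) i k = δ' i k) ∧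
      ∃ v v' : ℕ, (y i).1 N = some v ∧ (TG S H τ y i).1 N = some v' ∧ (v' : ℤ) = v + r i := by
  have key : ∀ i ∈ H, ∃ v v' : ℕ, (y i).1 N = some v ∧ (TG S H τ y i).1 N = some v' ∧
      (v' : ℤ) = v + r i ∧ E ≤ v' ∧ v' + E < S.hgt N ∧
      ∀ k, N ≤ k → dg (TG S H τ y) i k = δ' i k := by
    intro i hi
    obtain ⟨v, h1, h2, h3⟩ := hy i
    obtain ⟨g1, g2, g3, g4⟩ := h i hi
    obtain ⟨v', hv'⟩ := Int.eq_ofNat_of_zero_le (show 0 ≤ (v : ℤ) + r i by omega)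
    obtain ⟨k1, k2⟩ := g1.realize (hO i) h1 g4 hv'.symm (by omega)
    rw [← TG_mem hi] at k1
    refine ⟨v, v', h1, k1, hv'.symm, by omega, by omega, fun k hk => ?_⟩
    unfold dg; rw [TG_mem hi]; exact k2 k hk
  refine ⟨fun i => ?_, fun i hi => ?_⟩
  · by_cases hi : i ∈ H
    · obtain ⟨v, v', -, h2, -, h4, h5, -⟩ := key i hi
      exact ⟨v', h2, h4, h5⟩
    · rw [TG_not_mem hi]; exact Inn_anti (by omega) hy i
  · obtain ⟨v, v', h1, h2, h3, -, -, h6⟩ := key i hi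
    exact ⟨h6, v, v', h1, h2, h3⟩

/-- The points at level `n` prescribed by `J` form an open set. -/
theorem isOpen_lev [Finite ι] (n : ℕ) (J : Set (ι → Option ℕ)) :
    IsOpen {y : ι → S.Xpt | (fun i => (y i).1 n) ∈ J} :=
  (isOpen_discrete J).preimage
    (continuous_pi fun i => (continuous_coord S.toNFCseq n).comp (continuous_apply i))

/-- The sets defined by a level form a neighbourhood basis. -/
theorem lev_nbhd [Finite ι] {O : Set (ι → S.Xpt)} (hO : IsOpen O) {w : ι → S.Xpt} (hw : w ∈ O) :
    ∃ n, ∀ z : ι → S.Xpt, (∀ i, (z i).1 n = (w i).1 n) → z ∈ O := by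
  cases nonempty_fintype ι
  obtain ⟨u, hu, huO⟩ := isOpen_pi_iff'.1 hO w hw
  have h1 : ∀ i, ∃ n, ∀ x : S.Xpt, x.1 n = (w i).1 n → x ∈ u i := by
    intro i
    obtain ⟨V, hV, hVu⟩ := isOpen_induced_iff.1 (hu i).1
    have hwV : (w i).1 ∈ V := by
      have := (hu i).2; rw [← hVu] at this; exact this
    obtain ⟨I, t, ht, hIV⟩ := isOpen_pi_iff.1 hV _ hwV
    refine ⟨I.sup id, fun x hx => ?_⟩
    rw [← hVu]
    refine hIV fun a ha => ?_
    have : x.1 a = (w i).1 a := down (Finset.le_sup (f := id) ha) hx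
    rw [this]
    exact (ht a ha).2
  choose n hn using h1
  refine ⟨Finset.univ.sup n, fun z hz => huO fun i _ => hn i _ ?_⟩
  exact down (Finset.le_sup (Finset.mem_univ i)) (hz i)

/-- The measures under study: finite on the inner parts of the towers, with absolutely continuous
marginals, and whose coordinates lie almost surely in distinct orbits. -/
structure Hyp (S : NFC) {ι : Type} (σ : Measure (ι → S.Xpt)) (E : ℕ) : Prop where
  fin : ∀ N, σ (Inn S ι E N) < ⊤
  ac : ∀ (i : ι) (A : Set S.Xpt), MeasurableSet A → S.μ A = 0 → σ {y | y i ∈ A} = 0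
  sep : ∀ i j : ι, i ≠ j → ∀ k : ℤ, σ {y | (Tp S ^ k) (y i) = y j} = 0

variable {σ : Measure (ι → S.Xpt)} {E : ℕ}

theorem Hyp.mono {ν : Measure (ι → S.Xpt)} (h : Hyp S σ E) (hν : ν ≤ σ) : Hyp S ν E where
  fin N := (hν _).trans_lt (h.fin N)
  ac i A hA hA0 := le_antisymm ((hν _).trans (h.ac i A hA hA0).le) zero_le
  sep i j hij k := le_antisymm ((hν _).trans (h.sep i j hij k).le) zero_le

/-- A set sent piece by piece into disjoint parts of `Q` by powers of `T` is not larger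
than `Q`. -/
theorem transfer {H : Finset ι} (hσ : MeasurePreserving (TG S H 1) σ σ)
    {A R : ℕ → Set (ι → S.Xpt)} {Q : Set (ι → S.Xpt)} (τ : ℕ → ℤ)
    (hR : ∀ n, MeasurableSet (R n)) (hd : Pairwise (Function.onFun Disjoint R))
    (hQ : MeasurableSet Q) (h : ∀ n, ∀ y ∈ A n, TG S H (τ n) y ∈ Q ∩ R n) :
    σ (⋃ n, A n) ≤ σ Q :=
  calc σ (⋃ n, A n) ≤ ∑' n, σ (A n) := measure_iUnion_le _
    _ ≤ ∑' n, σ (Q ∩ R n) := by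
        refine ENNReal.tsum_le_tsum fun n => ?_
        rw [← (mp_TG hσ (τ n)).measure_preimage (hQ.inter (hR n)).nullMeasurableSet]
        exact measure_mono fun y hy => h n y hy
    _ = σ (⋃ n, Q ∩ R n) :=
        (measure_iUnion (fun i j hij => (hd hij).mono inter_subset_right inter_subset_right)
          fun n => hQ.inter (hR n)).symm
    _ ≤ σ Q := measure_mono (iUnion_subset fun n => inter_subset_left)

variable [Fintype ι]

theorem meas_Inn (E N : ℕ) : MeasurableSet (Inn S ι E N) :=
  (isOpen_lev N {v | ∀ i, Inr S.toNFCseq E N (v i)}).measurableSet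

theorem meas_BCY (l : ℕ) : MeasurableSet (BCY S ι l) := by
  have : BCY S ι l = ⋂ i, (fun y => y i) ⁻¹' BCs S.toNFCseq l := by
    ext y; simp [BCY]
  rw [this]
  exact MeasurableSet.iInter fun i => (meas_BCs _ l).preimage (measurable_pi_apply i)

theorem Hyp.ae_Oz (h : Hyp S σ E) : ∀ᵐ y ∂σ, ∀ i, y i ∉ Oz S := by
  refine ae_all_iff.2 fun i => ?_
  have := h.ac i _ (Oz_countable S).measurableSet (mu_Oz S)
  rw [ae_iff]; simpa using this

theorem Hyp.ae_BC (h : Hyp S σ E) : ∀ᵐ y ∂σ, ∃ l, y ∈ BCY S ι l := by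
  have h1 : ∀ᵐ y ∂σ, ∀ i, y i ∈ ⋃ l, BCs S.toNFCseq l := by
    refine ae_all_iff.2 fun i => ?_
    have := h.ac i _ (MeasurableSet.iUnion fun l => meas_BCs S.toNFCseq l).compl (mu_BC S)
    rw [ae_iff]; simpa using this
  filter_upwards [h1] with y hy
  choose l hl using fun i => mem_iUnion.1 (hy i)
  exact ⟨Finset.univ.sup l, fun i =>
    BCs_mono _ (Finset.le_sup (f := l) (Finset.mem_univ i)) (hl i)⟩

theorem BCY_inner {l : ℕ} {y : ι → S.Xpt} (hy : y ∈ BCY S ι l) (E : ℕ) :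
    ∃ N, ∀ n, N ≤ n → y ∈ Inn S ι E n := by
  choose N hN using fun i => BC_inner (hy i) E
  exact ⟨Finset.univ.sup N, fun n hn i =>
    hN i n ((Finset.le_sup (f := N) (Finset.mem_univ i)).trans hn)⟩

/-- A set meeting every inner typical part in a null set is null. -/
theorem Hyp.null (h : Hyp S σ E) (E' : ℕ) {A : Set (ι → S.Xpt)}
    (hA : ∀ N l, σ (A ∩ (Inn S ι E' N ∩ BCY S ι l)) = 0) : σ A = 0 := by
  have h1 : σ (⋃ p : ℕ × ℕ, A ∩ (Inn S ι E' p.1 ∩ BCY S ι p.2)) = 0 :=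
    measure_iUnion_null fun p => hA p.1 p.2
  have h2 := h.ae_BC
  rw [ae_iff] at h2
  refine measure_mono_null (fun y hy => ?_) (measure_union_null h1 h2)
  by_cases hl : ∃ l, y ∈ BCY S ι l
  · obtain ⟨l, hl⟩ := hl
    obtain ⟨N, hN⟩ := BCY_inner hl E'
    exact Or.inl (mem_iUnion.2 ⟨(N, l), hy, hN N le_rfl, hl⟩)
  · exact Or.inr hl

theorem Hyp.sigmaFinite (h : Hyp S σ E) : SigmaFinite σ := by
  have h1 : σ (⋃ N, Inn S ι E N)ᶜ = 0 := h.null E fun N l => by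
    refine measure_mono_null (fun y hy => ?_) (measure_empty (μ := σ))
    exact hy.1 (mem_iUnion.2 ⟨N, hy.2.1⟩)
  refine ⟨⟨⟨fun N => Inn S ι E N ∪ (⋃ N, Inn S ι E N)ᶜ, fun _ => trivial, fun N => ?_, ?_⟩⟩⟩
  · exact (measure_union_le _ _).trans_lt (by rw [h1, add_zero]; exact h.fin N)
  · rw [← iUnion_union, union_compl_self]

/-- A measure finite on the inner parts of the towers is not contracted by `T` acting on some of
the coordinates, because powers of `T` bring the towers back close to themselves. -/
theorem contract_zero (h : Hyp S σ E) {G : Finset ι} {s : ℤ} (hs : s = 1 ∨ s = -1) {c : ℝ≥0∞}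
    (hc : c < 1) (hG : ∀ B, MeasurableSet B → σ (TG S G s ⁻¹' B) ≤ c * σ B) : σ = 0 := by
  have hpow : ∀ (k : ℕ) (B), MeasurableSet B → σ (TG S G (k * s) ⁻¹' B) ≤ c ^ k * σ B := by
    intro k
    induction k with
    | zero =>
      intro B _
      have : TG S G ((0 : ℕ) * s) ⁻¹' B = B := by ext y; simp
      rw [this]; simp
    | succ k ih =>
      intro B hB
      have e : TG S G ((k + 1 : ℕ) * s) ⁻¹' B = TG S G (k * s) ⁻¹' (TG S G s ⁻¹' B) := by
        ext y; simp only [mem_preimage, TG_add]; push_cast; ring_nf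
      rw [e, pow_succ, mul_assoc]
      exact (ih _ (hB.preimage (meas_TG S G s))).trans (mul_le_mul' le_rfl (hG B hB))
  have hO := h.ae_Oz
  rw [ae_iff] at hO
  rw [← Measure.measure_univ_eq_zero]
  refine h.null (E + 1) fun N l => ?_
  have hle : ∀ m : ℕ, max l N ≤ m →
      σ (Inn S ι (E + 1) N ∩ BCY S ι l) ≤ c ^ m * σ (Inn S ι E N) := by
    intro m hm
    have hm1 := (nseq_strictMono S.toNFCseq).le_apply (x := m)
    have hlm : l ≤ m := (le_max_left _ _).trans hm
    have hNm : N ≤ S.nseq m := (le_max_right _ _).trans (hm.trans hm1)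
    have hsp : ∀ k, S.nseq m < k → k < S.nseq (m + 1) → ¬ IsSp S.toNFCseq k :=
      fun k => not_sp_between S.toNFCseq
    let q := S.hgt (S.nseq m) + S.spa (S.nseq m)
    have hq : m ≤ q := by have := le_hgt S.toNFCseq (S.nseq m); omega
    have hsub : Inn S ι (E + 1) N ∩ BCY S ι l ⊆
        TG S G (q * s) ⁻¹' Inn S ι E N ∪ {y | ¬ ∀ i, y i ∉ Oz S} := by
      rintro y ⟨hy, hyl⟩
      by_cases hyO : ∀ i, y i ∉ Oz S
      · left
        rcases hs with rfl | rfl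
        · choose cc δ' h1 h2 h3 h4 h5 using fun i => incS S.toNFCseq hsp (d := dg y i)
            (dg_le y i) (hyl i m hlm 2 (by simp))
          refine (TG_realize hyO hy (δ' := δ') (r := fun i => -(cc i : ℤ)) fun i _ =>
            ⟨?_, ?_, ?_, fun k hk => h3 i k (by omega)⟩).1
          · have := h2 i; simpa [q] using this
          · have := h1 i; omega
          · have := h1 i; omega
        · choose cc δ' h1 h2 h3 h4 h5 using fun i => decS S.toNFCseq hsp (d := dg y i)
            (dg_le y i) (hyl i m hlm 0 (by simp))
          refine (TG_realize hyO hy (δ' := δ') (r := fun i => (cc i : ℤ)) fun i _ =>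
            ⟨?_, ?_, ?_, fun k hk => h3 i k (by omega)⟩).1
          · have := h2 i
            have e : ((q : ℤ) * -1) = -((S.hgt (S.nseq m) : ℤ) + S.spa (S.nseq m)) := by
              simp [q]
            rwa [e]
          · have := h1 i; omega
          · have := h1 i; omega
      · exact Or.inr hyO
    calc _ ≤ σ (TG S G (q * s) ⁻¹' Inn S ι E N) + 0 := by
          rw [← hO]; exact (measure_mono hsub).trans (measure_union_le _ _)
      _ ≤ c ^ q * σ (Inn S ι E N) := by rw [add_zero]; exact hpow q _ (meas_Inn E N)
      _ ≤ _ := mul_le_mul' (pow_le_pow_right_of_le_one' hc.le hq) le_rfl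
  have hlim : Tendsto (fun m : ℕ => c ^ m * σ (Inn S ι E N)) atTop (𝓝 0) := by
    have := ENNReal.Tendsto.mul_const (ENNReal.tendsto_pow_atTop_nhds_zero_of_lt_one hc)
      (Or.inr (h.fin N).ne)
    simpa using this
  rw [univ_inter]
  exact le_antisymm (ge_of_tendsto hlim (eventually_atTop.2 ⟨_, hle⟩)) zero_le

end Chacon

/-! ### Desynchronized points and negligible twists -/

namespace Chacon

variable {ι : Type} {S : NFC}

theorem Step.congr {P : NFCseq} {κ r : ℤ} {d d' e : ℕ → ℕ} {N : ℕ} (h : Step P κ d d' r)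
    (h1 : ∀ k < N, d' k = d k) (h2 : ∀ k, N ≤ k → e k = d k) (h3 : ∀ k, e k ≤ 2) :
    Step P κ e (fun k => if k < N then e k else d' k) r := by
  obtain ⟨b, g1, g2, g3⟩ := h
  refine ⟨max b N, fun k hk => ?_, fun k => ?_, ?_⟩
  · have := le_max_left b N; have := le_max_right b N
    simp only [show ¬ k < N by omega, if_false]
    rw [g1 k (by omega), h2 k (by omega)]
  · simp only; split_ifs
    · exact h3 k
    · exact g2 k
  · rw [g3, ← Finset.sum_range_add_sum_Ico _ (le_max_left b N),
      Finset.sum_eq_zero (s := Finset.Ico b _), add_zero]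
    · congr 1
      refine Finset.sum_congr rfl fun k hk => ?_
      by_cases hkN : k < N
      · simp [hkN, h1 k hkN]
      · simp [hkN, h2 k (by omega)]
    · intro k hk
      have := (Finset.mem_Ico.1 hk).1
      by_cases hkN : k < N
      · simp [hkN]
      · simp [hkN, g1 k this, h2 k (by omega)]

theorem UsD.congr {P : NFCseq} {H G : Finset ι} {δ ε : ι → ℕ → ℕ} {n N : ℕ} {τ : ℤ}
    (h : UsD P H δ n τ G) (hN : N ≤ n) (h1 : ∀ i ∈ H, ∀ k, N ≤ k → ε i k = δ i k)
    (h2 : ∀ i k, ε i k ≤ 2) : UsD P H ε n τ G := by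
  obtain ⟨a1, a2, a3, δ', a4, c, a5⟩ := h
  refine ⟨a1, a2, a3, fun i k => if k < N then ε i k else δ' i k, fun i hi => ⟨?_, ?_⟩, c, ?_⟩
  · exact (a4 i hi).1.congr (fun k hk => (a4 i hi).2 k (by omega)) (h1 i hi) (h2 i)
  · intro k hk
    by_cases hkN : k < N
    · simp [hkN]
    · simp only [hkN, if_false]
      rw [(a4 i hi).2 k hk, h1 i hi k (by omega)]
  · intro i hi
    simp only [show ¬ n < N by omega, if_false]
    rw [a5 i hi, h1 i hi n hN]

theorem RecD.congr {P : NFCseq} [Fintype ι] {H : Finset ι} {δ ε : ι → ℕ → ℕ} {n p N : ℕ}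
    {o : Opt ι} (h : RecD P H n p δ o) (hN : N ≤ n)
    (h1 : ∀ i ∈ H, ∀ k, N ≤ k → ε i k = δ i k) : RecD P H n p ε o := by
  rcases o with j | b | a
  · exact h
  · obtain ⟨g0, g1, g2, g3⟩ := h
    exact ⟨g0, g1, by rw [h1 b g0 n hN, g2], fun k x y => by rw [h1 b g0 k (by omega), g3 k x y]⟩
  · obtain ⟨g0, g1, g2, g3⟩ := h
    exact ⟨g0, g1, by rw [h1 a g0 n hN, g2], fun k x y => by rw [h1 a g0 k (by omega), g3 k x y]⟩

/-- `n` is the first rank from `n0` on at which the digits of the coordinates in `H` are not all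
equal. -/
def FU (H : Finset ι) (δ : ι → ℕ → ℕ) (n0 n : ℕ) : Prop :=
  n0 ≤ n ∧ (∃ i ∈ H, ∃ j ∈ H, δ i n ≠ δ j n) ∧
    ∀ k, n0 ≤ k → k < n → ∀ i ∈ H, ∀ j ∈ H, δ i k = δ j k

theorem FU.inj {H : Finset ι} {δ : ι → ℕ → ℕ} {n0 n n' : ℕ} (h : FU H δ n0 n)
    (h' : FU H δ n0 n') : n = n' := by
  obtain ⟨a1, ⟨i, hi, j, hj, hij⟩, a3⟩ := h
  obtain ⟨b1, ⟨i', hi', j', hj', hij'⟩, b3⟩ := h'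
  rcases lt_trichotomy n n' with hl | he | hl
  · exact absurd (b3 n a1 hl i hi j hj) hij
  · exact he
  · exact absurd (a3 n' b1 hl i' hi' j' hj') hij'

theorem meas_dg_eq (i : ι) (k c : ℕ) : Measurable fun y : ι → S.Xpt => dg y i k = c :=
  measurableSet_setOfPred.1 (measurable_dg i k (measurableSet_singleton c))

theorem meas_FU [Countable ι] (H : Finset ι) (n0 n : ℕ) :
    MeasurableSet {y : ι → S.Xpt | FU H (dg y) n0 n} := by
  have h : ∀ (i j : ι) (k : ℕ), Measurable fun y : ι → S.Xpt => dg y i k = dg y j k :=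
    fun i j k => measurableSet_setOfPred.1
      (measurableSet_eq_fun (measurable_dg i k) (measurable_dg j k))
  apply measurableSet_setOfPred.2
  refine measurable_const.and (Measurable.and ?_ ?_)
  · exact Measurable.exists fun i => measurable_const.and
      (Measurable.exists fun j => measurable_const.and (h i j n).not)
  · exact Measurable.forall fun k => measurable_const.imp (measurable_const.imp
      (Measurable.forall fun i => measurable_const.imp
        (Measurable.forall fun j => measurable_const.imp (h i j k))))

theorem meas_RecD [Fintype ι] (H : Finset ι) (n p : ℕ) (o : Opt ι) :
    MeasurableSet {y : ι → S.Xpt | RecD S.toNFCseq H n p (dg y) o} := by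
  apply measurableSet_setOfPred.2
  rcases o with j | b | a
  · exact measurable_const
  · exact measurable_const.and (measurable_const.and ((meas_dg_eq b n 1).and
      (Measurable.forall fun k => measurable_const.imp (measurable_const.imp (meas_dg_eq b k 0)))))
  · exact measurable_const.and (measurable_const.and ((meas_dg_eq a n 1).and
      (Measurable.forall fun k => measurable_const.imp (measurable_const.imp (meas_dg_eq a k 2)))))

/-- The effect of a usable displacement: up to the rank `n` of first desynchronization, it acts as
the twist by `G`, and it does not change this rank. -/
theorem use_realize {H G : Finset ι} {y : ι → S.Xpt} (hO : ∀ i, y i ∉ Oz S) {E N n0 n : ℕ}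
    (hy : y ∈ Inn S ι (E + 1) N) (hN : N ≤ n0) (hF : FU H (dg y) n0 n) {τ : ℤ}
    (hU : UsD S.toNFCseq H (dg y) n τ G) :
    TG S H τ y ∈ Inn S ι E N ∧ FU H (dg (TG S H τ y)) n0 n ∧
      ∀ i, (TG S H τ y i).1 n = (TG S G 1 y i).1 n := by
  obtain ⟨a1, -, -, δ', a4, c, a5⟩ := hU
  have hn := hF.1
  have hR : ∀ M, M ≤ n → ∀ i ∈ H, Step S.toNFCseq τ (dg y i) (δ' i) (if i ∈ G then 1 else 0) ∧
      -((1 : ℕ) : ℤ) ≤ (if i ∈ G then 1 else 0) ∧ (if i ∈ G then (1 : ℤ) else 0) ≤ (1 : ℕ) ∧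
      ∀ k < M, δ' i k = dg y i k := fun M hM i hi =>
    ⟨(a4 i hi).1, by split_ifs <;> simp, by split_ifs <;> simp,
      fun k hk => (a4 i hi).2 k (by omega)⟩
  obtain ⟨b1, b2⟩ := TG_realize hO hy (hR N (by omega))
  obtain ⟨-, c2⟩ := TG_realize hO (Inn_mono (hN.trans hn) hy) (hR n le_rfl)
  refine ⟨b1, ⟨hn, ?_, ?_⟩, fun i => ?_⟩
  · obtain ⟨i, hi, j, hj, hij⟩ := hF.2.1
    refine ⟨i, hi, j, hj, ?_⟩
    rw [(b2 i hi).1 n (by omega), (b2 j hj).1 n (by omega), a5 i hi, a5 j hj]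
    have := dg_le y i n
    have := dg_le y j n
    omega
  · intro k h1 h2 i hi j hj
    rw [(b2 i hi).1 k (by omega), (b2 j hj).1 k (by omega), (a4 i hi).2 k h2, (a4 j hj).2 k h2]
    exact hF.2.2 k h1 h2 i hi j hj
  · by_cases hi : i ∈ H
    · obtain ⟨-, v, v', h1, h2, h3⟩ := c2 i hi
      rw [h2]
      by_cases hG : i ∈ G
      · rw [if_pos hG] at h3
        rw [TG_mem hG, Tpz_pos S (hO i) h1 1 h3 (lt_hgt h2)]
      · rw [if_neg hG, add_zero] at h3
        rw [TG_not_mem hG, h1, Nat.cast_injective h3]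
    · rw [TG_not_mem hi, TG_not_mem fun h => hi (a1 h)]

/-- The points whose first desynchronization from rank `n0` on realizes the twist by `g.2` through
the displacement of kind `g.1`. It need not be measurable. -/
def UU (S : NFC) (H : Finset ι) (g : Fin 4 × Finset ι) (n0 : ℕ) : Set (ι → S.Xpt) :=
  {y | (∀ i, y i ∉ Oz S) ∧ ∃ n, FU H (dg y) n0 n ∧
    UsD S.toNFCseq H (dg y) n (tauO S.toNFCseq n g.1) g.2}

/-- The twist `g` is asymptotically not realized in `A`. -/
def Ng (σ : Measure (ι → S.Xpt)) (H : Finset ι) (E : ℕ) (g : Fin 4 × Finset ι)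
    (A : Set (ι → S.Xpt)) : Prop :=
  ∀ N, Tendsto (fun l => σ (A ∩ Inn S ι (E + 1) N ∩ UU S H g (S.nseq l))) atTop (𝓝 0)

theorem Ng.mono {σ : Measure (ι → S.Xpt)} {H : Finset ι} {E : ℕ} {g : Fin 4 × Finset ι}
    {A B : Set (ι → S.Xpt)} (h : Ng σ H E g B) (hAB : A ⊆ B) : Ng σ H E g A := fun N =>
  tendsto_of_tendsto_of_tendsto_of_le_of_le tendsto_const_nhds (h N) (fun _ => zero_le)
    fun _ => measure_mono (inter_subset_inter_left _ (inter_subset_inter_left _ hAB))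

variable [Fintype ι] {σ : Measure (ι → S.Xpt)} {E : ℕ}

theorem Ng.iUnion (h : Hyp S σ E) {H : Finset ι} {g : Fin 4 × Finset ι}
    {A : ℕ → Set (ι → S.Xpt)} (hA : ∀ j, MeasurableSet (A j)) (hN : ∀ j, Ng σ H E g (A j)) :
    Ng σ H E g (⋃ j, A j) := by
  intro N
  refine ENNReal.tendsto_nhds_zero.2 fun ε hε => ?_
  have hε2 := ENNReal.half_pos hε.ne'
  have hfin : σ (Inn S ι (E + 1) N) ≠ ⊤ :=
    ((measure_mono (Inn_anti (Nat.le_succ E))).trans_lt (h.fin N)).ne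
  -- the tail of the union has small measure
  have h1 : Tendsto (fun J => σ ((⋃ j, A j) \ (⋃ j ∈ Finset.range J, A j) ∩ Inn S ι (E + 1) N))
      atTop (𝓝 0) := by
    have h2 := tendsto_measure_iInter_atTop (μ := σ)
      (s := fun J => (⋃ j, A j) \ (⋃ j ∈ Finset.range J, A j) ∩ Inn S ι (E + 1) N)
      (fun J => (((MeasurableSet.iUnion hA).diff
        (Finset.measurableSet_biUnion _ fun j _ => hA j)).inter (meas_Inn _ _)).nullMeasurableSet)
      (fun J J' hJ => inter_subset_inter_left _ (Set.sdiff_subset_sdiff_right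
        (biUnion_subset_biUnion_left fun j hj => Finset.mem_range.2
          ((Finset.mem_range.1 hj).trans_le hJ))))
      ⟨0, ne_top_of_le_ne_top hfin (measure_mono inter_subset_right)⟩
    have h3 : ⋂ J, (⋃ j, A j) \ (⋃ j ∈ Finset.range J, A j) ∩ Inn S ι (E + 1) N = ∅ := by
      refine eq_empty_of_forall_notMem fun y hy => ?_
      rw [mem_iInter] at hy
      obtain ⟨j, hj⟩ := mem_iUnion.1 (hy 0).1.1
      exact (hy (j + 1)).1.2 (mem_biUnion (Finset.mem_coe.2 (Finset.self_mem_range_succ j)) hj)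
    rw [h3, measure_empty] at h2
    exact h2
  obtain ⟨J, hJ⟩ := ((ENNReal.tendsto_nhds_zero.1 h1) _ hε2).exists
  have h4 : Tendsto (fun l => ∑ j ∈ Finset.range J,
      σ (A j ∩ Inn S ι (E + 1) N ∩ UU S H g (S.nseq l))) atTop (𝓝 0) := by
    have := tendsto_finsetSum (Finset.range J) fun j _ => hN j N
    simpa using this
  filter_upwards [(ENNReal.tendsto_nhds_zero.1 h4) _ hε2] with l hl
  calc _ ≤ σ (((⋃ j, A j) \ (⋃ j ∈ Finset.range J, A j) ∩ Inn S ι (E + 1) N) ∪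
        ⋃ j ∈ Finset.range J, A j ∩ Inn S ι (E + 1) N ∩ UU S H g (S.nseq l)) := by
        refine measure_mono fun y hy => ?_
        by_cases hyJ : y ∈ ⋃ j ∈ Finset.range J, A j
        · right
          obtain ⟨j, hj, hyj⟩ := mem_iUnion₂.1 hyJ
          exact mem_iUnion₂.2 ⟨j, hj, ⟨hyj, hy.1.2⟩, hy.2⟩
        · exact Or.inl ⟨⟨hy.1.1, hyJ⟩, hy.1.2⟩
    _ ≤ ε / 2 + ε / 2 := (measure_union_le _ _).trans
        (add_le_add hJ ((measure_biUnion_finset_le _ _).trans hl))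
    _ = ε := ENNReal.add_halves ε

/-- If the twist by `G` sends the invariant set `Y` into an invariant set almost disjoint from
`Y`, then it is asymptotically not realized in `Y`. -/
theorem ng_of_disjoint (h : Hyp S σ E) {H : Finset ι} (hσ : MeasurePreserving (TG S H 1) σ σ)
    (g : Fin 4 × Finset ι) {Y Y' : Set (ι → S.Xpt)} (hY : MeasurableSet Y) (hYi : InvS S H Y)
    (hm : ∀ y ∈ Y, TG S g.2 1 y ∈ Y') (hd : σ (Y ∩ Y') = 0) : Ng σ H E g Y := by
  intro N
  refine ENNReal.tendsto_nhds_zero.2 fun ε hε => ?_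
  have hε2 := ENNReal.half_pos hε.ne'
  have hF : IsFiniteMeasure (σ.restrict (Y ∩ Inn S ι E N)) := by
    refine ⟨?_⟩
    rw [Measure.restrict_apply_univ]
    exact (measure_mono inter_subset_right).trans_lt (h.fin N)
  have hd' : σ.restrict (Y ∩ Inn S ι E N) Y' < ε / 2 := by
    rw [Measure.restrict_apply' (hY.inter (meas_Inn _ _))]
    refine lt_of_le_of_lt (le_of_eq (measure_mono_null ?_ hd)) hε2
    exact fun y hy => ⟨hy.2.1, hy.1⟩
  obtain ⟨O, hYO, hO, hOε⟩ := Y'.exists_isOpen_lt_of_lt _ hd'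
  rw [Measure.restrict_apply' (hY.inter (meas_Inn _ _))] at hOε
  let W : ℕ → Set (ι → S.Xpt) := fun n => {w | ∀ z : ι → S.Xpt, (∀ i, (z i).1 n = (w i).1 n) → z ∈ O}
  have hWm : ∀ n, MeasurableSet (W n) := fun n =>
    (isOpen_lev n {v | ∀ z : ι → S.Xpt, (∀ i, (z i).1 n = v i) → z ∈ O}).measurableSet
  have hWmono : ∀ {a b}, a ≤ b → W a ⊆ W b := fun hab w hw z hz => hw z fun i => down hab (hz i)
  let F : ℕ → Set (ι → S.Xpt) := fun n => (Y ∩ Inn S ι (E + 1) N) \ TG S g.2 1 ⁻¹' W n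
  have hlim : Tendsto (fun n => σ (F n)) atTop (𝓝 0) := by
    have h2 := tendsto_measure_iInter_atTop (μ := σ) (s := F)
      (fun n => ((hY.inter (meas_Inn _ _)).diff
        ((hWm n).preimage (meas_TG S _ _))).nullMeasurableSet)
      (fun a b hab => Set.sdiff_subset_sdiff_right (preimage_mono (hWmono hab)))
      ⟨0, ((measure_mono (Set.sdiff_subset.trans (inter_subset_right.trans
        (Inn_anti (Nat.le_succ E))))).trans_lt (h.fin N)).ne⟩
    have h3 : ⋂ n, F n = ∅ := by
      refine eq_empty_of_forall_notMem fun y hy => ?_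
      rw [mem_iInter] at hy
      obtain ⟨n, hn⟩ := lev_nbhd hO (hYO (hm y (hy 0).1.1))
      exact (hy n).2 hn
    rw [h3, measure_empty] at h2
    exact h2
  obtain ⟨n1, hn1⟩ := eventually_atTop.1 ((ENNReal.tendsto_nhds_zero.1 hlim) _ hε2)
  filter_upwards [eventually_ge_atTop (max n1 N)] with l hl
  have hl' := hl.trans ((nseq_strictMono S.toNFCseq).le_apply (x := l))
  set n0 := S.nseq l
  have hN : N ≤ n0 := (le_max_right _ _).trans hl'
  let A : ℕ → Set (ι → S.Xpt) := fun n => {y | y ∈ Y ∧ y ∈ Inn S ι (E + 1) N ∧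
    TG S g.2 1 y ∈ W n0 ∧ (∀ i, y i ∉ Oz S) ∧ FU H (dg y) n0 n ∧
    UsD S.toNFCseq H (dg y) n (tauO S.toNFCseq n g.1) g.2}
  have htr : σ (⋃ n, A n) ≤ σ (O ∩ (Y ∩ Inn S ι E N)) := by
    refine transfer hσ (fun n => tauO S.toNFCseq n g.1) (fun n => meas_FU H n0 n) ?_
      (hO.measurableSet.inter (hY.inter (meas_Inn _ _))) ?_
    · intro a b hab
      exact Set.disjoint_left.2 fun y hy hy' => hab (FU.inj hy hy')
    · rintro n y ⟨g1, g2, g3, g4, g5, g6⟩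
      obtain ⟨k1, k2, k3⟩ := use_realize g4 g2 hN g5 g6
      refine ⟨⟨g3 _ fun i => ?_, (hYi _ y).2 g1, k1⟩, k2⟩
      exact down g5.1 (k3 i)
  calc _ ≤ σ (F n0 ∪ ⋃ n, A n) := by
        refine measure_mono ?_
        rintro y ⟨⟨y1, y2⟩, y3, n, y4, y5⟩
        by_cases hyW : TG S g.2 1 y ∈ W n0
        · exact Or.inr (mem_iUnion.2 ⟨n, y1, y2, hyW, y3, y4, y5⟩)
        · exact Or.inl ⟨⟨y1, y2⟩, hyW⟩
    _ ≤ ε / 2 + ε / 2 := (measure_union_le _ _).trans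
        (add_le_add (hn1 n0 ((le_max_left _ _).trans hl')) (htr.trans hOε.le))
    _ = ε := ENNReal.add_halves ε

end Chacon


/-! ### Almost every point realizes a twist -/

namespace Chacon

variable {ι : Type} {S : NFC} [Fintype ι] {σ : Measure (ι → S.Xpt)} {E : ℕ}

theorem ae_FU (h : Hyp S σ E) {H : Finset ι} (hH : 2 ≤ H.card) :
    ∀ᵐ y ∂σ, (∀ i, y i ∉ Oz S) ∧ ∀ N n0, y ∈ Inn S ι 0 N → N ≤ n0 → ∃ n, FU H (dg y) n0 n := by
  obtain ⟨i, hi, j, hj, hij⟩ := Finset.one_lt_card.1 (show 1 < H.card from hH)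
  have h1 : ∀ᵐ y ∂σ, ∀ k : ℤ, (Tp S ^ k) (y i) ≠ y j := by
    refine ae_all_iff.2 fun k => ?_
    rw [ae_iff]; simpa using h.sep i j hij k
  filter_upwards [h.ae_Oz, h1] with y hO hy
  refine ⟨hO, fun N n0 hyN hN => ?_⟩
  have hex : ∃ n, n0 ≤ n ∧ ∃ i ∈ H, ∃ j ∈ H, dg y i n ≠ dg y j n := by
    by_contra hcon
    push Not at hcon
    have hnn : ∀ i, (y i).1 N ≠ none := fun i => by
      obtain ⟨v, hv, -⟩ := hyN i
      rw [hv]; simp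
    obtain ⟨k, hk⟩ := orbit_of_dig (hO i) (some_mono hN (hnn i)) (some_mono hN (hnn j))
      fun k hk => hcon k hk i hi j hj
    exact hy k hk
  refine ⟨Nat.find hex, (Nat.find_spec hex).1, (Nat.find_spec hex).2, fun k h1 h2 a ha b hb => ?_⟩
  by_contra hne
  exact Nat.find_min hex h2 ⟨h1, a, ha, b, hb, hne⟩

/-- A typical inner point realizes a twist, unless it is blocked; in the latter case a power of `T`
sends it to a point realizing a twist, in such a way that its rank of first desynchronization can
be recovered from the image. -/
theorem realize_or_move {H : Finset ι} {y : ι → S.Xpt} (hO : ∀ i, y i ∉ Oz S) {N l n : ℕ}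
    (hy : y ∈ Inn S ι (E + 3) N) (hN : N ≤ l) (hK : S.lseq (Fintype.card ι + 2) ≤ l)
    (hBC : y ∈ BCY S ι l) (hF : FU H (dg y) (S.nseq l) n) :
    (∃ g : Fin 4 × Finset ι, y ∈ UU S H g (S.nseq l)) ∨
    ∃ o' : Opt ι, TG S H (tauB S.toNFCseq n o') y ∈ Inn S ι (E + 1) N ∧
      (∃ g : Fin 4 × Finset ι, TG S H (tauB S.toNFCseq n o') y ∈ UU S H g (S.nseq l)) ∧
      ∃ p, FU H (dg (TG S H (tauB S.toNFCseq n o') y)) (S.nseq l) p ∧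
        RecD S.toNFCseq H n p (dg (TG S H (tauB S.toNFCseq n o') y)) o' := by
  have hl : l ≤ S.nseq l := (nseq_strictMono S.toNFCseq).le_apply
  have hx1 := nx_pos S.toNFCseq n
  have hln : l ≤ nx S.toNFCseq n - 1 := by
    have h1 : S.toNFCseq.nseq l < S.toNFCseq.nseq (nx S.toNFCseq n) := lt_of_le_of_lt hF.1 (lt_Lx S.toNFCseq n)
    have := (nseq_strictMono S.toNFCseq).lt_iff_lt.1 h1
    omega
  have hmm : S.nseq l ≤ S.toNFCseq.nseq (nx S.toNFCseq n - 1) := (nseq_strictMono S.toNFCseq).monotone hln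
  by_cases hq : (∀ i ∈ H, ∃ k, n ≤ k ∧ k < Lx S.toNFCseq n ∧ dg y i k ≠ 2) ∨
      ∀ i ∈ H, ∃ k, n ≤ k ∧ k < Lx S.toNFCseq n ∧ dg y i k ≠ 0
  · left
    obtain ⟨o, G, hU⟩ := use1 S.toNFCseq (dg_le y) (fun k h1 h2 => not_sp_lt_Lx S.toNFCseq h1 h2) (lt_Lx S.toNFCseq n)
      hF.2.1 hq
    exact ⟨(o, G), hO, n, hF, hU⟩
  right
  have hlt : S.toNFCseq.nseq (nx S.toNFCseq n - 1) < n := by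
    refine lt_of_le_of_ne (nseq_pred_le S.toNFCseq n) fun he => hq (Or.inl fun i _ => ?_)
    have := hBC i (nx S.toNFCseq n - 1) hln 2 (by simp)
    rw [he, Nat.sub_add_cancel hx1] at this
    exact this
  push Not at hq
  obtain ⟨⟨a, ha, ha2⟩, b, hb, hb0⟩ := hq
  obtain ⟨o', δ', p, hp1, hp2, hst, hdes, ⟨o, G, hU⟩, hR⟩ := blocked S.toNFCseq (dg_le y) hlt
    (le_kOf S.toNFCseq (hK.trans (by omega))) (fun i _ c hc => hBC i (nx S.toNFCseq n) (by omega) c hc)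
    (fun k h1 h2 => hF.2.2 k (hmm.trans ((mx_gt S.toNFCseq n).le.trans h1)) h2) ha hb ha2 hb0
  choose! r hr1 hr2 hr3 hr4 using hst
  have hNp : N ≤ p := by omega
  obtain ⟨k1, k2⟩ := TG_realize hO (E := E + 1) (c := 2) hy (r := r) fun i hi =>
    ⟨hr1 i hi, hr2 i hi, hr3 i hi, fun k hk => hr4 i hi k (by omega)⟩
  have hFp : FU H (dg (TG S H (tauB S.toNFCseq n o') y)) (S.nseq l) p := by
    refine ⟨by omega, ?_, fun k h1 h2 i hi j hj => ?_⟩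
    · obtain ⟨i, hi, j, hj, hij⟩ := hdes
      exact ⟨i, hi, j, hj, by rwa [(k2 i hi).1 p hNp, (k2 j hj).1 p hNp]⟩
    · rw [(k2 i hi).1 k (by omega), (k2 j hj).1 k (by omega), hr4 i hi k h2, hr4 j hj k h2]
      exact hF.2.2 k h1 (by omega) i hi j hj
  refine ⟨o', k1, ⟨(o, G), TG_not_Oz hO, p, hFp, ?_⟩, p, hFp, ?_⟩
  · exact hU.congr hNp (fun i hi => (k2 i hi).1) (dg_le _)
  · exact hR.congr (by omega : N ≤ n) fun i hi => (k2 i hi).1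

/-- An invariant set in which every twist is asymptotically not realized is null. -/
theorem desync_null (h : Hyp S σ E) {H : Finset ι} (hσ : MeasurePreserving (TG S H 1) σ σ)
    (hH : 2 ≤ H.card) {D : Set (ι → S.Xpt)} (hD : InvS S H D)
    (hN : ∀ g : Fin 4 × Finset ι, g.2 ⊆ H → g.2.Nonempty → g.2 ≠ H → Ng σ H E g D) : σ D = 0 := by
  have hae := ae_FU h hH
  rw [ae_iff] at hae
  refine h.null (E + 3) fun N l0 => ?_
  let Q : ℕ → Set (ι → S.Xpt) := fun l =>
    ⋃ g : Fin 4 × Finset ι, D ∩ Inn S ι (E + 1) N ∩ UU S H g (S.nseq l)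
  have hQ : Tendsto (fun l => σ (Q l)) atTop (𝓝 0) := by
    have h1 : ∀ g : Fin 4 × Finset ι,
        Tendsto (fun l => σ (D ∩ Inn S ι (E + 1) N ∩ UU S H g (S.nseq l))) atTop (𝓝 0) := by
      intro g
      by_cases hg : g.2 ⊆ H ∧ g.2.Nonempty ∧ g.2 ≠ H
      · exact hN g hg.1 hg.2.1 hg.2.2 N
      · have he : ∀ l, UU S H g (S.nseq l) = ∅ := fun l => by
          refine eq_empty_of_forall_notMem ?_
          rintro y ⟨-, n, -, hU⟩
          exact hg ⟨hU.1, hU.2.1, hU.2.2.1⟩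
        simp [he]
    have h2 := tendsto_finsetSum Finset.univ fun g _ => h1 g
    rw [Finset.sum_const_zero] at h2
    exact tendsto_of_tendsto_of_tendsto_of_le_of_le tendsto_const_nhds h2 (fun _ => zero_le)
      fun l => measure_iUnion_fintype_le _ _
  have hle : ∀ l, max (max l0 N) (S.lseq (Fintype.card ι + 2)) ≤ l →
      σ (D ∩ (Inn S ι (E + 3) N ∩ BCY S ι l0)) ≤ (1 + Fintype.card (Opt ι)) * σ (Q l) := by
    intro l hl
    have hl0 : l0 ≤ l := (le_max_left _ _).trans ((le_max_left _ _).trans hl)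
    have hlN : N ≤ l := (le_max_right _ _).trans ((le_max_left _ _).trans hl)
    have hlK : S.lseq (Fintype.card ι + 2) ≤ l := (le_max_right _ _).trans hl
    let B : Opt ι → ℕ → Set (ι → S.Xpt) := fun o' n => {y |
      TG S H (tauB S.toNFCseq n o') y ∈ Q l ∧
      ∃ p, FU H (dg (TG S H (tauB S.toNFCseq n o') y)) (S.nseq l) p ∧
        RecD S.toNFCseq H n p (dg (TG S H (tauB S.toNFCseq n o') y)) o'}
    have hB : ∀ o', σ (⋃ n, B o' n) ≤ σ (Q l) := by
      intro o'
      rw [← measure_toMeasurable (Q l)]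
      refine transfer hσ (fun n => tauB S.toNFCseq n o')
        (R := fun n => {y | ∃ p, FU H (dg y) (S.nseq l) p ∧ RecD S.toNFCseq H n p (dg y) o'})
        (fun n => ?_) ?_ (measurableSet_toMeasurable _ _) ?_
      · exact measurableSet_setOfPred.2 (Measurable.exists fun p =>
          (measurableSet_setOfPred.1 (meas_FU H _ p)).and
            (measurableSet_setOfPred.1 (meas_RecD H n p o')))
      · intro a b hab
        refine Set.disjoint_left.2 ?_
        rintro y ⟨p, h1, h2⟩ ⟨p', h1', h2'⟩
        obtain rfl := h1.inj h1'
        exact hab (h2.inj h2')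
      · rintro n y ⟨h1, h2⟩
        exact ⟨subset_toMeasurable _ _ h1, h2⟩
    calc _ ≤ σ ({y | ¬ ((∀ i, y i ∉ Oz S) ∧ ∀ N n0, y ∈ Inn S ι 0 N → N ≤ n0 →
          ∃ n, FU H (dg y) n0 n)} ∪ (Q l ∪ ⋃ o', ⋃ n, B o' n)) := by
          refine measure_mono ?_
          rintro y ⟨y1, y2, y3⟩
          by_cases hy : (∀ i, y i ∉ Oz S) ∧ ∀ N n0, y ∈ Inn S ι 0 N → N ≤ n0 →
            ∃ n, FU H (dg y) n0 n
          · right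
            have hln := hlN.trans ((nseq_strictMono S.toNFCseq).le_apply (x := l))
            obtain ⟨n, hn⟩ := hy.2 N (S.nseq l) (Inn_anti (Nat.zero_le _) y2) hln
            have y3' : y ∈ BCY S ι l := fun i => BCs_mono _ hl0 (y3 i)
            rcases realize_or_move hy.1 y2 hlN hlK y3' hn with ⟨g, hg⟩ | ⟨o', h1, ⟨g, hg⟩, h2⟩
            · exact Or.inl (mem_iUnion.2 ⟨g, ⟨y1, Inn_anti (by omega) y2⟩, hg⟩)
            · exact Or.inr (mem_iUnion.2 ⟨o', mem_iUnion.2 ⟨n,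
                mem_iUnion.2 ⟨g, ⟨(hD _ y).2 y1, h1⟩, hg⟩, h2⟩⟩)
          · exact Or.inl hy
      _ ≤ 0 + (σ (Q l) + ∑ _o' : Opt ι, σ (Q l)) := by
          refine (measure_union_le _ _).trans (add_le_add hae.le ((measure_union_le _ _).trans
            (add_le_add le_rfl ((measure_iUnion_fintype_le _ _).trans ?_))))
          exact Finset.sum_le_sum fun o' _ => hB o'
      _ = _ := by
          rw [Finset.sum_const, Finset.card_univ, nsmul_eq_mul]; ring
  have hlim : Tendsto (fun l => (1 + Fintype.card (Opt ι)) * σ (Q l)) atTop (𝓝 0) := by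
    have := ENNReal.Tendsto.const_mul (a := 1 + (Fintype.card (Opt ι) : ℝ≥0∞)) hQ
      (Or.inr (ENNReal.add_ne_top.2 ⟨ENNReal.one_ne_top, ENNReal.natCast_ne_top _⟩))
    simpa using this
  exact le_antisymm (ge_of_tendsto hlim (eventually_atTop.2 ⟨_, hle⟩)) zero_le

/-- A family of measurable sets stable under countable unions has a largest element up to null
sets. -/
theorem exists_max (h : Hyp S σ E) (C : Set (ι → S.Xpt) → Prop) (hm : ∀ A, C A → MeasurableSet A)
    (h0 : C ∅) (hU : ∀ A : ℕ → Set (ι → S.Xpt), (∀ j, C (A j)) → C (⋃ j, A j)) :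
    ∃ M, C M ∧ ∀ A, C A → σ (A \ M) = 0 := by
  have := h.sigmaFinite
  let ν := σ.toFinite
  have hb : ∀ A, ν A ≤ ν univ := fun A => measure_mono (subset_univ A)
  let s := ⨆ A : {A // C A}, ν A.1
  have hs : s ≠ ⊤ := ne_top_of_le_ne_top (measure_ne_top ν univ) (iSup_le fun A => hb A.1)
  have : Nonempty {A // C A} := ⟨⟨∅, h0⟩⟩
  obtain ⟨u, -, hu, hus⟩ := exists_seq_tendsto_sSup (S := range fun A : {A // C A} => ν A.1)
    (range_nonempty _) (OrderTop.bddAbove _)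
  choose A hA using hus
  have hCM := hU (fun j => (A j).1) fun j => (A j).2
  refine ⟨⋃ j, (A j).1, hCM, fun B hB => ?_⟩
  have hM : s ≤ ν (⋃ j, (A j).1) := by
    refine le_of_tendsto' hu fun j => ?_
    rw [← hA j]
    exact measure_mono (subset_iUnion (fun j => (A j).1) j)
  have hC2 : C (B ∪ ⋃ j, (A j).1) := by
    have := hU (fun j => if j = 0 then B else ⋃ j, (A j).1) fun j => by
      by_cases hj : j = 0 <;> simp [hj, hB, hCM]
    convert this using 1
    ext y
    constructor
    · rintro (hy | hy)
      · exact mem_iUnion.2 ⟨0, by simpa using hy⟩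
      · exact mem_iUnion.2 ⟨1, by simpa using hy⟩
    · intro hy
      obtain ⟨j, hj⟩ := mem_iUnion.1 hy
      by_cases h0 : j = 0
      · left; simpa [h0] using hj
      · right; simpa [h0] using hj
  have h2 : ν (B ∪ ⋃ j, (A j).1) ≤ ν (⋃ j, (A j).1) := (le_iSup (fun A : {A // C A} => ν A.1)
    ⟨_, hC2⟩).trans hM
  have h3 : ν (B \ ⋃ j, (A j).1) = 0 := by
    have e : B \ ⋃ j, (A j).1 = (B ∪ ⋃ j, (A j).1) \ ⋃ j, (A j).1 := by
      ext y; simp only [Set.mem_sdiff, mem_union]; tauto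
    rw [e, measure_sdiff subset_union_right (hm _ hCM).nullMeasurableSet (measure_ne_top _ _)]
    exact tsub_eq_zero_of_le h2
  exact absolutelyContinuous_toFinite σ h3

end Chacon


/-! ### Invariance under the twists that are asymptotically realized -/

namespace Chacon

variable {ι : Type} {S : NFC} [Fintype ι] {ν : Measure (ι → S.Xpt)} {E : ℕ}

theorem emb_TG (S : NFC) (G : Finset ι) (k : ℤ) : MeasurableEmbedding (TG S G k) := by
  refine (meas_TG S G k).measurableEmbedding fun y z hyz => ?_
  have := congrArg (TG S G (-k)) hyz
  rwa [TG_add, TG_add, neg_add_cancel, TG_zero, TG_zero] at this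

/-- An invariant set on which `T` acting on the coordinates in `G` contracts the measure is
null. -/
theorem contract_set (h : Hyp S ν E) {H G : Finset ι}
    (hiv : ∀ A, MeasurableSet A → InvS S H A → ν (A ∩ TG S G 1 ⁻¹' Aᶜ) = 0)
    {A : Set (ι → S.Xpt)} (hA : MeasurableSet A) (hAi : InvS S H A) {c : ℝ≥0∞} (hc : c < 1)
    (hle : (∀ B, MeasurableSet B → B ⊆ A → ν (TG S G 1 ⁻¹' B) ≤ c * ν B) ∨
      ∀ B, MeasurableSet B → B ⊆ A → ν B ≤ c * ν (TG S G 1 ⁻¹' B)) : ν A = 0 := by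
  have hG := meas_TG S G 1
  have hA' := hiv Aᶜ hA.compl hAi.compl
  rw [compl_compl] at hA'
  have e : ν A = ν.restrict A univ := by simp
  rw [e, Measure.measure_univ_eq_zero]
  have hr := h.mono (ν.restrict_le_self (s := A))
  rcases hle with hle | hle
  · refine contract_zero hr (G := G) (Or.inl rfl) hc fun B hB => ?_
    rw [Measure.restrict_apply (hB.preimage hG), Measure.restrict_apply hB]
    calc ν (TG S G 1 ⁻¹' B ∩ A) ≤ ν (TG S G 1 ⁻¹' (B ∩ A) ∪ A ∩ TG S G 1 ⁻¹' Aᶜ) := by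
          refine measure_mono ?_
          rintro y ⟨h1, h2⟩
          by_cases h3 : TG S G 1 y ∈ A
          · exact Or.inl ⟨h1, h3⟩
          · exact Or.inr ⟨h2, h3⟩
      _ ≤ ν (TG S G 1 ⁻¹' (B ∩ A)) + 0 := by rw [← hiv A hA hAi]; exact measure_union_le _ _
      _ ≤ _ := by rw [add_zero]; exact hle _ (hB.inter hA) inter_subset_right
  · refine contract_zero hr (G := G) (Or.inr rfl) hc fun B hB => ?_
    have hB' := hB.preimage (meas_TG S G (-1))
    have e2 : ∀ y, TG S G (-1) (TG S G 1 y) = y := fun y => by rw [TG_add]; simp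
    rw [Measure.restrict_apply hB', Measure.restrict_apply hB]
    calc ν (TG S G (-1) ⁻¹' B ∩ A) ≤ c * ν (TG S G 1 ⁻¹' (TG S G (-1) ⁻¹' B ∩ A)) :=
          hle _ (hB'.inter hA) inter_subset_right
      _ ≤ c * ν (B ∩ A ∪ Aᶜ ∩ TG S G 1 ⁻¹' A) := by
          refine mul_le_mul' le_rfl (measure_mono ?_)
          rintro y ⟨h1, h2⟩
          by_cases h3 : y ∈ A
          · refine Or.inl ⟨?_, h3⟩
            have : TG S G (-1) (TG S G 1 y) ∈ B := h1
            rwa [e2] at this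
          · exact Or.inr ⟨h3, h2⟩
      _ ≤ c * ν (B ∩ A) := by
          refine mul_le_mul' le_rfl ((measure_union_le _ _).trans ?_)
          rw [hA', add_zero]

/-- If no invariant set of positive measure is sent by the twist by `G` into an almost disjoint
set, the measure is invariant under this twist. -/
theorem twist_inv (h : Hyp S ν E) {H G : Finset ι} (hν : MeasurePreserving (TG S H 1) ν ν)
    (hrec : ∀ Y Y', MeasurableSet Y → InvS S H Y → (∀ y ∈ Y, TG S G 1 y ∈ Y') → ν (Y ∩ Y') = 0 →
      ν Y = 0) : MeasurePreserving (TG S G 1) ν ν := by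
  have hG := meas_TG S G 1
  have hH := meas_TG S H 1
  have hsf := h.sigmaFinite
  have hiv : ∀ A, MeasurableSet A → InvS S H A → ν (A ∩ TG S G 1 ⁻¹' Aᶜ) = 0 := by
    intro A hA hAi
    refine hrec _ Aᶜ (hA.inter (hA.compl.preimage hG)) (hAi.inter (hAi.compl.preimage 1))
      (fun y hy => hy.2) ?_
    refine measure_mono_null ?_ (measure_empty (μ := ν))
    exact fun y hy => hy.2 hy.1.1
  set ν' := ν.map (TG S G 1) with hν'
  have hsf' : SigmaFinite ν' := (emb_TG S G 1).sigmaFinite_map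
  have hac : ν' ≪ ν := by
    refine Measure.AbsolutelyContinuous.mk fun B hB hB0 => ?_
    rw [hν', Measure.map_apply hG hB]
    let B' : Set (ι → S.Xpt) := ⋃ k : ℤ, TG S H k ⁻¹' B
    have hB'm : MeasurableSet B' := MeasurableSet.iUnion fun k => hB.preimage (meas_TG S H k)
    have hB'i : InvS S H B' := fun k y => by
      simp only [B', mem_iUnion, mem_preimage, TG_add]
      exact ⟨fun ⟨j, hj⟩ => ⟨_, hj⟩, fun ⟨j, hj⟩ => ⟨j - k, by simpa using hj⟩⟩
    have hB'0 : ν B' = 0 := measure_iUnion_null fun k => by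
      rw [(mp_TG hν k).measure_preimage hB.nullMeasurableSet, hB0]
    have h0 : ν (TG S G 1 ⁻¹' B') = 0 := hrec _ B' (hB'm.preimage hG) (hB'i.preimage 1)
      (fun y hy => hy) (measure_mono_null inter_subset_right hB'0)
    refine measure_mono_null (preimage_mono fun y hy => ?_) h0
    exact mem_iUnion.2 ⟨0, by simpa using hy⟩
  let ρ := ν'.rnDeriv ν
  have hρm : Measurable ρ := Measure.measurable_rnDeriv _ _
  have hρ : ∀ B, MeasurableSet B → ∫⁻ y in B, ρ y ∂ν = ν (TG S G 1 ⁻¹' B) := fun B hB => by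
    rw [Measure.setLIntegral_rnDeriv' hac hB, hν', Measure.map_apply hG hB]
  have hρi : (fun y => ρ (TG S H 1 y)) =ᵐ[ν] ρ := by
    have h1 := (emb_TG S H 1).rnDeriv_map ν' ν
    have h2 : ν'.map (TG S H 1) = ν' := by
      rw [hν', Measure.map_map hH hG]
      conv_rhs => rw [← hν.map_eq, Measure.map_map hG hH]
      congr 1
      funext y
      exact TG_comm H G 1 1 y
    rwa [h2, hν.map_eq] at h1
  -- the level sets of the density are invariant up to null sets
  have hlev : ∀ J : Set ℝ≥0∞, MeasurableSet J →
      ∃ A, MeasurableSet A ∧ InvS S H A ∧ A =ᵐ[ν] ρ ⁻¹' J := by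
    intro J hJ
    have h1 : TG S H 1 ⁻¹' (ρ ⁻¹' J) =ᵐ[ν] ρ ⁻¹' J := by
      filter_upwards [hρi] with y hy
      apply propext
      change ρ (TG S H 1 y) ∈ J ↔ ρ y ∈ J
      rw [show ρ (TG S H 1 y) = ρ y from hy]
    obtain ⟨A, hA, hAJ, hAi⟩ := hν.quasiMeasurePreserving.exists_preimage_eq_of_preimage_ae
      (hJ.preimage hρm).nullMeasurableSet h1
    exact ⟨A, hA, invS_of_one hAi, hAJ⟩
  have hge : ∀ᵐ y ∂ν, ∀ q : ℚ, ((Real.toNNReal q : NNReal) : ℝ≥0∞) < 1 →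
      ¬ ρ y ≤ (Real.toNNReal q : NNReal) := by
    refine ae_all_iff.2 fun q => ?_
    by_cases hq : ((Real.toNNReal q : NNReal) : ℝ≥0∞) < 1
    · obtain ⟨A, hA, hAi, hAJ⟩ := hlev _ (measurableSet_Iic (a := ((Real.toNNReal q : NNReal) : ℝ≥0∞)))
      have h0 : ν A = 0 := by
        refine contract_set h hiv hA hAi hq (Or.inl fun B hB hBA => ?_)
        rw [← hρ B hB, ← setLIntegral_const]
        refine setLIntegral_mono_ae' hB ?_
        filter_upwards [hAJ.mem_iff] with y hy hyB
        exact hy.1 (hBA hyB)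
      rw [measure_congr hAJ] at h0
      have h0' : ∀ᵐ y ∂ν, y ∉ ρ ⁻¹' Iic ((Real.toNNReal q : NNReal) : ℝ≥0∞) :=
        measure_eq_zero_iff_ae_notMem.1 h0
      filter_upwards [h0'] with y hy _ using hy
    · exact ae_of_all _ fun y hy => absurd hy hq
  have hle : ∀ᵐ y ∂ν, ∀ q : ℚ, 1 < ((Real.toNNReal q : NNReal) : ℝ≥0∞) →
      ¬ ((Real.toNNReal q : NNReal) : ℝ≥0∞) ≤ ρ y := by
    refine ae_all_iff.2 fun q => ?_
    by_cases hq : 1 < ((Real.toNNReal q : NNReal) : ℝ≥0∞)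
    · obtain ⟨A, hA, hAi, hAJ⟩ := hlev _ (measurableSet_Ici (a := ((Real.toNNReal q : NNReal) : ℝ≥0∞)))
      have h0 : ν A = 0 := by
        refine contract_set h hiv hA hAi (ENNReal.inv_lt_one.2 hq) (Or.inr fun B hB hBA => ?_)
        have h1 : ((Real.toNNReal q : NNReal) : ℝ≥0∞) * ν B ≤ ν (TG S G 1 ⁻¹' B) := by
          rw [← hρ B hB, ← setLIntegral_const]
          refine setLIntegral_mono_ae' hB ?_
          filter_upwards [hAJ.mem_iff] with y hy hyB
          exact hy.1 (hBA hyB)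
        calc ν B = ((Real.toNNReal q : NNReal) : ℝ≥0∞)⁻¹ *
              (((Real.toNNReal q : NNReal) : ℝ≥0∞) * ν B) := by
              rw [← mul_assoc, ENNReal.inv_mul_cancel (zero_lt_one.trans hq).ne'
                ENNReal.coe_ne_top, one_mul]
          _ ≤ _ := mul_le_mul' le_rfl h1
      rw [measure_congr hAJ] at h0
      have h0' : ∀ᵐ y ∂ν, y ∉ ρ ⁻¹' Ici ((Real.toNNReal q : NNReal) : ℝ≥0∞) :=
        measure_eq_zero_iff_ae_notMem.1 h0
      filter_upwards [h0'] with y hy _ using hy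
    · exact ae_of_all _ fun y hy => absurd hy hq
  have hone : ρ =ᵐ[ν] 1 := by
    filter_upwards [hge, hle] with y h1 h2
    apply le_antisymm
    · by_contra hlt
      obtain ⟨q, -, hq1, hq2⟩ := ENNReal.lt_iff_exists_rat_btwn.1 (not_le.1 hlt)
      exact h2 q hq1 hq2.le
    · by_contra hlt
      obtain ⟨q, -, hq1, hq2⟩ := ENNReal.lt_iff_exists_rat_btwn.1 (not_le.1 hlt)
      exact h1 q hq2 hq1.le
  refine ⟨hG, ?_⟩
  rw [← hν', ← Measure.withDensity_rnDeriv_eq _ _ hac, withDensity_congr_ae hone,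
    withDensity_one]

/-- A measure invariant under `T` acting on the coordinates in `H` is carried, up to a null set, by
finitely many invariant sets, on each of which it is invariant under a proper twist. -/
theorem exists_twists (h : Hyp S ν E) {H : Finset ι} (hν : MeasurePreserving (TG S H 1) ν ν)
    (hH : 2 ≤ H.card) : ∃ (s : Finset (Fin 4 × Finset ι))
      (Ω : Fin 4 × Finset ι → Set (ι → S.Xpt)),
      (∀ g ∈ s, g.2 ⊆ H ∧ g.2.Nonempty ∧ g.2 ≠ H) ∧
      (∀ g, MeasurableSet (Ω g) ∧ InvS S H (Ω g)) ∧
      (∀ g ∈ s, ∀ W ⊆ Ω g, MeasurableSet W → InvS S H W →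
        MeasurePreserving (TG S g.2 1) (ν.restrict W) (ν.restrict W)) ∧
      ν (⋃ g ∈ s, Ω g)ᶜ = 0 := by
  have hmax : ∀ g : Fin 4 × Finset ι, ∃ M, (MeasurableSet M ∧ InvS S H M ∧ Ng ν H E g M) ∧
      ∀ A, (MeasurableSet A ∧ InvS S H A ∧ Ng ν H E g A) → ν (A \ M) = 0 := by
    intro g
    refine exists_max h _ (fun A hA => hA.1) ⟨MeasurableSet.empty, fun k y => by simp, ?_⟩ ?_
    · intro N; simp
    · exact fun A hA => ⟨MeasurableSet.iUnion fun j => (hA j).1, InvS.iUnion fun j => (hA j).2.1,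
        Ng.iUnion h (fun j => (hA j).1) fun j => (hA j).2.2⟩
  choose M hM hMm using hmax
  refine ⟨Finset.univ.filter fun g => g.2 ⊆ H ∧ g.2.Nonempty ∧ g.2 ≠ H, fun g => (M g)ᶜ,
    fun g hg => (Finset.mem_filter.1 hg).2, fun g => ⟨(hM g).1.compl, (hM g).2.1.compl⟩, ?_, ?_⟩
  · intro g _ W hW hWm hWi
    refine twist_inv (h.mono ν.restrict_le_self) (hWi.mp hWm hν) fun Y Y' hY hYi hm hd => ?_
    rw [Measure.restrict_apply hY]
    rw [Measure.restrict_apply' hWm] at hd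
    have hYW := hY.inter hWm
    have hn : Ng ν H E g (Y ∩ W) := ng_of_disjoint h hν g hYW (hYi.inter hWi) (Y' := Y')
      (fun y hy => hm y hy.1) (by rwa [inter_right_comm])
    have := hMm g _ ⟨hYW, hYi.inter hWi, hn⟩
    rwa [sdiff_eq_left.2 (Set.disjoint_left.2 fun y hy => hW hy.2)] at this
  · refine desync_null h hν hH (InvS.compl ?_) fun g g1 g2 g3 => (hM g).2.2.mono ?_
    · exact InvS.iUnion fun g => InvS.iUnion fun _ => (hM g).2.1.compl
    · intro y hy
      by_contra hyM
      exact hy (mem_iUnion₂.2 ⟨g, Finset.mem_filter.2 ⟨Finset.mem_univ _, g1, g2, g3⟩, hyM⟩)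

end Chacon


/-! ### Uniformity on boxes -/

namespace Chacon

variable {ι : Type} {S : NFC}

/-- The box of level `N` with positions `v`. -/
def Bx (S : NFC) (N : ℕ) (v : ι → ℕ) : Set (ι → S.Xpt) := {y | ∀ i, (y i).1 N = some (v i)}

/-- `κ` gives the same mass to boxes of the same level that differ only along `H`. -/
def Unif (S : NFC) (H : Finset ι) (κ : Measure (ι → S.Xpt)) : Prop :=
  ∀ (N : ℕ) (v v' : ι → ℕ), (∀ i, v i < S.hgt N) → (∀ i, v' i < S.hgt N) →
    (∀ i, i ∉ H → v i = v' i) → κ (Bx S N v) = κ (Bx S N v')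

theorem Unif.join {κ : Measure (ι → S.Xpt)} {G H : Finset ι} (hG : Unif S G κ)
    (hGH : Unif S (H \ G) κ) : Unif S H κ := by
  intro N v v' hv hv' he
  refine (hG N v (fun i => if i ∈ G then v' i else v i) hv (fun i => ?_) fun i hi => ?_).trans
    (hGH N _ v' (fun i => ?_) hv' fun i hi => ?_)
  · split_ifs
    exacts [hv' i, hv i]
  · simp [hi]
  · split_ifs
    exacts [hv' i, hv i]
  · by_cases h : i ∈ G
    · simp [h]
    · simp only [h, if_false]
      exact he i fun hiH => hi (Finset.mem_sdiff.2 ⟨hiH, h⟩)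

theorem mp_sdiff {κ : Measure (ι → S.Xpt)} {G H : Finset ι} (hGH : G ⊆ H)
    (hH : MeasurePreserving (TG S H 1) κ κ) (hG : MeasurePreserving (TG S G 1) κ κ) :
    MeasurePreserving (TG S (H \ G) 1) κ κ := by
  have e : TG S (H \ G) 1 = TG S G (-1) ∘ TG S H 1 := by
    funext y
    rw [Function.comp_apply, ← TG_sdiff hGH, TG_add]
    simp
  rw [e]
  exact (mp_TG hG (-1)).comp hH

variable [Fintype ι] {E : ℕ}

theorem meas_Bx (N : ℕ) (v : ι → ℕ) : MeasurableSet (Bx S N v) := by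
  have := (isOpen_lev (S := S) N {w | ∀ i : ι, w i = some (v i)}).measurableSet
  exact this

theorem unif_one {κ : Measure (ι → S.Xpt)} (h : Hyp S κ E) {a : ι}
    (hκ : MeasurePreserving (TG S {a} 1) κ κ) : Unif S {a} κ := by
  intro N v v' hv hv' he
  rw [← (mp_TG hκ ((v' a : ℤ) - v a)).measure_preimage (meas_Bx N v').nullMeasurableSet]
  apply measure_congr
  filter_upwards [h.ae_Oz] with y hO
  apply propext
  change (∀ i, (y i).1 N = some (v i)) ↔
    ∀ i, (TG S {a} ((v' a : ℤ) - v a) y i).1 N = some (v' i)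
  refine forall_congr' fun i => ?_
  by_cases hi : i = a
  · subst hi
    rw [TG_mem (Finset.mem_singleton_self _)]
    constructor
    · intro hy
      exact Tpz_pos S (hO i) hy _ (by omega) (hv' i)
    · intro hy
      have h1 := Tpz_pos S (x := (Tp S ^ ((v' i : ℤ) - v i)) (y i))
        (fun hc => hO i ((Tpz_mem_Oz S _ _).1 hc)) hy ((v i : ℤ) - v' i) (j' := v i)
        (by omega) (hv i)
      rwa [← Equiv.Perm.mul_apply, ← zpow_add, show (v i : ℤ) - v' i + (v' i - v i) = 0 by ring,
        zpow_zero, Equiv.Perm.one_apply] at h1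
  · rw [TG_not_mem (by simpa using hi), he i (by simpa using hi)]

/-- A measure whose coordinates lie in distinct orbits and which is invariant under `T` acting on
the coordinates in `H` gives the same mass to boxes that differ only along `H`. -/
theorem unif : ∀ (m : ℕ) (H : Finset ι), H.card = m → ∀ κ : Measure (ι → S.Xpt), Hyp S κ E →
    MeasurePreserving (TG S H 1) κ κ → Unif S H κ := by
  intro m
  induction m using Nat.strong_induction_on with
  | _ m ih =>
    intro H hm κ hκ hH
    rcases Nat.lt_or_ge m 2 with hm2 | hm2
    · rcases (by omega : m = 0 ∨ m = 1) with h0 | h1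
      · rw [h0, Finset.card_eq_zero] at hm
        subst hm
        intro N v v' _ _ he
        rw [show v = v' from funext fun i => he i (by simp)]
      · rw [h1, Finset.card_eq_one] at hm
        obtain ⟨a, rfl⟩ := hm
        exact unif_one hκ hH
    obtain ⟨s, Ω, hs, hΩ, htw, hnull⟩ := exists_twists hκ hH (hm ▸ hm2)
    -- the invariant sets are treated one after the other
    have key : ∀ t : Finset (Fin 4 × Finset ι), t ⊆ s → ∀ W ⊆ ⋃ g ∈ t, Ω g, MeasurableSet W →
        InvS S H W → Unif S H (κ.restrict W) := by
      intro t
      induction t using Finset.induction_on with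
      | empty =>
        intro _ W hW _ _
        have : W = ∅ := by simpa using hW
        subst this
        intro N v v' _ _ _
        simp
      | insert g t _ iht =>
        intro hts W hW hWm hWi N v v' hv hv' he
        have hgs := hts (Finset.mem_insert_self g t)
        have hW1m := hWm.inter (hΩ g).1
        have hW1i := hWi.inter (hΩ g).2
        have hW2 := iht (fun x hx => hts (Finset.mem_insert_of_mem hx)) (W \ Ω g) (by
          rintro y ⟨h1, h2⟩
          have := hW h1
          rw [Finset.set_biUnion_insert] at this
          exact this.resolve_left h2) (hWm.diff (hΩ g).1) (hWi.inter (hΩ g).2.compl)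
        have hW1 : Unif S H (κ.restrict (W ∩ Ω g)) := by
          have hr : Hyp S (κ.restrict (W ∩ Ω g)) E := hκ.mono Measure.restrict_le_self
          have hG := htw g hgs _ inter_subset_right hW1m hW1i
          obtain ⟨g1, g2, g3⟩ := hs g hgs
          have hc1 := Finset.card_lt_card (Finset.ssubset_iff_subset_ne.2 ⟨g1, g3⟩)
          have hc2 := Finset.card_sdiff_add_card_eq_card g1
          have hc3 := g2.card_pos
          exact (ih _ (by omega) g.2 rfl _ hr hG).join
            (ih _ (by omega) (H \ g.2) rfl _ hr (mp_sdiff g1 (hW1i.mp hW1m hH) hG))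
        have hsum : ∀ A, κ.restrict W A = κ.restrict (W ∩ Ω g) A + κ.restrict (W \ Ω g) A := by
          intro A
          rw [← Measure.add_apply, Measure.restrict_inter_add_sdiff _ (hΩ g).1]
        rw [hsum, hsum, hW1 N v v' hv hv' he, hW2 N v v' hv hv' he]
    have := key s subset_rfl _ subset_rfl
      (Finset.measurableSet_biUnion s fun g _ => (hΩ g).1)
      (InvS.iUnion fun g => InvS.iUnion fun _ => (hΩ g).2)
    rwa [Measure.restrict_eq_self_of_ae_mem] at this
    exact measure_eq_zero_iff_ae_notMem.1 hnull |>.mono fun y hy => not_not.1 hy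

end Chacon


/-! ### Multiples of the product measure -/

namespace Chacon

variable {ι : Type} {S : NFC} {E : ℕ}

instance sigmaFinite_mu (S : NFC) : SigmaFinite S.μ := S.μ_sfin

theorem Bx_disjoint {N : ℕ} {v v' : ι → ℕ} (h : v ≠ v') : Disjoint (Bx S N v) (Bx S N v') :=
  Set.disjoint_left.2 fun _ hy hy' =>
    h (funext fun i => Option.some.inj ((hy i).symm.trans (hy' i)))

/-- Each box is the union of the boxes of the next level corresponding to a choice of
subcolumns. -/
theorem Bx_succ {N : ℕ} {v : ι → ℕ} (hv : ∀ i, v i < S.hgt N) :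
    Bx S N v = ⋃ t : ι → Fin 3, Bx S (N + 1) fun i => off S.toNFCseq N (t i) + v i := by
  ext y
  simp only [mem_iUnion]
  constructor
  · intro hy
    refine ⟨fun i => ⟨dig S.toNFCseq N (y i), by have := dig_le S.toNFCseq N (y i); omega⟩, ?_⟩
    exact fun i => (succ_of (hy i)).2
  · rintro ⟨t, ht⟩ i
    exact of_succ (by have := (t i).2; omega) (hv i) (ht i)

theorem Bx_exists (N₁ : ℕ) [Finite ι] (y : ι → S.Xpt) :
    ∃ N v, N₁ ≤ N ∧ (∀ i, v i < S.hgt N) ∧ y ∈ Bx S N v := by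
  cases nonempty_fintype ι
  choose n hn using fun i => (y i).2.2
  let N := max N₁ (Finset.univ.sup n)
  have h : ∀ i, ∃ v, (y i).1 N = some v := fun i => Option.ne_none_iff_exists'.1
    (some_mono ((Finset.le_sup (f := n) (Finset.mem_univ i)).trans (le_max_right _ _)) (hn i))
  choose v hv using h
  exact ⟨N, v, le_max_left _ _, fun i => lt_hgt (hv i), hv⟩

variable [Fintype ι]

theorem Unif.succ {κ : Measure (ι → S.Xpt)} (h : Unif S Finset.univ κ) (N : ℕ) :
    κ (Bx S N 0) = 3 ^ Fintype.card ι * κ (Bx S (N + 1) 0) := by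
  have h0 : ∀ i : ι, (0 : ι → ℕ) i < S.hgt N := fun _ => S.hgt_pos N
  rw [Bx_succ h0, measure_iUnion (fun t t' htt => Bx_disjoint fun he => htt ?_)
    fun t => meas_Bx _ _]
  · rw [tsum_fintype, Finset.sum_congr rfl fun t _ => h (N + 1) _ 0 (fun i =>
      off_add_lt S.toNFCseq (by have := (t i).2; omega) (h0 i)) (fun _ => S.hgt_pos _)
      (by simp)]
    simp
  · funext i
    have := congrFun he i
    simp only [off] at this
    have hp := S.hgt_pos N
    apply Fin.ext
    have h1 := (t i).2
    have h2 := (t' i).2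
    generalize (t i : ℕ) = a at *
    generalize (t' i : ℕ) = b at *
    interval_cases a <;> interval_cases b <;> omega

theorem pi_Bx {N : ℕ} {v : ι → ℕ} (hv : ∀ i, v i < S.hgt N) :
    Measure.pi (fun _ : ι => S.μ) (Bx S N v) = ((3 : ℝ≥0∞)⁻¹ ^ N) ^ Fintype.card ι := by
  have : Bx S N v = Set.univ.pi fun i => S.level N (v i) := by
    ext y; simp [Bx, NFCseq.level]
  rw [this, Measure.pi_pi, Finset.prod_congr rfl fun i _ => S.μ_level N _ (hv i)]
  simp

/-- A measure whose coordinates lie in distinct orbits and which is invariant under the Cartesian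
power of `T` is a multiple of the product measure. -/
theorem prodform {κ : Measure (ι → S.Xpt)} (h : Hyp S κ E)
    (hκ : MeasurePreserving (TG S Finset.univ 1) κ κ) :
    ∃ c : ℝ≥0∞, c ≠ ⊤ ∧ κ = c • Measure.pi fun _ : ι => S.μ := by
  have hU := unif _ Finset.univ rfl κ h hκ
  let N₁ := 2 * E
  let c : ℝ≥0∞ := κ (Bx S N₁ 0) * (3 ^ N₁) ^ Fintype.card ι
  have hEN : E + E < S.hgt N₁ := by
    have := le_hgt S.toNFCseq N₁
    omega
  have hfin : κ (Bx S N₁ 0) < ⊤ := by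
    rw [hU N₁ 0 (fun _ => E) (fun _ => S.hgt_pos _) (fun _ => by omega) (by simp)]
    refine (measure_mono fun y hy i => ?_).trans_lt (h.fin N₁)
    exact ⟨E, hy i, le_rfl, hEN⟩
  have hc : c ≠ ⊤ := ENNReal.mul_ne_top hfin.ne
    (ENNReal.pow_ne_top (ENNReal.pow_ne_top (by simp)))
  have hw : ∀ N, N₁ ≤ N → κ (Bx S N 0) = c * ((3 : ℝ≥0∞)⁻¹ ^ N) ^ Fintype.card ι := by
    intro N hN
    induction N, hN using Nat.le_induction with
    | base =>
      rw [mul_assoc, ← mul_pow, ← mul_pow, ENNReal.mul_inv_cancel (by simp) (by simp)]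
      simp
    | succ N _ ih =>
      rw [hU.succ N] at ih
      have h3 : (3 : ℝ≥0∞)⁻¹ ^ Fintype.card ι * 3 ^ Fintype.card ι = 1 := by
        rw [← mul_pow, ENNReal.inv_mul_cancel (by simp) (by simp), one_pow]
      rw [← one_mul (κ _), ← h3, mul_assoc, ih, pow_succ, mul_pow]
      ring
  refine ⟨c, hc, ?_⟩
  let C : Set (Set (ι → S.Xpt)) :=
    {B | ∃ N v, N₁ ≤ N ∧ (∀ i, v i < S.hgt N) ∧ B = Bx S N v}
  have hC : C.Countable := by
    have : C ⊆ range fun p : ℕ × (ι → ℕ) => Bx S p.1 p.2 := by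
      rintro _ ⟨N, v, -, -, rfl⟩
      exact ⟨(N, v), rfl⟩
    exact (countable_range _).mono this
  have hval : ∀ B ∈ C, κ B = (c • Measure.pi fun _ : ι => S.μ) B := by
    rintro _ ⟨N, v, hN, hv, rfl⟩
    rw [hU N v 0 hv (fun _ => S.hgt_pos _) (by simp), hw N hN, Measure.smul_apply, pi_Bx hv,
      smul_eq_mul]
  have hbas : TopologicalSpace.IsTopologicalBasis C := by
    refine TopologicalSpace.isTopologicalBasis_of_isOpen_of_nhds ?_ fun w O hw hO => ?_
    · rintro _ ⟨N, v, -, -, rfl⟩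
      exact isOpen_lev N {w | ∀ i : ι, w i = some (v i)}
    · obtain ⟨n, hn⟩ := lev_nbhd hO hw
      obtain ⟨N, v, hN, hv, hwv⟩ := Bx_exists (max N₁ n) w
      refine ⟨_, ⟨N, v, (le_max_left _ _).trans hN, hv, rfl⟩, hwv, fun z hz => hn z fun i => ?_⟩
      exact down ((le_max_right _ _).trans hN) ((hz i).trans (hwv i).symm)
  refine Measure.ext_of_generateFrom_of_cover_subset (S := C) (T := C)
    ((BorelSpace.measurable_eq (α := ι → S.Xpt)).trans hbas.borel_eq_generateFrom) ?_ subset_rfl hC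
    ?_ ?_ hval
  · rintro _ ⟨N, v, hN, hv, rfl⟩ _ ⟨M, w, hM, hw, rfl⟩ ⟨y, hy1, hy2⟩
    rcases le_total N M with hNM | hNM
    · refine ⟨M, w, hM, hw, inter_eq_right.2 fun z hz i => ?_⟩
      rw [← hy1 i]
      exact down hNM ((hz i).trans (hy2 i).symm)
    · refine ⟨N, v, hN, hv, inter_eq_left.2 fun z hz i => ?_⟩
      rw [← hy2 i]
      exact down hNM ((hz i).trans (hy1 i).symm)
  · refine eq_univ_of_forall fun y => ?_
    obtain ⟨N, v, hN, hv, hy⟩ := Bx_exists N₁ y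
    exact mem_sUnion.2 ⟨_, ⟨N, v, hN, hv, rfl⟩, hy⟩
  · rintro _ ⟨N, v, hN, hv, rfl⟩
    rw [hval _ ⟨N, v, hN, hv, rfl⟩, Measure.smul_apply, pi_Bx hv]
    exact ENNReal.mul_ne_top hc (ENNReal.pow_ne_top (ENNReal.pow_ne_top (by simp)))

end Chacon


/-! ### Orbit types -/

namespace Chacon

/-- The orbit type of a point of `X^d`: a representative `ρ i` of the coordinates lying in the
same orbit as the `i`-th one, and the time `e i` leading from the former coordinate to the
latter. -/
structure OType (d : ℕ) where
  ρ : Fin d → Fin d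
  e : Fin d → ℤ
  idem : ∀ i, ρ (ρ i) = ρ i
  e_rep : ∀ i, ρ i = i → e i = 0

namespace OType

variable {d : ℕ} {S : NFC} (θ : OType d)

instance (d : ℕ) : Countable (OType d) :=
  Function.Injective.countable (f := fun θ : OType d => (θ.ρ, θ.e)) (by
    rintro ⟨_, _, _, _⟩ ⟨_, _, _, _⟩ h
    simp only [Prod.mk.injEq] at h
    obtain ⟨rfl, rfl⟩ := h
    rfl)

instance (d : ℕ) : Nonempty (OType d) := ⟨⟨id, 0, fun _ => rfl, fun _ _ => rfl⟩⟩

/-- The representatives. -/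
abbrev Rep : Type := {i : Fin d // θ.ρ i = i}

/-- The representative of the `i`-th coordinate. -/
def rep (i : Fin d) : θ.Rep := ⟨θ.ρ i, θ.idem i⟩

/-- The points of `X^d` of orbit type `θ`. -/
def pts (S : NFC) : Set (S.Xd d) :=
  {x | (∀ i, (Tp S ^ θ.e i) (x (θ.ρ i)) = x i) ∧
    ∀ i j, θ.ρ i = i → θ.ρ j = j → i ≠ j → ∀ k : ℤ, (Tp S ^ k) (x i) ≠ x j}

/-- The point of `X^d` of orbit type `θ` with given representative coordinates. -/
def Γ (S : NFC) (z : θ.Rep → S.Xpt) : S.Xd d := fun i => (Tp S ^ θ.e i) (z (θ.rep i))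

/-- The representative coordinates of a point. -/
def pr (S : NFC) (x : S.Xd d) : θ.Rep → S.Xpt := fun i => x i.1

theorem meas_pr : Measurable (θ.pr S) := measurable_pi_iff.2 fun i => measurable_pi_apply i.1

theorem meas_Γ : Measurable (θ.Γ S) :=
  measurable_pi_iff.2 fun _ => (meas_Tpz S _).comp (measurable_pi_apply _)

theorem Γ_pr {x : S.Xd d} (hx : x ∈ θ.pts S) : θ.Γ S (θ.pr S x) = x := funext hx.1

theorem meas_pts : MeasurableSet (θ.pts S) := by
  apply measurableSet_setOfPred.2
  have h : ∀ (i j : Fin d) (k : ℤ), Measurable fun x : S.Xd d => (Tp S ^ k) (x i) = x j :=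
    fun i j k => measurableSet_setOfPred.1 (measurableSet_eq_fun
      ((meas_Tpz S k).comp (measurable_pi_apply i)) (measurable_pi_apply j))
  refine (Measurable.forall fun i => h _ _ _).and ?_
  exact Measurable.forall fun i => Measurable.forall fun j => measurable_const.imp
    (measurable_const.imp (measurable_const.imp (Measurable.forall fun k => (h i j k).not)))

theorem inv_pts : InvS S Finset.univ (θ.pts S) := by
  intro m x
  have h : ∀ (i j : Fin d) (k : ℤ), (Tp S ^ k) (TG S Finset.univ m x i) = TG S Finset.univ m x j ↔
      (Tp S ^ k) (x i) = x j := by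
    intro i j k
    rw [TG_mem (Finset.mem_univ _), TG_mem (Finset.mem_univ _), ← Equiv.Perm.mul_apply,
      ← zpow_add, add_comm, zpow_add, Equiv.Perm.mul_apply, (Tp S ^ m).injective.eq_iff]
  simp only [pts, mem_ofPred_eq, ne_eq, h]

theorem exists_pts (x : S.Xd d) : ∃ θ : OType d, x ∈ θ.pts S := by
  let s : Setoid (Fin d) :=
    { r := fun i j => ∃ k : ℤ, (Tp S ^ k) (x i) = x j
      iseqv :=
        { refl := fun i => ⟨0, by simp⟩
          symm := by
            rintro i j ⟨k, hk⟩
            exact ⟨-k, by rw [← hk, ← Equiv.Perm.mul_apply, ← zpow_add]; simp⟩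
          trans := by
            rintro i j l ⟨k, hk⟩ ⟨k', hk'⟩
            exact ⟨k' + k, by rw [zpow_add, Equiv.Perm.mul_apply, hk, hk']⟩ } }
  let ρ : Fin d → Fin d := fun i => (Quotient.mk s i).out
  have hρ : ∀ i, ∃ k : ℤ, (Tp S ^ k) (x (ρ i)) = x i := fun i => Quotient.mk_out (s := s) i
  have hρ' : ∀ i j, (∃ k : ℤ, (Tp S ^ k) (x i) = x j) → ρ i = ρ j := fun i j h => by
    have : Quotient.mk s i = Quotient.mk s j := Quotient.sound h
    simp only [ρ, this]
  choose e he using hρ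
  refine ⟨⟨ρ, fun i => if ρ i = i then 0 else e i, fun i => hρ' _ _ ⟨_, he i⟩, fun i hi => by
    simp [hi]⟩, fun i => ?_, fun i j hi hj hij k hk => hij ?_⟩
  · by_cases hi : ρ i = i
    · simp [hi]
    · simp [hi, he]
  · exact hi.symm.trans ((hρ' i j ⟨k, hk⟩).trans hj)

end OType

/-- The hypotheses on `σ`, in terms of the bimeasurable bijection `Tp`. -/
structure Nice (S : NFC) {d : ℕ} (σ : Measure (S.Xd d)) : Prop where
  rad : S.IsRadon d σ
  ac : ∀ (i : Fin d) (A : Set S.Xpt), MeasurableSet A → S.μ A = 0 → σ {y | y i ∈ A} = 0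
  mp : MeasurePreserving (TG S Finset.univ 1) σ σ

variable {S : NFC} {d : ℕ} {σ : Measure (S.Xd d)}

/-- The points none of whose coordinates lies in the orbit of `𝟎`. -/
def Reg (S : NFC) (d : ℕ) : Set (S.Xd d) := {y | ∀ i, y i ∉ Oz S}

theorem meas_Reg : MeasurableSet (Reg S d) := by
  have : Reg S d = ⋂ i, (fun y : S.Xd d => y i) ⁻¹' (Oz S)ᶜ := by ext y; simp [Reg]
  rw [this]
  exact MeasurableSet.iInter fun i =>
    (Oz_countable S).measurableSet.compl.preimage (measurable_pi_apply i)

theorem ae_Reg (h : ∀ (i : Fin d) (A : Set S.Xpt), MeasurableSet A → S.μ A = 0 →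
    σ {y | y i ∈ A} = 0) : ∀ᵐ y ∂σ, y ∈ Reg S d := by
  refine ae_all_iff.2 fun i => ?_
  have := h i _ (Oz_countable S).measurableSet (mu_Oz S)
  rw [ae_iff]; simpa using this

theorem Td_eq {y : S.Xd d} (hy : y ∈ Reg S d) : S.Td d y = TG S Finset.univ 1 y := funext fun i => by
  rw [TG_mem (Finset.mem_univ i), zpow_one, Tp_apply S (hy i)]; rfl

theorem Nice.restrict (h : Nice S σ) {A : Set (S.Xd d)} (hA : MeasurableSet A)
    (hi : InvS S Finset.univ A) : Nice S (σ.restrict A) where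
  rad n := (Measure.restrict_apply_le _ _).trans_lt (h.rad n)
  ac i B hB hB0 := le_antisymm ((Measure.restrict_apply_le _ _).trans (h.ac i B hB hB0).le) zero_le
  mp := hi.mp hA h.mp

/-- An invariant measure carried by the points of a given orbit type is a multiple of the image
of the product measure under the parametrization by the representative coordinates. -/
theorem Nice.form (h : Nice S σ) (θ : OType d) (hθ : ∀ᵐ x ∂σ, x ∈ θ.pts S) :
    ∃ c : ℝ≥0∞, c ≠ ⊤ ∧ σ = c • (Measure.pi fun _ : θ.Rep => S.μ).map (θ.Γ S) := by
  have hpr := θ.meas_pr (S := S)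
  have hH : Hyp S (σ.map (θ.pr S)) (Finset.univ.sup fun i => (θ.e i).natAbs) := by
    refine ⟨fun N => ?_, fun i A hA hA0 => ?_, fun i j hij k => ?_⟩
    · rw [Measure.map_apply hpr (meas_Inn _ _)]
      refine (measure_mono_ae ?_).trans_lt (h.rad N)
      filter_upwards [hθ, ae_Reg h.ac] with x hx hO hxN i
      obtain ⟨j, h1, h2, h3⟩ := hxN (θ.rep i)
      have h4 : (θ.e i).natAbs ≤ _ :=
        Finset.le_sup (f := fun i => (θ.e i).natAbs) (Finset.mem_univ i)
      have h5 := Tpz_pos S (hO (θ.ρ i)) h1 (θ.e i) (j' := (j + θ.e i).toNat) (by omega) (by omega)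
      show (x i).1 N ≠ none
      rw [← hx.1 i, h5]
      simp
    · have hm : MeasurableSet {y : θ.Rep → S.Xpt | y i ∈ A} :=
        hA.preimage (measurable_pi_apply i)
      rw [Measure.map_apply hpr hm]
      exact h.ac i.1 A hA hA0
    · have hm : MeasurableSet {y : θ.Rep → S.Xpt | (Tp S ^ k) (y i) = y j} :=
        measurableSet_eq_fun ((meas_Tpz S k).comp (measurable_pi_apply i)) (measurable_pi_apply j)
      rw [Measure.map_apply hpr hm]
      refine measure_mono_null (fun x hx => ?_) (ae_iff.1 hθ)
      exact fun hx' => hx'.2 i j i.2 j.2 (fun he => hij (Subtype.ext he)) k hx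
  have hcomm : θ.pr S ∘ TG S Finset.univ 1 = TG S Finset.univ 1 ∘ θ.pr S := by
    funext x i
    rw [Function.comp_apply, Function.comp_apply, TG_mem (Finset.mem_univ _), OType.pr,
      TG_mem (Finset.mem_univ _)]
    rfl
  have hM : MeasurePreserving (TG S Finset.univ 1) (σ.map (θ.pr S)) (σ.map (θ.pr S)) := by
    refine ⟨meas_TG S _ _, ?_⟩
    rw [Measure.map_map (meas_TG S _ _) hpr, ← hcomm, ← Measure.map_map hpr (meas_TG S _ _),
      h.mp.map_eq]
  obtain ⟨c, hc, he⟩ := prodform hH hM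
  refine ⟨c, hc, ?_⟩
  rw [← Measure.map_smul, ← he, Measure.map_map θ.meas_Γ hpr]
  conv_lhs => rw [← Measure.map_id (μ := σ)]
  refine Measure.map_congr ?_
  filter_upwards [hθ] with x hx
  exact (θ.Γ_pr hx).symm

theorem Nice.mp_Td (h : Nice S σ) : MeasurePreserving (S.Td d) σ σ := by
  refine ⟨measurable_pi_iff.2 fun i => S.T_meas.comp (measurable_pi_apply i), ?_⟩
  rw [← h.mp.map_eq, Measure.map_congr (g := TG S Finset.univ 1), h.mp.map_eq, h.mp.map_eq]
  rw [h.mp.map_eq]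
  filter_upwards [ae_Reg h.ac] with y hy using Td_eq hy

/-- An invariant measure carried by the points of a given orbit type is ergodic: its restrictions
to invariant sets are multiples of the same measure. -/
theorem Nice.ergodic (h : Nice S σ) (θ : OType d) (hθ : ∀ᵐ x ∂σ, x ∈ θ.pts S) :
    Ergodic (S.Td d) σ := by
  refine ⟨h.mp_Td, ⟨fun {s} hs hinv => ?_⟩⟩
  have hR := ae_Reg h.ac
  have hsm : MeasurableSet (s ∩ Reg S d) := hs.inter meas_Reg
  have hsi : InvS S Finset.univ (s ∩ Reg S d) := by
    refine invS_of_one (Set.ext fun y => ?_)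
    have hReg : TG S Finset.univ 1 y ∈ Reg S d ↔ y ∈ Reg S d := forall_congr' fun i => by
      rw [TG_mem (Finset.mem_univ _), Tpz_mem_Oz]
    rw [mem_preimage, mem_inter_iff, mem_inter_iff, hReg]
    refine and_congr_left fun hy => ?_
    rw [← Td_eq hy]
    conv_rhs => rw [← hinv]
    rfl
  have hss : s =ᵐ[σ] (s ∩ Reg S d : Set _) := by
    filter_upwards [hR] with y hy
    exact propext ⟨fun h => ⟨h, hy⟩, fun h => h.1⟩
  obtain ⟨a, -, ha⟩ := (h.restrict hsm hsi).form θ (ae_restrict_of_ae hθ)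
  obtain ⟨b, -, hb⟩ := (h.restrict hsm.compl hsi.compl).form θ (ae_restrict_of_ae hθ)
  generalize (Measure.pi fun _ : θ.Rep => S.μ).map (θ.Γ S) = m at ha hb
  rw [eventuallyConst_set']
  by_cases ha0 : a = 0
  · left
    refine hss.trans (ae_eq_empty.2 ?_)
    rw [← Measure.restrict_apply_self, ha, ha0]
    simp
  · right
    refine hss.trans (ae_eq_univ.2 ?_)
    have h1 : σ.restrict (s ∩ Reg S d) (s ∩ Reg S d)ᶜ = 0 := by
      rw [Measure.restrict_apply hsm.compl]; simp
    rw [ha, Measure.smul_apply, smul_eq_mul, mul_eq_zero] at h1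
    rw [← Measure.restrict_apply_self, hb, Measure.smul_apply, h1.resolve_left ha0, smul_zero]

theorem iter_T {x : S.Xpt} (hx : x ∉ Oz S) (n : ℕ) : S.T^[n] x = (Tp S ^ (n : ℤ)) x := by
  induction n with
  | zero => simp
  | succ n ih =>
    rw [Function.iterate_succ_apply', ih, ← Tp_apply S (by rwa [Tpz_mem_Oz]), Nat.cast_succ,
      add_comm, zpow_add, Equiv.Perm.mul_apply, zpow_one]

theorem mem_preT {x : S.Xpt} (hx : x ∉ Oz S) (k : ℤ) (A : Set S.Xpt) :
    x ∈ S.preT k A ↔ (Tp S ^ k) x ∈ A := by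
  cases k with
  | ofNat n =>
    change S.T^[n] x ∈ A ↔ _
    rw [iter_T hx]; rfl
  | negSucc n =>
    have h1 : S.T^[n + 1] ((Tp S ^ Int.negSucc n) x) = x := by
      rw [iter_T (by rwa [Tpz_mem_Oz]), ← Equiv.Perm.mul_apply, ← zpow_add,
        show ((n + 1 : ℕ) : ℤ) + Int.negSucc n = 0 by omega]
      simp
    constructor
    · rintro ⟨y, hy, hyx⟩
      rw [← hyx] at h1
      rw [← hyx, (S.T_inj.iterate _) h1]
      exact hy
    · exact fun h => ⟨_, h, h1⟩

/-- The image of a multiple of the product measure is a product of graph measures. -/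
theorem product_form (hd : 1 ≤ d) (θ : OType d) {c : ℝ≥0∞} (hc : c ≠ ⊤) (hc0 : c ≠ 0) :
    S.IsProductOfGraphMeasures d (c • (Measure.pi fun _ : θ.Rep => S.μ).map (θ.Γ S)) := by
  let ε := (Fintype.equivFin θ.Rep).symm
  let D : Fin (Fintype.card θ.Rep) → Finset (Fin d) := fun j => {i | θ.rep i = ε j}
  have hD : ∀ i j, i ∈ D j ↔ θ.rep i = ε j := fun i j => by simp [D]
  -- the constant `c` is attributed to one of the blocks
  let j₀ := ε.symm (θ.rep ⟨0, hd⟩)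
  let α : Fin (Fintype.card θ.Rep) → ℝ≥0∞ := fun j => if j = j₀ then c else 1
  let G : ∀ j, S.Xpt → {i // i ∈ D j} → S.Xpt := fun j z i => (Tp S ^ θ.e i.1) z
  have hG : ∀ j, Measurable (G j) := fun j => measurable_pi_iff.2 fun i => meas_Tpz S _
  have hσ : ∀ j (A : {i // i ∈ D j} → Set S.Xpt), (∀ i, MeasurableSet (A i)) →
      (α j • S.μ.map (G j)) (Set.univ.pi A) = α j * S.μ {z | ∀ i, (Tp S ^ θ.e i.1) z ∈ A i} := by
    intro j A hA
    rw [Measure.smul_apply, Measure.map_apply (hG j) (MeasurableSet.univ_pi hA), smul_eq_mul]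
    congr 2
    ext z; simp [G]
  refine ⟨_, D, fun j => ⟨(ε j).1, (hD _ _).2 (Subtype.ext (ε j).2)⟩, fun j j' hjj => ?_,
    fun i => ⟨ε.symm (θ.rep i), (hD _ _).2 (by simp)⟩, fun j => α j • S.μ.map (G j),
    fun j => ⟨α j, ?_, ?_, fun i => θ.e i.1, fun A hA => ?_⟩, fun A hA => ?_⟩
  · refine Finset.disjoint_left.2 fun i hi hi' => hjj (ε.injective ?_)
    rw [← (hD _ _).1 hi, (hD _ _).1 hi']
  · simp only [α]; split_ifs
    exacts [pos_iff_ne_zero.2 hc0, one_pos]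
  · simp only [α]; split_ifs
    exacts [hc, ENNReal.one_ne_top]
  · rw [hσ j A hA]
    congr 1
    apply measure_congr
    have : ∀ᵐ z ∂S.μ, z ∉ Oz S := measure_eq_zero_iff_ae_notMem.1 (mu_Oz S)
    filter_upwards [this] with z hz
    apply propext
    change (∀ i, _) ↔ z ∈ ⋂ i, _
    simp only [mem_iInter, mem_preT hz]
  · rw [Finset.prod_congr rfl fun j _ => hσ j _ fun i => hA i.1, Finset.prod_mul_distrib,
      show ∏ j, α j = c by simp [α], Measure.smul_apply, smul_eq_mul,
      Measure.map_apply θ.meas_Γ (MeasurableSet.univ_pi hA)]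
    have : θ.Γ S ⁻¹' Set.univ.pi A = Set.univ.pi fun r : θ.Rep =>
        {z | ∀ i, θ.rep i = r → (Tp S ^ θ.e i) z ∈ A i} := by
      ext z
      simp only [mem_preimage, mem_univ_pi, mem_ofPred_eq, OType.Γ]
      constructor
      · rintro h _ i rfl
        exact h i
      · exact fun h i => h _ i rfl
    rw [this, Measure.pi_pi]
    congr 1
    refine (Fintype.prod_equiv ε _ _ fun j => ?_).symm
    congr 1
    ext z
    simp only [mem_ofPred_eq, Subtype.forall, hD]

end Chacon


/-- Every nonzero, Radon, `T^{×d}`-invariant measure on `X^d` whose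
marginals are absolutely continuous with respect to `μ` decomposes as a countable sum of
ergodic components, each of which is a product of graph measures arising from powers of `T`
over a partition of `{1,…,d}`. -/
theorem stmt1 (S : NFC) (d : ℕ) (hd : 1 ≤ d) (σ : Measure (S.Xd d))
    (hσ0 : σ ≠ 0) (hR : S.IsRadon d σ) (hinv : S.InvariantD d σ)
    (hac : ∀ i : Fin d, Measure.map (fun y : S.Xd d => y i) σ ≪ S.μ) :
    ∃ σs : ℕ → Measure (S.Xd d),
      σ = Measure.sum σs ∧
      ∀ k : ℕ, σs k = 0 ∨
        (Ergodic (S.Td d) (σs k) ∧ S.IsProductOfGraphMeasures d (σs k)) := by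
  have hac' : ∀ (i : Fin d) (A : Set S.Xpt), MeasurableSet A → S.μ A = 0 →
      σ {y | y i ∈ A} = 0 := fun i A hA hA0 => by
    have := hac i hA0
    rwa [Measure.map_apply (measurable_pi_apply i) hA] at this
  have hTd : Measurable (S.Td d) :=
    measurable_pi_iff.2 fun i => S.T_meas.comp (measurable_pi_apply i)
  have hmp : (σ.map (S.Td d)) = σ := Measure.ext fun A hA => by
    rw [Measure.map_apply hTd hA, hinv A hA]
  have hN : Chacon.Nice S σ := by
    refine ⟨hR, hac', Chacon.meas_TG S _ _, ?_⟩
    conv_rhs => rw [← hmp]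
    refine Measure.map_congr ?_
    filter_upwards [Chacon.ae_Reg hac'] with y hy using (Chacon.Td_eq hy).symm
  -- the orbit types split the space into countably many invariant pieces
  obtain ⟨f, hf⟩ := exists_surjective_nat (Chacon.OType d)
  let X : ℕ → Set (S.Xd d) := fun k => (f k).pts S
  have hX : ∀ k, MeasurableSet (disjointed X k) ∧ Chacon.InvS S Finset.univ (disjointed X k) :=
    fun k => disjointedRec
      (p := fun t => MeasurableSet t ∧ Chacon.InvS S Finset.univ t)
      (fun _ _ ht => ⟨ht.1.diff (f _).meas_pts, ht.2.inter (f _).inv_pts.compl⟩)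
      ⟨(f k).meas_pts, (f k).inv_pts⟩
  have hU : ⋃ k, disjointed X k = Set.univ := by
    rw [iUnion_disjointed]
    refine Set.eq_univ_of_forall fun x => ?_
    obtain ⟨θ, hθ⟩ := Chacon.OType.exists_pts x
    obtain ⟨k, rfl⟩ := hf θ
    exact Set.mem_iUnion.2 ⟨k, hθ⟩
  refine ⟨fun k => σ.restrict (disjointed X k), ?_, fun k => ?_⟩
  · rw [← Measure.restrict_iUnion (disjoint_disjointed X) fun k => (hX k).1, hU,
      Measure.restrict_univ]
  · have hk := hN.restrict (hX k).1 (hX k).2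
    have hθ : ∀ᵐ x ∂σ.restrict (disjointed X k), x ∈ (f k).pts S :=
      (ae_restrict_mem (hX k).1).mono fun x hx => disjointed_subset X k hx
    rw [or_iff_not_imp_left]
    intro h0
    beta_reduce at h0 ⊢
    refine ⟨hk.ergodic (f k) hθ, ?_⟩
    obtain ⟨c, hc, he⟩ := hk.form (f k) hθ
    rw [he]
    refine Chacon.product_form hd (f k) hc fun hc0 => h0 ?_
    rw [he, hc0, zero_smul]
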